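/- arXiv:2404.09295 — 2 statements merged into one kernel-verified Lean document; each statement's English description precedes it below -/
import Mathlib

section
/- Let p be a prime, let χ be a non-trivial multiplicative character modulo p, let 𝒜 ⊆ 𝔽_p be a set of cardinality A, let r be a positive integer, and let (γ_a)_{a ∈ 𝒜} be complex numbers with |γ_a| ≤ 1 for all a ∈ 𝒜. Then ∑_{x ∈ 𝔽_p} |∑_{a ∈ 𝒜} γ_a · χ(x + a)|^{2r} ≤ (2r)^r · (A^r·p + A^{2r}·p^{1/2}). -/
open Finset

namespace DE


/-- every value taken at least twice -/
def Good {α : Type*} (n : ℕ) (t : Fin n → α) : Prop := ∀ i, ∃ j, j ≠ i ∧ t j = t i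

open Classical in
noncomputable def W (α : Type*) [Fintype α] (n : ℕ) : ℕ :=
  (univ.filter (fun t : Fin n → α => Good n t)).card

lemma Good.card_image {α : Type*} [DecidableEq α] {n : ℕ} {t : Fin n → α} (h : Good n t) :
    2 * (univ.image t).card ≤ n := by
  have h1 := Finset.card_eq_sum_card_image t univ
  have h2 : ∑ b ∈ univ.image t, 2 ≤ ∑ b ∈ univ.image t, (univ.filter (fun a => t a = b)).card := by
    apply Finset.sum_le_sum
    intro b hb
    obtain ⟨i, _, rfl⟩ := Finset.mem_image.1 hb
    obtain ⟨j, hj, hji⟩ := h i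
    have : ({j, i} : Finset (Fin n)) ⊆ univ.filter (fun a => t a = t i) := by
      intro x hx
      simp only [Finset.mem_insert, Finset.mem_singleton] at hx
      rcases hx with rfl | rfl <;> simp [hji]
    calc 2 = ({j, i} : Finset (Fin n)).card := (Finset.card_pair hj).symm
      _ ≤ _ := Finset.card_le_card this
  simp at h1 h2
  omega

lemma W_rec (α : Type*) [Fintype α] (n : ℕ) :
    2 * W α (n+2) ≤ (n+1) * W α (n+1) + 2 * ((n+1) * Fintype.card α * W α n) := by
  classical
  let S1 : Finset (Fin (n+2) → α) := 
    ((univ.filter (fun t : Fin (n+1) → α => Good (n+1) t)).sigma (fun u => univ.image u)).image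
      (fun x => Fin.cons x.2 x.1)
  let S2 : Finset (Fin (n+2) → α) := 
    ((univ : Finset (Fin (n+1) × α)) ×ˢ (univ.filter (fun t : Fin n → α => Good n t))).image
      (fun x => Fin.cons x.1.2 (Fin.insertNth (α := fun _ => α) x.1.1 x.1.2 x.2))
  have hsub : (univ.filter (fun t : Fin (n+2) → α => Good (n+2) t)) ⊆ S1 ∪ S2 := by
    intro t ht
    have ht : Good (n+2) t := by simpa using ht
    rw [Finset.mem_union]
    by_cases hu : Good (n+1) (Fin.tail t)
    · left
      refine Finset.mem_image.2 ⟨⟨Fin.tail t, t 0⟩, ?_, ?_⟩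
      · simp only [Finset.mem_sigma, Finset.mem_filter, Finset.mem_univ, true_and, Finset.mem_image]
        refine ⟨hu, ?_⟩
        obtain ⟨j, hj, hj'⟩ := ht 0
        obtain ⟨k, rfl⟩ := Fin.exists_succ_eq.2 hj
        exact ⟨k, hj'⟩
      · exact Fin.cons_self_tail t
    · right
      unfold Good at hu
      push Not at hu
      obtain ⟨i, hi⟩ := hu
      have hi0 : t 0 = t i.succ := by
        obtain ⟨j, hj, hj'⟩ := ht i.succ
        rcases Fin.eq_zero_or_eq_succ j with rfl | ⟨k, rfl⟩
        · exact hj'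
        · exact absurd hj' (hi k (by rintro rfl; exact hj rfl))
      refine Finset.mem_image.2 ⟨⟨⟨i, t 0⟩, i.removeNth (Fin.tail t)⟩, ?_, ?_⟩
      · simp only [Finset.mem_product, Finset.mem_univ, Finset.mem_filter, true_and]
        intro a
        have hne : i.succAbove a ≠ i := Fin.succAbove_ne i a
        obtain ⟨j, hj, hj'⟩ := ht (i.succAbove a).succ
        have h3 : t (i.succAbove a).succ ≠ t i.succ := hi _ hne
        rcases Fin.eq_zero_or_eq_succ j with rfl | ⟨k, rfl⟩
        · exact absurd (hj'.symm.trans hi0) h3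
        · have hk : k ≠ i := by rintro rfl; exact h3 hj'.symm
          obtain ⟨b, rfl⟩ := Fin.exists_succAbove_eq hk
          refine ⟨b, ?_, hj'⟩
          rintro rfl; exact hj rfl
      · have : Fin.insertNth (α := fun _ => α) i (t 0) (i.removeNth (Fin.tail t)) = Fin.tail t := by
          rw [hi0]; exact Fin.insertNth_self_removeNth i (Fin.tail t)
        simp only [this]
        exact Fin.cons_self_tail t
  have h1 : 2 * S1.card ≤ (n+1) * W α (n+1) := by
    have : S1.card ≤ _ := Finset.card_image_le
    rw [Finset.card_sigma] at this
    calc 2 * S1.card ≤ 2 * _ := Nat.mul_le_mul_left _ this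
      _ = ∑ u ∈ univ.filter (fun t : Fin (n+1) → α => Good (n+1) t), 2 * (univ.image u).card := by
          rw [Finset.mul_sum]
      _ ≤ ∑ u ∈ univ.filter (fun t : Fin (n+1) → α => Good (n+1) t), (n+1) := by
          apply Finset.sum_le_sum
          intro u hu
          exact Good.card_image (by simpa using hu)
      _ = _ := by
        rw [Finset.sum_const, smul_eq_mul, mul_comm]; unfold W; congr!
  have h2 : S2.card ≤ (n+1) * Fintype.card α * W α n := by
    have : S2.card ≤ _ := Finset.card_image_le
    refine this.trans (le_of_eq ?_)
    rw [Finset.card_product, Finset.card_univ, Fintype.card_prod, Fintype.card_fin]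
    unfold W; congr!
  have h3 : W α (n+2) ≤ S1.card + S2.card := by
    refine le_trans (le_of_eq ?_) ((Finset.card_le_card hsub).trans (Finset.card_union_le _ _))
    unfold W; congr!
  omega

lemma four_mul_pow (u : ℕ) (hu : 2 ≤ u) : 4 * (u:ℝ)^u ≤ ((u:ℝ)+2)^u := by
  obtain ⟨v, rfl⟩ := Nat.exists_eq_add_of_le hu
  have hs : 4 * ((2+v:ℕ):ℝ)^(2+v) ≤ (((2+v:ℕ):ℝ)+2)^(2+v) := by
    rw [show 2 + v = v+1+1 by ring, add_pow, Finset.sum_range_succ, Finset.sum_range_succ,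
      Finset.sum_range_succ]
    have h0 : 0 ≤ ∑ x ∈ range v, ((v + 1 + 1 : ℕ):ℝ) ^ x * 2 ^ (v + 1 + 1 - x) * (((v + 1 + 1).choose x : ℕ):ℝ) := by
      positivity
    have e1 : v + 1 + 1 - v = 2 := by omega
    have e2 : v + 1 + 1 - (v+1) = 1 := by omega
    have c1 : (((v+1+1).choose v : ℕ) : ℝ) = (v+2)*(v+1)/2 := by
      rw [← Nat.choose_symm (by omega), e1, Nat.cast_choose_two]; push_cast; ring
    have c2 : (((v+1+1).choose (v+1) : ℕ) : ℝ) = v+2 := by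
      rw [← Nat.choose_symm (by omega), e2, Nat.choose_one_right]; push_cast; ring
    rw [e1, e2, c1, c2, Nat.sub_self, Nat.choose_self]
    have hpos : (0:ℝ) ≤ ((v + 1 + 1 : ℕ):ℝ)^v := by positivity
    have : 4 * ((v + 1 + 1 : ℕ):ℝ)^(v+1+1) ≤ ((v + 1 + 1 : ℕ):ℝ) ^ v * 2 ^ 2 * ((v+2)*(v+1)/2) + ((v + 1 + 1 : ℕ):ℝ) ^ (v+1) * 2 ^ 1 * (v+2) + ((v + 1 + 1 : ℕ):ℝ) ^ (v+1+1) * 2^0 * (1:ℕ) := by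
      rw [pow_succ, pow_succ]
      generalize ((v + 1 + 1 : ℕ):ℝ)^v = P at *
      push_cast
      have hv : (0:ℝ) ≤ v := by positivity
      nlinarith [mul_nonneg hpos hv, mul_nonneg (mul_nonneg hpos hv) hv]
    linarith
  exact hs

lemma W_zero (α : Type*) [Fintype α] : W α 0 = 1 := by
  classical
  unfold W
  rw [Finset.filter_true_of_mem]
  · simp
  · intro t _ i; exact i.elim0

lemma W_one (α : Type*) [Fintype α] : W α 1 = 0 := by
  classical
  unfold W
  rw [Finset.card_eq_zero, Finset.filter_eq_empty_iff]
  intro t _ h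
  obtain ⟨j, hj, _⟩ := h 0
  exact hj (Subsingleton.elim _ _)

lemma W_le_pow (α : Type*) [Fintype α] (n : ℕ) : W α n ≤ Fintype.card α ^ n := by
  classical
  unfold W
  refine (Finset.card_filter_le _ _).trans ?_
  simp

lemma W_le (α : Type*) [Fintype α] (n : ℕ) :
    (W α n : ℝ) ≤ (Real.sqrt (n * Fintype.card α))^n := by
  induction n using Nat.strong_induction_on with
  | _ n ih =>
  set A : ℝ := (Fintype.card α : ℝ) with hA
  have hA0 : 0 ≤ A := by positivity
  rcases le_total A n with hAn | hAn
  · have h1 : (W α n : ℝ) ≤ A^n := by rw [hA]; exact_mod_cast W_le_pow α n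
    refine h1.trans ?_
    gcongr
    apply Real.le_sqrt_of_sq_le
    nlinarith
  match n, ih, hAn with
  | 0, _, _ => simp [W_zero]
  | 1, _, _ => simp [W_one]
  | 2, _, _ =>
    have := W_rec α 0
    rw [W_zero, W_one] at this
    have h2 : (W α 2 : ℝ) ≤ A := by
      have : W α 2 ≤ Fintype.card α := by simp at this; omega
      rw [hA]; exact_mod_cast this
    rw [Real.sq_sqrt (by positivity)]
    push_cast; linarith
  | 3, _, hAn =>
    have h3 := W_rec α 1
    have := W_rec α 0
    rw [W_zero, W_one] at this
    rw [W_one] at h3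
    have h2 : (W α 3 : ℝ) ≤ A := by
      have : W α 3 ≤ Fintype.card α := by simp at h3 this; omega
      rw [hA]; exact_mod_cast this
    refine h2.trans ?_
    push_cast at hAn ⊢
    have h4 : A ≤ √(3*A)^2 := by rw [Real.sq_sqrt (by positivity)]; linarith
    have h5 : 1 ≤ √(3*A) := by apply Real.le_sqrt_of_sq_le; linarith
    calc A ≤ √(3*A)^2 := h4
      _ ≤ √(3*A)^3 := pow_le_pow_right₀ h5 (by norm_num)
  | n+4, ih, hAn =>
    have hr := W_rec α (n+2)
    have i1 := ih (n+3) (by omega)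
    have i2 := ih (n+2) (by omega)
    have hr' : 2 * (W α (n+4) : ℝ) ≤ (n+3) * W α (n+3) + 2 * ((n+3) * A * W α (n+2)) := by
      rw [hA]; exact_mod_cast hr
    push_cast at i1 i2 hAn ⊢
    set s := √((n+4)*A) with hs
    have hs2 : s^2 = (n+4)*A := Real.sq_sqrt (by positivity)
    have hs0 : 0 ≤ s := Real.sqrt_nonneg _
    have hsn : (n+4:ℝ) ≤ s := by
      apply Real.le_sqrt_of_sq_le; nlinarith
    have j1 : (W α (n+3) : ℝ) ≤ s^(n+3) := by
      refine i1.trans ?_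
      have : √((n+3)*A) ≤ s := by rw [hs]; gcongr; norm_num
      gcongr
    have k1 : (n+3) * (W α (n+3) : ℝ) ≤ s^(n+4) := by
      calc (n+3) * (W α (n+3) : ℝ) ≤ s * s^(n+3) := by
            gcongr
            linarith
        _ = _ := by ring
    have j2 : 2 * √((n+2)*A)^(n+2) ≤ s^(n+2) := by
      apply (sq_le_sq₀ (by positivity) (by positivity)).1
      rw [mul_pow, ← pow_mul, ← pow_mul, mul_comm (n+2) 2, pow_mul, pow_mul, hs2,
        Real.sq_sqrt (by positivity), mul_pow, mul_pow, ← mul_assoc]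
      gcongr
      have := four_mul_pow (n+2) (by omega)
      push_cast at this
      rw [show (n:ℝ)+2+2 = n+4 by ring] at this
      linarith
    have k2 : 2 * ((n+3) * A * (W α (n+2):ℝ)) ≤ s^(n+4) := by
      calc 2 * ((n+3) * A * (W α (n+2):ℝ)) ≤ 2 * ((n+4) * A * √((n+2)*A)^(n+2)) := by
            gcongr; norm_num
        _ = s^2 * (2 * √((n+2)*A)^(n+2)) := by rw [hs2]; ring
        _ ≤ s^2 * s^(n+2) := by gcongr
        _ = _ := by ring
    linarith

lemma W_even (α : Type*) [Fintype α] (r : ℕ) :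
    (W α (2*r) : ℝ) ≤ (2*r)^r * (Fintype.card α:ℝ)^r := by
  have := W_le α (2*r)
  rw [pow_mul, Real.sq_sqrt (by positivity), mul_pow] at this
  exact_mod_cast this


open Polynomial in
lemma analytic_end (L : ℂ[X]) (Λ : ℕ → ℂ) (R C : ℝ) (hR : 0 < R) (h0 : L.coeff 0 = 1)
    (hrec : ∀ n : ℕ, (n : ℂ) * L.coeff n = ∑ ij ∈ antidiagonal n, Λ ij.1 * L.coeff ij.2)
    (hΛ : ∀ n, ‖Λ n‖ ≤ C * R ^ n) : ‖L.coeff 1‖ ≤ L.natDegree * R := by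
  have hC : 0 ≤ C := by simpa using (norm_nonneg _).trans (hΛ 0)
  have hLne : L ≠ 0 := by rintro rfl; simp at h0
  -- summability
  have hb : ∀ z : ℂ, ∀ n, ‖Λ n * z ^ n‖ ≤ C * (R * ‖z‖) ^ n := by
    intro z n
    rw [norm_mul, norm_pow, mul_pow, ← mul_assoc]
    gcongr
    exact hΛ n
  have hgeo : ∀ z : ℂ, R * ‖z‖ < 1 → Summable (fun n => C * (R * ‖z‖) ^ n) := fun z hz =>
    (summable_geometric_of_lt_one (by positivity) hz).mul_left C
  have hsum : ∀ z : ℂ, R * ‖z‖ < 1 → Summable (fun n => ‖Λ n * z ^ n‖) := fun z hz =>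
    Summable.of_nonneg_of_le (fun _ => norm_nonneg _) (hb z) (hgeo z hz)
  set G : ℂ → ℂ := fun z => ∑' n, Λ n * z ^ n with hG
  have hGb : ∀ z : ℂ, R * ‖z‖ < 1 → ‖G z‖ ≤ C * (1 - R * ‖z‖)⁻¹ := by
    intro z hz
    refine (norm_tsum_le_tsum_norm (hsum z hz)).trans ?_
    refine ((hsum z hz).tsum_le_tsum (hb z) (hgeo z hz)).trans ?_
    rw [tsum_mul_left, tsum_geometric_of_lt_one (by positivity) hz]
  have hfin : ∀ (P : ℂ[X]) (z : ℂ), Summable (fun n => ‖P.coeff n * z ^ n‖) := by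
    intro P z
    apply summable_of_ne_finset_zero (s := range (P.natDegree + 1))
    intro n hn
    rw [coeff_eq_zero_of_natDegree_lt (by simpa using hn)]
    simp
  have hev : ∀ (P : ℂ[X]) (z : ℂ), ∑' n, P.coeff n * z ^ n = P.eval z := by
    intro P z
    rw [eval_eq_sum_range]
    apply tsum_eq_sum
    intro n hn
    rw [coeff_eq_zero_of_natDegree_lt (by simpa using hn)]
    simp
  have hid : ∀ z : ℂ, R * ‖z‖ < 1 → z * (derivative L).eval z = G z * L.eval z := by
    intro z hz
    have h1 : z * (derivative L).eval z = (X * derivative L).eval z := by simp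
    rw [h1, ← hev, ← hev L, hG]
    simp only
    rw [tsum_mul_tsum_eq_tsum_sum_antidiagonal_of_summable_norm (hsum z hz) (hfin L z)]
    congr 1
    ext n
    have h2 : (X * derivative L).coeff n = n * L.coeff n := by
      cases n with
      | zero => simp
      | succ n => rw [coeff_X_mul, coeff_derivative]; push_cast; ring
    rw [h2, hrec, Finset.sum_mul]
    refine Finset.sum_congr rfl fun ij hij => ?_
    rw [← mem_antidiagonal.1 hij, pow_add]; ring
  have hroot : ∀ z ∈ L.roots, 1 ≤ R * ‖z‖ := by
    intro z0 hz0
    by_contra hlt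
    push Not at hlt
    have hr0 : L.eval z0 = 0 := (mem_roots hLne).1 hz0
    have hz0ne : z0 ≠ 0 := by
      rintro rfl
      rw [← coeff_zero_eq_eval_zero, h0] at hr0
      exact one_ne_zero hr0
    obtain ⟨M, hM, hMd⟩ := exists_eq_pow_rootMultiplicity_mul_and_not_dvd L hLne z0
    set k := L.rootMultiplicity z0 with hk
    have hkpos : 0 < k := (rootMultiplicity_pos hLne).2 hr0
    have hM0 : M.eval z0 ≠ 0 := fun h => hMd (dvd_iff_isRoot.2 h)
    obtain ⟨j, hj⟩ : ∃ j, k = j + 1 := ⟨k - 1, by omega⟩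
    rw [hj] at hM
    have key : ∀ z : ℂ, R * ‖z‖ < 1 → z ≠ z0 →
        z * ((j+1) * M.eval z + (z - z0) * (derivative M).eval z) = (z - z0) * (M.eval z * G z) := by
      intro z hz hne
      have h1 := hid z hz
      have hne' : (z - z0)^j ≠ 0 := pow_ne_zero _ (sub_ne_zero.2 hne)
      have h2 : (derivative L).eval z =
          (j+1) * (z - z0)^j * M.eval z + (z-z0)^(j+1) * (derivative M).eval z := by
        rw [hM]; simp [derivative_mul, derivative_pow]
      have h3 : L.eval z = (z-z0)^(j+1) * M.eval z := by rw [hM]; simp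
      rw [h2, h3] at h1
      apply mul_left_cancel₀ hne'
      linear_combination h1
    have hopen : ∀ᶠ z in nhds z0, R * ‖z‖ < 1 ∧ ‖G z‖ ≤ C * (1 - (1 + R*‖z0‖)/2)⁻¹ := by
      have : ∀ᶠ z in nhds z0, R * ‖z‖ < (1 + R * ‖z0‖)/2 := by
        have hc : Continuous (fun z : ℂ => R * ‖z‖) := by fun_prop
        exact hc.continuousAt.eventually_lt continuousAt_const (by linarith)
      filter_upwards [this] with z hz
      have hz1 : R * ‖z‖ < 1 := by linarith
      refine ⟨hz1, (hGb z hz1).trans ?_⟩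
      have : 0 < 1 - (1 + R * ‖z0‖)/2 := by linarith
      gcongr
    have hl : Filter.Tendsto (fun z => z * ((j+1) * M.eval z + (z - z0) * (derivative M).eval z))
        (nhdsWithin z0 {z0}ᶜ) (nhds (z0 * ((j+1) * M.eval z0 + (z0 - z0) * (derivative M).eval z0))) := by
      apply Filter.Tendsto.mono_left _ nhdsWithin_le_nhds
      apply Continuous.tendsto
      fun_prop
    have hr' : Filter.Tendsto (fun z => ((z - z0) * M.eval z) * G z)
        (nhdsWithin z0 {z0}ᶜ) (nhds 0) := by
      apply Filter.Tendsto.mono_left _ nhdsWithin_le_nhds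
      apply Filter.Tendsto.zero_mul_isBoundedUnder_le
      · have : Filter.Tendsto (fun z => (z - z0) * M.eval z) (nhds z0) (nhds ((z0 - z0) * M.eval z0)) := by
          apply Continuous.tendsto
          fun_prop
        simpa using this
      · exact Filter.isBoundedUnder_of_eventually_le (hopen.mono fun z hz => hz.2)
    have heq := tendsto_nhds_unique (hl.congr' (f₂ := fun z => ((z - z0) * M.eval z) * G z) (by
      filter_upwards [nhdsWithin_le_nhds hopen, self_mem_nhdsWithin] with z hz hne
      rw [key z hz.1 hne]; ring)) hr'
    have hj1 : ((j:ℂ)+1) ≠ 0 := by exact_mod_cast Nat.succ_ne_zero j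
    simp [hz0ne, hM0, hj1] at heq
  have hsp : L.Splits := IsAlgClosed.splits L
  have hev0 : L.eval 0 = 1 := by rw [← coeff_zero_eq_eval_zero, h0]
  have h1 := hsp.eval_derivative_div_eval_of_ne_zero (x := 0) (by rw [hev0]; exact one_ne_zero)
  rw [hev0, div_one, ← coeff_zero_eq_eval_zero, coeff_derivative] at h1
  simp only [zero_add, Nat.cast_zero, mul_one] at h1
  rw [h1]
  refine (norm_multiset_sum_le _).trans ?_
  rw [Multiset.map_map]
  have h2 := Multiset.sum_le_card_nsmul (L.roots.map (norm ∘ fun z => 1 / (0 - z))) R (by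
    intro x hx
    obtain ⟨z, hz, rfl⟩ := Multiset.mem_map.1 hx
    have := hroot z hz
    have hzpos : 0 < ‖z‖ := by
      by_contra h
      have hz00 : ‖z‖ = 0 := le_antisymm (not_lt.1 h) (norm_nonneg _)
      rw [hz00] at this
      linarith
    simp only [Function.comp, zero_sub, norm_div, norm_one, norm_neg]
    rw [div_le_iff₀ hzpos]; exact this)
  refine h2.trans ?_
  rw [Multiset.card_map, nsmul_eq_mul]
  gcongr
  exact card_roots' L


open Polynomial in
lemma dvd_hasse {R : Type*} [CommRing R] (f h : R[X]) (s : ℕ) :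
    ∀ k ≤ s, f ^ (s - k) ∣ hasseDeriv k (f ^ s * h) := by
  induction s with
  | zero => intro k hk; simp
  | succ s ih =>
    intro k hk
    rw [pow_succ', mul_assoc, hasseDeriv_mul]
    apply Finset.dvd_sum
    rintro ⟨a, b⟩ hab
    have hab' : a + b = k := by simpa using hab
    rcases Nat.eq_zero_or_pos a with rfl | ha
    · simp only [zero_add] at hab'
      subst hab'
      simp only [hasseDeriv_zero']
      rcases Nat.lt_or_ge s b with h1 | h1
      · rw [show s + 1 - b = 0 by omega]; simp
      · rw [show s + 1 - b = (s - b) + 1 by omega, pow_succ']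
        exact mul_dvd_mul_left _ (ih b h1)
    · apply Dvd.dvd.mul_left
      exact (pow_dvd_pow f (by omega)).trans (ih b (by omega))

open Polynomial in
lemma kummer_irred {K : Type*} [Field K] (d : ℕ) (hd : 0 < d) (u : K)
    (h : ∀ (k : ℕ) (b : K), b ^ d = u ^ k → d ∣ k) : Irreducible (X ^ d - C u : K[X]) := by
  classical
  have hmon : (X ^ d - C u : K[X]).Monic := monic_X_pow_sub_C u hd.ne'
  have hdeg : (X ^ d - C u : K[X]).natDegree = d := natDegree_X_pow_sub_C
  obtain ⟨α, hα⟩ := IsAlgClosed.exists_pow_nat_eq (algebraMap K (AlgebraicClosure K) u) hd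
  have hint : IsIntegral K α := Algebra.IsIntegral.isIntegral α
  set P := minpoly K α with hP
  have hPm : P.Monic := minpoly.monic hint
  have hdvd : P ∣ X ^ d - C u := minpoly.dvd K α (by simp [hα])
  have hsp : (P.map (algebraMap K (AlgebraicClosure K))).Splits := IsAlgClosed.splits _
  set ρ := (P.map (algebraMap K (AlgebraicClosure K))).roots with hρ
  have hcard : ρ.card = P.natDegree := by
    rw [hρ, ← hsp.natDegree_eq_card_roots, natDegree_map]
  have hroot : ∀ β ∈ ρ, β ^ d = algebraMap K (AlgebraicClosure K) u := by
    intro β hβ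
    have h1 : (P.map (algebraMap K (AlgebraicClosure K))).eval β = 0 := isRoot_of_mem_roots hβ
    rw [eval_map] at h1
    obtain ⟨T, hT⟩ := hdvd
    have h2 : (X ^ d - C u : K[X]).eval₂ (algebraMap K (AlgebraicClosure K)) β = 0 := by
      rw [hT, eval₂_mul, h1, zero_mul]
    simp at h2
    exact sub_eq_zero.1 h2
  have hprod : ρ.prod ^ d = algebraMap K (AlgebraicClosure K) u ^ P.natDegree := by
    have h1 : (ρ.map (fun β => β ^ d)).prod = ρ.prod ^ d := by
      rw [Multiset.prod_map_pow, Multiset.map_id']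
    rw [← h1, Multiset.map_congr rfl hroot, Multiset.map_const',
      Multiset.prod_replicate, hcard]
  have hc0 : algebraMap K (AlgebraicClosure K) (P.coeff 0) = (-1) ^ P.natDegree * ρ.prod := by
    have := hsp.coeff_zero_eq_prod_roots_of_monic (hPm.map _)
    rw [coeff_map, natDegree_map] at this
    exact this
  have hb : ((-1) ^ P.natDegree * P.coeff 0) ^ d = u ^ P.natDegree := by
    apply (algebraMap K (AlgebraicClosure K)).injective
    rw [map_pow, map_pow, map_mul, hc0, ← mul_assoc, map_pow, map_neg, map_one, ← mul_pow]
    simp [hprod]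
  have hdk := h _ _ hb
  have hle : d ≤ P.natDegree := Nat.le_of_dvd (minpoly.natDegree_pos hint) hdk
  have : X ^ d - C u = P :=
    eq_of_monic_of_dvd_of_natDegree_le hPm hmon hdvd (by rw [hdeg]; exact hle)
  rw [this]
  exact minpoly.irreducible hint

lemma circ {R A : Type*} [CommRing R] [CommRing A] (φ : R →+* A) (d : ℕ) [NeZero d] (g : A) (x z : R)
    (hg : φ x * g ^ d = φ z) (K : Fin d → R) (a : Fin d) :
    ∑ b : Fin d, φ ((if a ≤ b then x else z) * K (b - a)) * g ^ (b : ℕ) =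
      φ x * g ^ (a : ℕ) * ∑ i : Fin d, φ (K i) * g ^ (i : ℕ) := by
  rw [Finset.mul_sum]
  refine Fintype.sum_equiv (Equiv.subRight a) _ _ fun b => ?_
  simp only [Equiv.subRight_apply, map_mul]
  split_ifs with hab
  · have h1 : ((b - a : Fin d) : ℕ) = b - a := Fin.sub_val_of_le hab
    have h2 : (b : ℕ) = a + (b - a : ℕ) := by have : (a:ℕ) ≤ b := hab; omega
    rw [h1]
    conv_lhs => rw [h2]
    rw [pow_add]; ring
  · have h1 : ((b - a : Fin d) : ℕ) = d + b - a := Fin.coe_sub_iff_lt.2 (not_le.1 hab)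
    have h2 : (a : ℕ) + (d + b - a : ℕ) = d + b := by have := a.2; omega
    rw [h1, ← hg]
    have h3 : g ^ (a:ℕ) * g ^ (d + b - a : ℕ) = g ^ d * g ^ (b:ℕ) := by
      rw [← pow_add, h2, pow_add]
    linear_combination (-(φ x * φ (K (b - a)))) * h3

lemma circ2 {R A : Type*} [CommRing R] [CommRing A] (ψ : R →+* A) (d : ℕ) [NeZero d] (α : A) (x z : R)
    (hg : ψ x * α ^ d = ψ z) (K : Fin d → R) (w : Fin d → R)
    (hw : ∀ b, ∑ a, w a * ((if a ≤ b then x else z) * K (b - a)) = 0) :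
    (ψ x * ∑ i, ψ (w i) * α ^ (i : ℕ)) * ∑ i, ψ (K i) * α ^ (i : ℕ) = 0 := by
  calc (ψ x * ∑ i, ψ (w i) * α ^ (i : ℕ)) * ∑ i, ψ (K i) * α ^ (i : ℕ) 
        = ∑ a, ψ (w a) * (ψ x * α ^ (a : ℕ) * ∑ i, ψ (K i) * α ^ (i : ℕ)) := by
          generalize (∑ i, ψ (K i) * α ^ (i : ℕ)) = T
          rw [Finset.mul_sum, Finset.sum_mul]
          refine Finset.sum_congr rfl fun a _ => by ring
      _ = ∑ a, ψ (w a) * ∑ b : Fin d, ψ ((if a ≤ b then x else z) * K (b - a)) * α ^ (b : ℕ) := by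
          refine Finset.sum_congr rfl fun a _ => ?_
          rw [← circ ψ d α x z hg K a]
      _ = ∑ b, ψ (∑ a, w a * ((if a ≤ b then x else z) * K (b - a))) * α ^ (b : ℕ) := by
          simp_rw [Finset.mul_sum]
          rw [Finset.sum_comm]
          refine Finset.sum_congr rfl fun b _ => ?_
          rw [map_sum, Finset.sum_mul]
          refine Finset.sum_congr rfl fun a _ => by rw [map_mul ψ (w a)]; ring
      _ = 0 := by
          apply Finset.sum_eq_zero
          intro b _
          rw [hw b, map_zero, zero_mul]

open Polynomial in
lemma spec_inj {E : Type*} [Field E] (Q : ℕ) (hQ : 0 < Q) (P : E[X][X]) (hP : P.natDegree < Q)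
    (h : P.eval₂ (expand E Q : E[X] →+* E[X]) X = 0) : P = 0 := by
  ext e j
  rw [coeff_zero, coeff_zero]
  by_cases he : e < Q
  swap
  · rw [coeff_eq_zero_of_natDegree_lt (p := P) (by omega)]; simp
  have h1 := congrArg (fun F => F.coeff (Q * j + e)) h
  simp only [coeff_zero] at h1
  rw [eval₂_eq_sum_range' _ hP, finsetSum_coeff, Finset.sum_eq_single e] at h1
  · simpa [coeff_mul_X_pow', coeff_expand hQ, hQ] using h1
  · intro b hb hbe
    have hbQ : b < Q := by simpa using hb
    rw [coeff_mul_X_pow']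
    split_ifs with hle
    · simp only [RingHom.coe_coe]
      rw [coeff_expand hQ, if_neg]
      rintro ⟨t, ht⟩
      apply hbe
      have h3 : Q * j + e = Q * t + b := by omega
      have h4 := congrArg (· % Q) h3
      simp only [Nat.mul_add_mod, Nat.mod_eq_of_lt he, Nat.mod_eq_of_lt hbQ] at h4
      exact h4.symm
    · rfl
  · intro hb; simp at hb; omega

open Polynomial in
lemma nonvanish {E : Type*} [Field E] [Fintype E] (d N : ℕ) (hd : 0 < d) (hdQ : d ∣ Fintype.card E - 1)
    (f : E[X]) (hf : f.Monic)
    (hirr : ∀ (k : ℕ) (A B : E[X][X]), B ≠ 0 → A ^ d * (f.map C) ^ k = (C f) ^ k * B ^ d → d ∣ k)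
    (K : Fin d → E[X][X]) (hK : ∀ i, (K i).natDegree + f.natDegree ≤ N) 
    (hN : d * N < Fintype.card E)
    (h0 : ∑ i : Fin d, (K i).eval₂ (expand E (Fintype.card E) : E[X] →+* E[X]) X *
      (f ^ ((Fintype.card E - 1) / d)) ^ (i : ℕ) = 0) : ∀ i, K i = 0 := by
  classical
  have : NeZero d := ⟨hd.ne'⟩
  set Q := Fintype.card E with hQ
  have hQ1 : 0 < Q := Fintype.card_pos
  set φ : E[X][X] →+* E[X] := eval₂RingHom (expand E Q : E[X] →+* E[X]) X with hφ
  set g := f ^ ((Q - 1) / d) with hg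
  set fX : E[X][X] := f.map C with hfX
  set fZ : E[X][X] := C f with hfZ
  have hfXne : fX ≠ 0 := (hf.map C).ne_zero
  have hφX : φ fX = f := by
    rw [hφ, hfX, coe_eval₂RingHom, eval₂_map]
    have : ((expand E Q : E[X] →+* E[X])).comp C = C := by
      ext x; simp
    rw [this, eval₂_C_X]
  have hφZ : φ fZ = f ^ Q := by
    rw [hφ, hfZ, coe_eval₂RingHom, eval₂_C]
    exact FiniteField.expand_card f
  have hgd : φ fX * g ^ d = φ fZ := by
    rw [hφX, hφZ, hg, ← pow_mul, Nat.div_mul_cancel hdQ, ← pow_succ', Nat.sub_add_cancel hQ1]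
  let M : Matrix (Fin d) (Fin d) E[X][X] := fun a b => (if a ≤ b then fX else fZ) * K (b - a)
  have hgne : g ≠ 0 := pow_ne_zero _ hf.ne_zero
  have hdetφ : (M.map φ).det = 0 := by
    apply Matrix.exists_mulVec_eq_zero_iff.1
    refine ⟨fun b => g ^ (b : ℕ), ?_, ?_⟩
    · intro h
      exact pow_ne_zero 0 hgne (by simpa using congrFun h 0)
    · ext1 a
      have := circ φ d g fX fZ hgd K a
      have h0' : ∑ i : Fin d, φ (K i) * g ^ (i : ℕ) = 0 := h0
      rw [h0', mul_zero] at this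
      exact this
  have hMdeg : ∀ a b, (M a b).natDegree ≤ N := by
    intro a b
    refine natDegree_mul_le.trans ?_
    have h1 : (if a ≤ b then fX else fZ).natDegree ≤ f.natDegree := by
      split_ifs
      · exact natDegree_map_le
      · rw [hfZ, natDegree_C]; omega
    have := hK (b - a)
    omega
  have hdet : M.det = 0 := by
    apply spec_inj Q hQ1
    · refine lt_of_le_of_lt ?_ hN
      rw [Matrix.det_apply]
      apply natDegree_sum_le_of_forall_le
      intro σ _
      refine (natDegree_smul_le _ _).trans ?_
      refine (natDegree_prod_le _ _).trans ?_
      refine (Finset.sum_le_sum (fun i _ => hMdeg (σ i) i)).trans ?_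
      simp
    · change φ M.det = 0
      rw [RingHom.map_det]; exact hdetφ
  obtain ⟨w, hw, hwM⟩ := Matrix.exists_vecMul_eq_zero_iff.2 hdet
  -- the Kummer field
  let F := FractionRing E[X][X]
  let u : F := algebraMap _ F fZ / algebraMap _ F fX
  have hfXF : algebraMap _ F fX ≠ 0 := by
    simpa using hfXne
  have hI : Irreducible (X ^ d - C u : F[X]) := by
    apply kummer_irred d hd
    intro k b hb
    obtain ⟨A, B, hB, rfl⟩ := IsFractionRing.div_surjective (A := E[X][X]) b
    have hB0 : B ≠ 0 := nonZeroDivisors.ne_zero hB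
    have hBF : algebraMap _ F B ≠ 0 := by simpa using hB0
    apply hirr k A B hB0
    apply IsFractionRing.injective E[X][X] F
    simp only [map_mul, map_pow]
    rw [div_pow, div_pow, div_eq_div_iff (pow_ne_zero _ hBF) (pow_ne_zero _ hfXF)] at hb
    exact hb
  have : Fact (Irreducible (X ^ d - C u : F[X])) := ⟨hI⟩
  let L := AdjoinRoot (X ^ d - C u : F[X])
  let α : L := AdjoinRoot.root _
  let ψ : E[X][X] →+* L := (AdjoinRoot.of _).comp (algebraMap _ F)
  have hψinj : Function.Injective ψ := by
    intro a b hab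
    apply IsFractionRing.injective E[X][X] F
    exact (AdjoinRoot.of (X ^ d - C u : F[X])).injective hab
  have hα : α ^ d = AdjoinRoot.of _ u := by
    have := AdjoinRoot.eval₂_root (X ^ d - C u : F[X])
    simp only [eval₂_sub, eval₂_pow, eval₂_X, eval₂_C] at this
    exact sub_eq_zero.1 this
  have hψ : ψ fX * α ^ d = ψ fZ := by
    rw [hα]
    simp only [ψ, RingHom.comp_apply]
    rw [← map_mul]
    congr 1
    simp only [u]
    rw [← mul_div_assoc, mul_div_cancel_left₀ _ hfXF]
  have hvan : ∀ v : Fin d → E[X][X], ∑ i, ψ (v i) * α ^ (i : ℕ) = 0 → v = 0 := by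
    intro v hv
    let P : F[X] := ∑ i : Fin d, C (algebraMap _ F (v i)) * X ^ (i:ℕ)
    have hP : AdjoinRoot.mk (X ^ d - C u) P = 0 := by
      simp only [P, map_sum, map_mul, map_pow, AdjoinRoot.mk_X, AdjoinRoot.mk_C]
      exact hv
    have hdvd := AdjoinRoot.mk_eq_zero.1 hP
    have hP0 : P = 0 := by
      apply eq_zero_of_dvd_of_degree_lt hdvd
      rw [degree_X_pow_sub_C hd]
      refine lt_of_le_of_lt (degree_sum_le _ _) ?_
      rw [Finset.sup_lt_iff (by exact WithBot.bot_lt_coe _)]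
      intro i _
      refine lt_of_le_of_lt (degree_C_mul_X_pow_le _ _) ?_
      exact_mod_cast i.2
    ext1 i
    have h1 := congrArg (fun q => q.coeff (i:ℕ)) hP0
    simp only [P, finsetSum_coeff, coeff_C_mul, coeff_X_pow, coeff_zero] at h1
    rw [Finset.sum_eq_single i] at h1
    · simpa using h1
    · intro j _ hj
      rw [if_neg (fun h => hj (Fin.ext h.symm))]; simp
    · simp
  have hprod : (ψ fX * ∑ i, ψ (w i) * α ^ (i : ℕ)) * ∑ i, ψ (K i) * α ^ (i : ℕ) = 0 :=
    circ2 ψ d α fX fZ hψ K w (fun b => congrFun hwM b)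
  have hψX : ψ fX ≠ 0 := fun h => hfXne (hψinj (by rw [h, map_zero]))
  rcases mul_eq_zero.1 hprod with h | h
  · rcases mul_eq_zero.1 h with h | h
    · exact absurd h hψX
    · exact absurd (hvan w h) hw
  · intro i; rw [hvan K h]; rfl


open Polynomial in
lemma hirr_of {ι E : Type*} [Field E] (d : ℕ) (hd : 0 < d) (S : Finset ι) (r : ι → E)
    (hr : Function.Injective r) (e : ι → ℕ)
    (hgcd : ∀ k, (∀ s ∈ S, d ∣ k * e s) → d ∣ k)
    (k : ℕ) (A B : E[X][X]) (hB : B ≠ 0)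
    (h : A ^ d * ((∏ s ∈ S, (X - C (r s)) ^ e s : E[X]).map C) ^ k =
      (C (∏ s ∈ S, (X - C (r s)) ^ e s)) ^ k * B ^ d) : d ∣ k := by
  classical
  apply hgcd
  intro s hs
  set f : E[X] := ∏ s ∈ S, (X - C (r s)) ^ e s with hf
  have hfm : f.Monic := monic_prod_of_monic _ _ fun s _ => (monic_X_sub_C _).pow _
  have hf0 : f ≠ 0 := hfm.ne_zero
  have hR : (C f) ^ k * B ^ d ≠ 0 := 
    mul_ne_zero (pow_ne_zero _ (C_ne_zero.2 hf0)) (pow_ne_zero _ hB)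
  have hmul := congrArg (rootMultiplicity (C (r s))) h
  have hpow : ∀ (P : E[X][X]) (hP : P ≠ 0) (n : ℕ), rootMultiplicity (C (r s)) (P ^ n) = n * rootMultiplicity (C (r s)) P := by
    intro P hP n
    rw [← count_roots, roots_pow, Multiset.count_nsmul, count_roots]
  have hA : A ≠ 0 := by
    rintro rfl
    rw [zero_pow hd.ne', zero_mul] at h
    exact hR h.symm
  rw [rootMultiplicity_mul hR, rootMultiplicity_mul (by rw [h]; exact hR), hpow _ hA, hpow _ (hfm.map C).ne_zero,
    hpow _ (C_ne_zero.2 hf0), hpow _ hB, rootMultiplicity_C] at hmul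
  have hfs : rootMultiplicity (C (r s)) (f.map C) = e s := by
    rw [← eq_rootMultiplicity_map C_injective, ← count_roots, hf, roots_prod _ _ hf0, Multiset.count_bind]
    change (S.val.map fun a => Multiset.count (r s) ((X - C (r a)) ^ e a).roots).sum = e s
    have h1 : ∀ a, Multiset.count (r s) ((X - C (r a)) ^ e a).roots = if s = a then e a else 0 := by
      intro a
      rw [roots_pow, roots_X_sub_C, Multiset.count_nsmul, Multiset.count_singleton]
      simp only [hr.eq_iff]
      split_ifs <;> simp
    simp_rw [h1]
    change ∑ a ∈ S, (if s = a then e a else 0) = e s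
    rw [Finset.sum_ite_eq, if_pos hs]
  rw [hfs] at hmul
  rw [mul_zero, zero_add] at hmul
  exact (Nat.dvd_add_right (Dvd.intro _ rfl)).1 (hmul ▸ Dvd.intro _ rfl)

open Polynomial in
lemma exists_L {E : Type*} [Field E] (f : E[X]) (hf : f.Monic) (s k : ℕ) (hk : k ≤ s) :
    ∃ L : E[X] →ₗ[E] E[X], (∀ h, hasseDeriv k (f ^ s * h) = f ^ (s - k) * L h) ∧
      ∀ h, (L h).natDegree ≤ h.natDegree + k * f.natDegree := by
  have hf0 : f ^ (s - k) ≠ 0 := pow_ne_zero _ hf.ne_zero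
  choose L hL using fun h => dvd_hasse f h s k hk
  refine ⟨⟨⟨L, ?_⟩, ?_⟩, hL, ?_⟩
  · intro a b
    apply mul_left_cancel₀ hf0
    rw [← hL, mul_add, mul_add, map_add, hL, hL]
  · intro a b
    apply mul_left_cancel₀ hf0
    rw [← hL, RingHom.id_apply, mul_smul_comm, mul_smul_comm, map_smul, hL]
  · intro h
    change (L h).natDegree ≤ _
    by_cases h0 : L h = 0
    · rw [h0, natDegree_zero]; exact Nat.zero_le _
    have h1 : (f ^ (s - k) * L h).natDegree = (s - k) * f.natDegree + (L h).natDegree := by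
      rw [(hf.pow _).natDegree_mul' h0, hf.natDegree_pow]
    have h2 := natDegree_hasseDeriv_le (f ^ s * h) k
    rw [hL, h1] at h2
    have h3 := natDegree_mul_le (p := f ^ s) (q := h)
    rw [hf.natDegree_pow] at h3
    have h4 : s * f.natDegree = (s - k) * f.natDegree + k * f.natDegree := by
      rw [← add_mul, Nat.sub_add_cancel hk]
    omega

open Polynomial in
lemma stepanov_core {E : Type*} [Field E] [Fintype E] [DecidableEq E] (d M B J : ℕ) (hd : 0 < d)
    (hdQ : d ∣ Fintype.card E - 1)
    (f : E[X]) (hf : f.Monic)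
    (hirr : ∀ (k : ℕ) (A B : E[X][X]), B ≠ 0 → A ^ d * (f.map C) ^ k = (C f) ^ k * B ^ d → d ∣ k)
    (hM : M ≤ Fintype.card E) (hB : 0 < B) (hJ : 0 < J)
    (hN : d * (B - 1 + f.natDegree) < Fintype.card E)
    (hcount : M * (B + M * f.natDegree + J) < d * (J * B)) (c : E) :
    M * (univ.filter fun x : E => (f.eval x) ^ ((Fintype.card E - 1) / d) = c).card ≤
      M * f.natDegree + B + Fintype.card E * f.natDegree + (J - 1) * Fintype.card E := by
  classical
  set Q := Fintype.card E with hQ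
  set q := (Q - 1) / d with hq
  set m := f.natDegree with hm
  have hQ1 : 0 < Q := Fintype.card_pos
  have hL : ∀ (k : Fin M) (i : Fin d), ∃ L : E[X] →ₗ[E] E[X],
      (∀ h, hasseDeriv (k:ℕ) (f ^ (M + q * i) * h) = f ^ (M + q * i - k) * L h) ∧
      ∀ h, (L h).natDegree ≤ h.natDegree + k * m := fun k i =>
    exists_L f hf _ _ (by have := k.2; omega)
  choose L hL hLdeg using hL
  let V := Fin d × Fin J × Fin B → E
  let H : Fin d → Fin J → V →ₗ[E] E[X] := fun i j =>
    ∑ b : Fin B, (monomial (b:ℕ)) ∘ₗ LinearMap.proj (i, j, b)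
  have hH : ∀ i j v, H i j v = ∑ b : Fin B, monomial (b:ℕ) (v (i, j, b)) := by
    intro i j v; simp only [H, LinearMap.sum_apply]; rfl
  have hHdeg : ∀ i j v, (H i j v).natDegree ≤ B - 1 := by
    intro i j v
    rw [hH]
    apply natDegree_sum_le_of_forall_le
    intro b _
    refine (natDegree_monomial_le _).trans ?_
    have := b.2; omega
  have hHcoeff : ∀ i j v (b : Fin B), (H i j v).coeff b = v (i, j, b) := by
    intro i j v b
    rw [hH, finsetSum_coeff, Finset.sum_eq_single b]
    · simp
    · intro b' _ hb'
      rw [coeff_monomial, if_neg (fun h => hb' (Fin.ext h))]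
    · simp
  let P : Fin M → V →ₗ[E] E[X] := fun k =>
    ∑ i : Fin d, ∑ j : Fin J, c ^ (i:ℕ) • (LinearMap.mulRight E (X ^ (j:ℕ)) ∘ₗ L k i ∘ₗ H i j)
  have hP : ∀ k v, P k v = ∑ i : Fin d, ∑ j : Fin J, c ^ (i:ℕ) • (L k i (H i j v) * X ^ (j:ℕ)) := by
    intro k v; simp [P]
  have hPdeg : ∀ k v, (P k v).natDegree < B + M * m + J := by
    intro k v
    have : (P k v).natDegree ≤ B - 1 + M * m + (J - 1) := by
      rw [hP]
      apply natDegree_sum_le_of_forall_le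
      intro i _
      apply natDegree_sum_le_of_forall_le
      intro j _
      refine (natDegree_smul_le _ _).trans (natDegree_mul_le.trans ?_)
      rw [natDegree_X_pow]
      have h1 := hLdeg k i (H i j v)
      have h2 := hHdeg i j v
      have h3 := j.2
      have h4 : (k:ℕ) * m ≤ M * m := Nat.mul_le_mul_right _ k.2.le
      omega
    omega
  let T : V →ₗ[E] (Fin M × Fin (B + M * m + J) → E) :=
    LinearMap.pi fun kw => lcoeff E (kw.2 : ℕ) ∘ₗ P kw.1
  have hker : LinearMap.ker T ≠ ⊥ := by
    apply LinearMap.ker_ne_bot_of_finrank_lt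
    simp only [V, Module.finrank_fintype_fun_eq_card, Fintype.card_prod, Fintype.card_fin]
    exact hcount
  obtain ⟨v, hv, hv0⟩ := Submodule.exists_mem_ne_zero_of_ne_bot hker
  have hPv : ∀ k, P k v = 0 := by
    intro k
    ext w
    rw [coeff_zero]
    by_cases hw : w < B + M * m + J
    · exact congrFun (LinearMap.mem_ker.1 hv) (k, ⟨w, hw⟩)
    · exact coeff_eq_zero_of_natDegree_lt (lt_of_lt_of_le (hPdeg k v) (not_lt.1 hw))
  set R : E[X] := ∑ i : Fin d, ∑ j : Fin J, f ^ (M + q * i) * H i j v * X ^ (Q * j) with hR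
  have hRne : R ≠ 0 := by
    intro hR0
    let K : Fin d → E[X][X] := fun i => ∑ j : Fin J, (H i j v).map C * C (X ^ (j:ℕ))
    have hK := nonvanish d (B - 1 + m) hd hdQ f hf hirr K ?_ hN ?_
    · apply hv0
      ext ⟨i, j, b⟩
      have h1 := congrArg (fun F => (F.coeff (b:ℕ)).coeff (j:ℕ)) (hK i)
      simp only [K, finsetSum_coeff, coeff_mul_C, coeff_map, coeff_zero, coeff_C_mul, coeff_X_pow] at h1
      rw [Finset.sum_eq_single j] at h1
      · simp [hHcoeff] at h1; exact h1
      · intro j' _ hj'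
        rw [if_neg (fun h => hj' (Fin.ext h.symm)), mul_zero]
      · simp
    · intro i
      have : (K i).natDegree ≤ B - 1 := by
        apply natDegree_sum_le_of_forall_le
        intro j _
        refine (natDegree_mul_C_le _ _).trans (natDegree_map_le.trans (hHdeg i j v))
      omega
    · apply mul_left_cancel₀ (pow_ne_zero M hf.ne_zero)
      rw [mul_zero, ← hR0, hR, Finset.mul_sum]
      refine Finset.sum_congr rfl fun i _ => ?_
      simp only [K, eval₂_finsetSum, eval₂_mul, eval₂_map, eval₂_C]
      have : ((expand E Q : E[X] →+* E[X])).comp C = C := by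
        ext x; simp
      rw [this, Finset.sum_mul, Finset.mul_sum]
      refine Finset.sum_congr rfl fun j _ => ?_
      rw [eval₂_C_X]
      simp only [RingHom.coe_coe, map_pow, expand_X]
      rw [← pow_mul, ← pow_mul, pow_add]; ring
  have hRdeg : R.natDegree ≤ M * m + B + Q * m + (J - 1) * Q := by
    apply natDegree_sum_le_of_forall_le
    intro i _
    apply natDegree_sum_le_of_forall_le
    intro j _
    refine natDegree_mul_le.trans ?_
    have h1 := natDegree_mul_le (p := f ^ (M + q * i)) (q := H i j v)
    have h2 := hHdeg i j v
    rw [natDegree_X_pow]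
    rw [hf.natDegree_pow, ← hm] at h1
    have h3 : q * i ≤ Q := by
      calc q * i ≤ q * d := Nat.mul_le_mul_left _ i.2.le
        _ ≤ Q - 1 := Nat.div_mul_le_self _ _
        _ ≤ Q := by omega
    have h4 : (M + q * i) * m ≤ M * m + Q * m := by
      rw [add_mul]; exact Nat.add_le_add_left (Nat.mul_le_mul_right _ h3) _
    have h5 : Q * (j:ℕ) ≤ (J - 1) * Q := by
      rw [mul_comm]; exact Nat.mul_le_mul_right _ (by have := j.2; omega)
    omega
  have hdvd : ∀ x : E, (f.eval x) ^ q = c → (X - C x) ^ M ∣ R := by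
    intro x hx
    have hpowQ : (X - C x) ^ Q ∣ (X ^ Q - C x : E[X]) := by
      have := FiniteField.expand_card (X - C x)
      rw [map_sub, expand_X, expand_C] at this
      rw [hQ, ← this]
    have h1 : ∀ j : ℕ, (X - C x) ^ M ∣ (X ^ (Q * j) - C x ^ j : E[X]) := by
      intro j
      refine ((pow_dvd_pow _ hM).trans hpowQ).trans ?_
      rw [pow_mul]
      exact sub_dvd_pow_sub_pow _ _ j
    have h2 : (X - C x) ^ M ∣ R - ∑ i : Fin d, ∑ j : Fin J, f ^ (M + q * i) * H i j v * C x ^ (j:ℕ) := by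
      rw [hR, ← Finset.sum_sub_distrib]
      apply Finset.dvd_sum
      intro i _
      rw [← Finset.sum_sub_distrib]
      apply Finset.dvd_sum
      intro j _
      rw [← mul_sub]
      exact Dvd.dvd.mul_left (h1 j) _
    refine (dvd_iff_dvd_of_dvd_sub h2).2 ?_
    set G := ∑ i : Fin d, ∑ j : Fin J, f ^ (M + q * i) * H i j v * C x ^ (j:ℕ) with hG
    have h3 : X ^ M ∣ taylor x G := by
      rw [X_pow_dvd_iff]
      intro k hk
      rw [taylor_coeff, hG, map_sum, eval_finsetSum]
      have h5 := congrArg (fun F => f.eval x ^ (M - k) * F.eval x) (hPv ⟨k, hk⟩)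
      simp only [hP, eval_finsetSum, eval_zero, mul_zero] at h5
      rw [← h5, Finset.mul_sum]
      refine Finset.sum_congr rfl fun i _ => ?_
      rw [map_sum, eval_finsetSum, Finset.mul_sum]
      refine Finset.sum_congr rfl fun j _ => ?_
      rw [← C_pow, mul_comm, ← smul_eq_C_mul, map_smul, hL ⟨k, hk⟩ i]
      simp only [eval_smul, eval_mul, eval_pow, eval_X, smul_eq_mul]
      rw [show M + q * (i:ℕ) - k = (M - k) + q * i by omega, pow_add, pow_mul, hx]
      ring
    obtain ⟨F, hF⟩ := h3
    refine ⟨taylor (-x) F, ?_⟩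
    have h6 := congrArg (taylor (-x)) hF
    rw [taylor_taylor, taylor_mul, taylor_pow, taylor_X] at h6
    simpa [sub_eq_add_neg] using h6
  have hall : (∏ x ∈ univ.filter (fun x : E => (f.eval x) ^ q = c), (X - C x) ^ M) ∣ R := by
    apply Finset.prod_dvd_of_coprime
    · intro a _ b _ hab
      exact (isCoprime_X_sub_C_of_isUnit_sub (sub_ne_zero.2 hab).isUnit).pow
    · intro x hx
      exact hdvd x (by simpa using hx)
  have := natDegree_le_of_dvd hall hRne
  rw [natDegree_prod_of_monic _ _ (fun x _ => (monic_X_sub_C x).pow _)] at this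
  simp only [natDegree_pow, natDegree_X_sub_C, Finset.sum_const, smul_eq_mul, mul_one] at this
  rw [mul_comm]
  exact this.trans hRdeg

lemma numeric1 (d m Q : ℕ) (hd : 0 < d) (hQ : (m + 4) ^ 2 + (m + 3) * (d * (m + 1)) + 1 ≤ Q) :
    0 < Q / d - m ∧ d * (Q / d - m - 1 + m) < Q ∧
    Nat.sqrt Q * ((Q / d - m) + Nat.sqrt Q * m + (Nat.sqrt Q / d + (m + 4))) <
      d * ((Nat.sqrt Q / d + (m + 4)) * (Q / d - m)) := by
  have hM1 : Nat.sqrt Q * Nat.sqrt Q ≤ Q := Nat.sqrt_le Q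
  have hM2 : m + 4 ≤ Nat.sqrt Q := by
    rw [Nat.le_sqrt']; exact le_trans (by omega) hQ
  set M := Nat.sqrt Q
  have h1 : d * (Q / d) + Q % d = Q := Nat.div_add_mod Q d
  have h2 : Q % d < d := Nat.mod_lt _ hd
  have h3 : d * (M / d) + M % d = M := Nat.div_add_mod M d
  have h4 : M % d < d := Nat.mod_lt _ hd
  have h5 : M / d ≤ M := Nat.div_le_self _ _
  have h6 : m + 1 ≤ Q / d := by
    rw [Nat.le_div_iff_mul_le hd]
    nlinarith
  obtain ⟨B, hB⟩ : ∃ B, Q / d = B + 1 + m := ⟨Q / d - m - 1, by omega⟩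
  rw [hB] at h1 ⊢
  have e1 : B + 1 + m - m = B + 1 := by omega
  rw [e1]
  refine ⟨by omega, ?_, ?_⟩
  · simp only [Nat.add_sub_cancel]
    have : d * (B + 1 + m) = d * (B + m) + d := by ring
    omega
  · set t := M / d
    have g1 : M + d * (m + 3) + 1 ≤ d * (t + (m + 4)) := by nlinarith
    have g2 : (M + d * (m + 3) + 1) * (B + 1) ≤ d * (t + (m + 4)) * (B + 1) := Nat.mul_le_mul_right _ g1
    have g3 : M * M * m ≤ Q * m := Nat.mul_le_mul_right _ hM1
    have g4 : M * t ≤ M * M := Nat.mul_le_mul_left _ h5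
    have g5 : M * (m + 4) ≤ M * M := Nat.mul_le_mul_left _ hM2
    have g6 : Q < d * (B + 1) + d * (m + 1) := by nlinarith
    have g7 : (m + 3) * Q ≤ (m + 3) * (d * (B + 1) + d * (m + 1)) := Nat.mul_le_mul_left _ g6.le
    nlinarith

lemma numeric2 (d m Q N : ℕ) (hd : 0 < d) (hQ : 1 ≤ Q)
    (h : Nat.sqrt Q * N ≤ Nat.sqrt Q * m + (Q / d - m) + Q * m + (Nat.sqrt Q / d + (m + 4) - 1) * Q) :
    (N : ℝ) ≤ (Q:ℝ) / d + (7 * m + 12) * Real.sqrt Q := by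
  have hM1 : Nat.sqrt Q * Nat.sqrt Q ≤ Q := Nat.sqrt_le Q
  have hM3 : Q < (Nat.sqrt Q + 1) * (Nat.sqrt Q + 1) := Nat.lt_succ_sqrt Q
  have hM2 : 1 ≤ Nat.sqrt Q := by
    rw [Nat.le_sqrt']; simpa using hQ
  have hMs : (Nat.sqrt Q : ℝ) ≤ Real.sqrt Q := Real.nat_sqrt_le_real_sqrt
  set M := Nat.sqrt Q
  have hd' : (0:ℝ) < d := by exact_mod_cast hd
  have a1 : ((Q / d - m : ℕ):ℝ) ≤ Q := by
    exact_mod_cast (Nat.sub_le _ _).trans (Nat.div_le_self _ _)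
  have a2 : ((M / d : ℕ):ℝ) ≤ M / d := Nat.cast_div_le
  have hr : (M:ℝ) * N ≤ M * m + Q + Q * m + (M / d + (m + 3)) * Q := by
    have h' : M * N ≤ M * m + (Q / d - m) + Q * m + (M / d + (m + 3)) * Q := h
    have h'' : (M:ℝ) * N ≤ M * m + (Q / d - m : ℕ) + Q * m + ((M / d : ℕ) + (m + 3)) * Q := by
      exact_mod_cast h'
    have : ((M / d : ℕ):ℝ) * Q ≤ (M / d) * Q := mul_le_mul_of_nonneg_right a2 (by positivity)
    linarith
  have hMpos : (1:ℝ) ≤ M := by exact_mod_cast hM2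
  have hm0 : (0:ℝ) ≤ m := by positivity
  have hQM : (Q:ℝ) ≤ 3 * (M * M) := by
    have : Q ≤ 3 * (M * M) := by nlinarith
    exact_mod_cast this
  have hfin : (M:ℝ) * N ≤ M * ((Q:ℝ) / d + (7 * m + 12) * M) := by
    have e : (M:ℝ) / d * Q = M * (Q / d) := by ring
    have b1 : (2 * m + 4) * (Q:ℝ) ≤ (2 * m + 4) * (3 * (M * M)) := mul_le_mul_of_nonneg_left hQM (by positivity)
    have b2 : (M:ℝ) * m ≤ M * M * m := by nlinarith [mul_nonneg (sub_nonneg.2 hMpos) (mul_nonneg (by linarith : (0:ℝ) ≤ M) hm0)]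
    nlinarith
  have := le_of_mul_le_mul_left hfin (by linarith)
  refine this.trans ?_
  have : (7 * m + 12) * (M:ℝ) ≤ (7 * m + 12) * Real.sqrt Q := mul_le_mul_of_nonneg_left hMs (by positivity)
  linarith

open Polynomial in
lemma stepanov (d m : ℕ) (hd : 0 < d) : ∃ C₀ : ℝ, 0 ≤ C₀ ∧ 
    ∀ (E : Type) [Field E] [Fintype E] [DecidableEq E] (_ : d ∣ Fintype.card E - 1)
    (f : E[X]) (_ : f.Monic) (_ : f.natDegree = m)
    (_ : ∀ (k : ℕ) (A B : E[X][X]), B ≠ 0 → A ^ d * (f.map C) ^ k = (C f) ^ k * B ^ d → d ∣ k) (c : E),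
    ((univ.filter fun x : E => (f.eval x) ^ ((Fintype.card E - 1) / d) = c).card : ℝ) ≤
      (Fintype.card E : ℝ) / d + C₀ * Real.sqrt (Fintype.card E) := by
  set Q₀ := (m + 4) ^ 2 + (m + 3) * (d * (m + 1)) + 1 with hQ₀
  refine ⟨(7 * m + 12) + Real.sqrt Q₀, by positivity, ?_⟩
  intro E _ _ _ hdQ f hf hfm hirr c
  have hQ1 : 1 ≤ Fintype.card E := Fintype.card_pos
  by_cases hQ : Q₀ ≤ Fintype.card E
  · obtain ⟨h1, h2, h3⟩ := numeric1 d m _ hd hQ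
    have h4 := stepanov_core d (Nat.sqrt (Fintype.card E)) (Fintype.card E / d - m)
      (Nat.sqrt (Fintype.card E) / d + (m + 4)) hd hdQ f hf hirr (Nat.sqrt_le_self _) h1 (Nat.add_pos_right _ (by omega))
      (by rw [hfm]; exact h2) (by rw [hfm]; exact h3) c
    rw [hfm] at h4
    have h5 := numeric2 d m _ _ hd hQ1 h4
    refine h5.trans ?_
    have : 0 ≤ Real.sqrt Q₀ * Real.sqrt (Fintype.card E) := by positivity
    nlinarith
  · have h1 : ((univ.filter fun x : E => (f.eval x) ^ ((Fintype.card E - 1) / d) = c).card : ℝ) ≤ Fintype.card E := by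
      exact_mod_cast (Finset.card_filter_le _ _)
    refine h1.trans ?_
    have h2 : Real.sqrt (Fintype.card E) ≤ Real.sqrt Q₀ := by
      apply Real.sqrt_le_sqrt
      exact_mod_cast (not_le.1 hQ).le
    have h3 : (Fintype.card E : ℝ) = Real.sqrt (Fintype.card E) * Real.sqrt (Fintype.card E) :=
      (Real.mul_self_sqrt (by positivity)).symm
    have h4 : (Fintype.card E : ℝ) ≤ Real.sqrt Q₀ * Real.sqrt (Fintype.card E) := by
      conv_lhs => rw [h3]
      exact mul_le_mul_of_nonneg_right h2 (Real.sqrt_nonneg _)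
    have h5 : 0 ≤ (Fintype.card E : ℝ) / d := by positivity
    have h6 : 0 ≤ (7 * m + 12 : ℝ) * Real.sqrt (Fintype.card E) := by positivity
    nlinarith


lemma roots_sum {X : Type*} [Fintype X] (g : X → ℂ) (d : ℕ) (hd : 1 < d) (n₀ : ℕ) (K : ℝ)
    (hg : ∀ x, g x = 0 ∨ g x ^ d = 1) (h0 : (univ.filter fun x => g x = 0).card ≤ n₀)
    (hK : ∀ z : ℂ, z ^ d = 1 → ((univ.filter fun x => g x = z).card : ℝ) ≤ (Fintype.card X : ℝ) / d + K) :
    ‖∑ x, g x‖ ≤ d * K + n₀ := by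
  classical
  have hd0 : d ≠ 0 := by omega
  set η : ℂ := Complex.exp (2 * Real.pi * Complex.I / d)
  have hη : IsPrimitiveRoot η d := Complex.isPrimitiveRoot_exp d hd0
  let Z : Finset ℂ := (range d).image (fun i => η ^ i)
  have hinj : Set.InjOn (fun i => η ^ i) (range d : Set ℕ) := by
    intro i hi j hj hij
    exact hη.pow_inj (by simpa using hi) (by simpa using hj) hij
  have hZ0 : ∑ z ∈ Z, z = 0 := by
    rw [Finset.sum_image hinj]; exact hη.geom_sum_eq_zero hd
  have hZc : Z.card = d := by rw [Finset.card_image_of_injOn hinj, card_range]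
  have hZ1 : ∀ z ∈ Z, z ^ d = 1 := by
    intro z hz
    obtain ⟨i, _, rfl⟩ := Finset.mem_image.1 hz
    rw [← pow_mul, mul_comm, pow_mul, hη.pow_eq_one, one_pow]
  have hZm : ∀ x, g x ≠ 0 → g x ∈ Z := by
    intro x hx
    have := (hg x).resolve_left hx
    have : NeZero d := ⟨hd0⟩
    obtain ⟨i, hi, h⟩ := hη.eq_pow_of_pow_eq_one ((hg x).resolve_left hx)
    exact Finset.mem_image.2 ⟨i, by simpa using hi, h⟩
  have hne : ∀ z ∈ Z, z ≠ 0 := by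
    rintro z hz rfl
    have := hZ1 0 hz
    rw [zero_pow hd0] at this; exact zero_ne_one this
  let T := univ.filter fun x => g x ≠ 0
  have hmaps : ∀ x ∈ T, g x ∈ Z := fun x hx => hZm x (by simpa [T] using hx)
  have hfib : ∀ z ∈ Z, T.filter (fun x => g x = z) = univ.filter fun x => g x = z := by
    intro z hz
    ext x
    simp only [T, Finset.mem_filter, Finset.mem_univ, true_and]
    constructor
    · exact fun h => h.2
    · exact fun h => ⟨by rw [h]; exact hne z hz, h⟩
  have hsum : ∑ x, g x = ∑ z ∈ Z, ((univ.filter fun x => g x = z).card : ℂ) * z := by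
    have h1 : ∑ x, g x = ∑ x ∈ T, g x := by
      rw [Finset.sum_filter_ne_zero]
    rw [h1, ← Finset.sum_fiberwise_of_maps_to hmaps]
    refine Finset.sum_congr rfl fun z hz => ?_
    rw [hfib z hz, Finset.sum_congr rfl (g := fun _ => z) (by intro x hx; simpa using hx)]
    simp
  have hcard : ∑ z ∈ Z, (univ.filter fun x => g x = z).card = T.card := by
    rw [Finset.card_eq_sum_card_fiberwise hmaps]
    exact Finset.sum_congr rfl fun z hz => by rw [hfib z hz]
  have hT : (Fintype.card X : ℝ) ≤ T.card + n₀ := by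
    have := Finset.card_filter_add_card_filter_not (s := (univ : Finset X)) (fun x => g x = 0)
    rw [Finset.card_univ] at this
    have h2 : T.card = (univ.filter fun x => ¬ g x = 0).card := rfl
    have : Fintype.card X ≤ T.card + n₀ := by omega
    exact_mod_cast this
  set D : ℝ := (Fintype.card X : ℝ) / d + K with hD
  have h2 : ∑ x, g x = ∑ z ∈ Z, (((univ.filter fun x => g x = z).card : ℂ) - D) * z := by
    rw [hsum]
    simp_rw [sub_mul]
    rw [Finset.sum_sub_distrib, ← Finset.mul_sum, hZ0, mul_zero, sub_zero]
  rw [h2]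
  have hdr : (d:ℝ) ≠ 0 := by exact_mod_cast hd0
  calc ‖∑ z ∈ Z, (((univ.filter fun x => g x = z).card : ℂ) - D) * z‖ 
      ≤ ∑ z ∈ Z, ‖(((univ.filter fun x => g x = z).card : ℂ) - D) * z‖ := norm_sum_le _ _
    _ ≤ ∑ z ∈ Z, (D - ((univ.filter fun x => g x = z).card : ℝ)) := by
        refine Finset.sum_le_sum fun z hz => ?_
        have hz1 : ‖z‖ = 1 := Complex.norm_eq_one_of_pow_eq_one (hZ1 z hz) hd0
        rw [norm_mul, hz1, mul_one, norm_sub_rev]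
        have := hK z (hZ1 z hz)
        have e : (D:ℂ) - ((univ.filter fun x => g x = z).card : ℂ) = ((D - ((univ.filter fun x => g x = z).card : ℝ) : ℝ) : ℂ) := by
          push_cast; rfl
        rw [e, Complex.norm_real, Real.norm_of_nonneg (by linarith)]
    _ = d * D - T.card := by
        rw [Finset.sum_sub_distrib, ← hcard]
        simp [hZc]
    _ ≤ d * K + n₀ := by
        have : d * D = Fintype.card X + d * K := by
          rw [hD]; field_simp
        linarith

lemma chi_ker (p : ℕ) [Fact p.Prime] (χ : MulChar (ZMod p) ℂ) (t u : ZMod p) (ht : χ t ≠ 0)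
    (htu : χ t = χ u) : t ^ ((p - 1) / orderOf χ) = u ^ ((p - 1) / orderOf χ) := by
  have hu : χ u ≠ 0 := htu ▸ ht
  have ht' : IsUnit t := by
    by_contra h; exact ht (χ.map_nonunit h)
  have hu' : IsUnit u := by
    by_contra h; exact hu (χ.map_nonunit h)
  obtain ⟨t, rfl⟩ := ht'
  obtain ⟨u, rfl⟩ := hu'
  obtain ⟨g, hg⟩ := IsCyclic.exists_generator (α := (ZMod p)ˣ)
  have hmem := hg (t / u)
  rw [← mem_powers_iff_mem_zpowers] at hmem
  obtain ⟨k, hk⟩ := hmem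
  have hk : g ^ k = t / u := hk
  have htk : t = g ^ k * u := by rw [hk]; simp
  have h1 : (χ g) ^ k = 1 := by
    have : χ t = (χ g) ^ k * χ u := by rw [htk]; push_cast; rw [map_mul, map_pow]
    rw [htu] at this
    exact (mul_right_cancel₀ hu (by rw [one_mul]; exact this)).symm
  have h2 : orderOf χ ∣ orderOf (χ g) := by
    apply orderOf_dvd_of_pow_eq_one
    rw [MulChar.eq_iff hg, MulChar.pow_apply_coe, pow_orderOf_eq_one]
    simp
  have h3 : orderOf χ ∣ k := h2.trans (orderOf_dvd_of_pow_eq_one h1)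
  obtain ⟨l, hl⟩ := h3
  have hdvd : orderOf χ ∣ p - 1 := by
    have := χ.orderOf_dvd_card_sub_one
    rwa [ZMod.card] at this
  have h4 : t ^ ((p - 1) / orderOf χ) = u ^ ((p - 1) / orderOf χ) := by
    have hgp : g ^ (p - 1) = 1 := by 
      have := ZMod.units_pow_card_sub_one_eq_one p g
      exact this
    rw [htk, mul_pow, ← pow_mul, hl, mul_right_comm, Nat.mul_div_cancel' hdvd, pow_mul, hgp, one_pow, one_mul]
  exact_mod_cast congrArg Units.val h4

open Polynomial in
lemma charsum_bound (p : ℕ) [Fact p.Prime] (χ : MulChar (ZMod p) ℂ) (S : Finset (ZMod p)) (e : ZMod p → ℕ)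
    (hd : 1 < orderOf χ) (hgcd : ∀ k, (∀ s ∈ S, orderOf χ ∣ k * e s) → orderOf χ ∣ k) :
    ∃ C₁ : ℝ, ∀ (E : Type) [Field E] [Fintype E] [Algebra (ZMod p) E],
    ‖∑ x : E, χ (Algebra.norm (ZMod p) (∏ s ∈ S, (algebraMap (ZMod p) E s - x) ^ e s))‖ ≤
      C₁ * Real.sqrt (Fintype.card E) := by
  classical
  obtain ⟨C₀, hC₀, hst⟩ := stepanov (orderOf χ) (∑ s ∈ S, e s) (by omega)
  set d := orderOf χ with hdd
  refine ⟨d * C₀ + S.card, ?_⟩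
  intro E _ _ _
  set Q := Fintype.card E with hQ
  have hQ1 : 1 ≤ Q := Fintype.card_pos
  have hdvd : d ∣ p - 1 := by
    have := χ.orderOf_dvd_card_sub_one
    rwa [ZMod.card] at this
  have hcardpow : p - 1 ∣ Q - 1 := by
    have h1 : Q = p ^ Module.finrank (ZMod p) E := by
      have := Module.card_eq_pow_finrank (K := ZMod p) (V := E)
      rwa [ZMod.card] at this
    rw [h1]
    simpa using Nat.sub_dvd_pow_sub_pow p 1 (Module.finrank (ZMod p) E)
  have hp1 : 0 < p - 1 := by have := (Fact.out : p.Prime).two_le; omega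
  set f : E[X] := ∏ s ∈ S, (X - C (algebraMap (ZMod p) E s)) ^ e s with hf
  have hfm : f.Monic := monic_prod_of_monic _ _ fun s _ => (monic_X_sub_C _).pow _
  have hfdeg : f.natDegree = ∑ s ∈ S, e s := by
    rw [hf, natDegree_prod_of_monic _ _ fun s _ => (monic_X_sub_C _).pow _]
    refine Finset.sum_congr rfl fun s _ => ?_
    rw [natDegree_pow, natDegree_X_sub_C, mul_one]
  have hfirr := hirr_of (E := E) d (by omega) S (algebraMap (ZMod p) E) (algebraMap (ZMod p) E).injective e hgcd
  have hst' := hst E (hdvd.trans hcardpow) f hfm hfdeg hfirr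
  have hterm : ∀ x : E, χ (Algebra.norm (ZMod p) (∏ s ∈ S, (algebraMap (ZMod p) E s - x) ^ e s)) =
      χ (Algebra.norm (ZMod p) (∏ s ∈ S, (-1 : E) ^ e s)) * χ (Algebra.norm (ZMod p) (f.eval x)) := by
    intro x
    rw [← map_mul, ← map_mul, hf, eval_prod, ← Finset.prod_mul_distrib]
    congr 2
    refine Finset.prod_congr rfl fun s _ => ?_
    rw [eval_pow, ← mul_pow, eval_sub, eval_X, eval_C]
    congr 1; ring
  have hchi : ∀ t : ZMod p, χ t = 0 ∨ χ t ^ d = 1 := by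
    intro t
    by_cases ht : IsUnit t
    · right
      obtain ⟨t, rfl⟩ := ht
      rw [← MulChar.pow_apply_coe, hdd, pow_orderOf_eq_one]; simp
    · left; exact χ.map_nonunit ht
  have hnorm1 : ∀ t : ZMod p, ‖χ t‖ ≤ 1 := by
    intro t
    rcases hchi t with h | h
    · rw [h]; simp
    · exact (Complex.norm_eq_one_of_pow_eq_one h (by omega)).le
  simp_rw [hterm]
  rw [← Finset.mul_sum, norm_mul]
  have hmain : ‖∑ x : E, χ (Algebra.norm (ZMod p) (f.eval x))‖ ≤ d * (C₀ * Real.sqrt Q) + S.card := by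
    apply roots_sum _ d hd
    · intro x; exact hchi _
    · refine (Finset.card_le_card (t := S.image (algebraMap (ZMod p) E)) ?_).trans Finset.card_image_le
      intro x hx
      have hx : χ (Algebra.norm (ZMod p) (f.eval x)) = 0 := by simpa using hx
      have h1 : Algebra.norm (ZMod p) (f.eval x) = 0 := by
        by_contra h
        have h2 : IsUnit (Algebra.norm (ZMod p) (f.eval x)) := Ne.isUnit h
        exact (h2.map χ).ne_zero hx
      rw [Algebra.norm_eq_zero_iff, hf, eval_prod, Finset.prod_eq_zero_iff] at h1
      obtain ⟨s, hs, h⟩ := h1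
      rw [eval_pow] at h
      have := eq_zero_of_pow_eq_zero h
      simp [sub_eq_zero] at this
      exact Finset.mem_image.2 ⟨s, hs, this.symm⟩
    · intro z hz
      by_cases hex : ∃ x₀ : E, χ (Algebra.norm (ZMod p) (f.eval x₀)) = z
      · obtain ⟨x₀, hx₀⟩ := hex
        refine le_trans ?_ (hst' ((f.eval x₀) ^ ((Q - 1) / d)))
        norm_cast
        apply Finset.card_le_card
        intro x hx
        have hx : χ (Algebra.norm (ZMod p) (f.eval x)) = z := by simpa using hx
        have hz0 : z ≠ 0 := by
          rintro rfl
          rw [zero_pow (by omega)] at hz; exact zero_ne_one hz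
        have h1 := chi_ker p χ _ _ (hx ▸ hz0) (hx.trans hx₀.symm)
        have h2 := congrArg (algebraMap (ZMod p) E) h1
        rw [map_pow, map_pow, FiniteField.algebraMap_norm_eq_pow, FiniteField.algebraMap_norm_eq_pow,
          ← pow_mul, ← pow_mul, Nat.card_eq_fintype_card, Nat.card_eq_fintype_card, ZMod.card] at h2
        have h3 : (Fintype.card E - 1) / (p - 1) * ((p - 1) / orderOf χ) = (Q - 1) / d := by
          rw [Nat.div_mul_div_comm hcardpow hdvd, mul_comm (p - 1) d, Nat.mul_div_mul_right _ _ hp1]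
        rw [h3] at h2
        simpa using h2
      · have : (univ.filter fun x : E => χ (Algebra.norm (ZMod p) (f.eval x)) = z) = ∅ := by
          ext x; simp; exact fun h => hex ⟨x, h⟩
        rw [this]; simp; positivity
  calc _ ≤ 1 * (d * (C₀ * Real.sqrt Q) + S.card) :=
        mul_le_mul (hnorm1 _) hmain (norm_nonneg _) zero_le_one
    _ ≤ _ := by
        have : 1 ≤ Real.sqrt Q := by rw [Real.one_le_sqrt]; exact_mod_cast hQ1
        have : (S.card : ℝ) ≤ S.card * Real.sqrt Q := le_mul_of_one_le_right (by positivity) this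
        nlinarith


open Polynomial in
lemma finite_deg (F : Type) [Field F] [Fintype F] (n : ℕ) : {g : F[X] | g.natDegree ≤ n}.Finite := by
  have : Finite (degreeLT F (n+1)) := Finite.of_equiv _ (degreeLTEquiv F (n+1)).toEquiv.symm
  refine (Set.toFinite (degreeLT F (n+1) : Set F[X])).subset ?_
  intro g hg
  simp only [SetLike.mem_coe, mem_degreeLT]
  have hg : g.natDegree ≤ n := hg
  exact lt_of_le_of_lt degree_le_natDegree (by exact_mod_cast Nat.lt_succ_of_le hg)

open Polynomial in
noncomputable def Mon (F : Type) [Field F] [Fintype F] (n : ℕ) : Finset F[X] :=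
  ((finite_deg F n).subset (t := {g : F[X] | g.Monic ∧ g.natDegree = n}) (fun _ h => h.2.le)).toFinset

open Polynomial in
lemma mem_Mon {F : Type} [Field F] [Fintype F] {n : ℕ} {g : F[X]} : g ∈ Mon F n ↔ g.Monic ∧ g.natDegree = n := by
  simp [Mon]

open Polynomial in
noncomputable def Irr (F : Type) [Field F] [Fintype F] (n : ℕ) : Finset F[X] :=
  ((finite_deg F n).subset (t := {g : F[X] | g.Monic ∧ Irreducible g ∧ g.natDegree ≤ n}) (fun _ h => h.2.2)).toFinset

open Polynomial in
lemma mem_Irr {F : Type} [Field F] [Fintype F] {n : ℕ} {g : F[X]} :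
    g ∈ Irr F n ↔ g.Monic ∧ Irreducible g ∧ g.natDegree ≤ n := by
  simp [Irr]

open Polynomial in
noncomputable def Lam {F : Type} [Field F] [Fintype F] (Y : F[X] →* ℂ) (k : ℕ) : ℂ :=
  if k = 0 then 0 else ∑ P ∈ (Irr F k).filter (fun P => P.natDegree ∣ k), (P.natDegree : ℂ) * Y P ^ (k / P.natDegree)

open Polynomial in
noncomputable def cc {F : Type} [Field F] [Fintype F] (Y : F[X] →* ℂ) (n : ℕ) : ℂ := ∑ g ∈ Mon F n, Y g

open Polynomial Classical in
lemma degree_count {F : Type} [Field F] [Fintype F]  (n : ℕ) (g : F[X]) (hg : g ∈ Mon F n) :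
    ∑ P ∈ Irr F n, P.natDegree * ((Icc 1 n).filter fun j => P ^ j ∣ g).card = n := by
  obtain ⟨hm, hn⟩ := mem_Mon.1 hg
  have hg0 := hm.ne_zero
  set nf := UniqueFactorizationMonoid.normalizedFactors g with hnf
  have hprod : nf.prod = g := by
    rw [hnf, UniqueFactorizationMonoid.prod_normalizedFactors_eq hg0]
    exact hm.normalize_eq_self
  have hmon : ∀ P ∈ nf, P.Monic := by
    intro P hP
    have h1 := UniqueFactorizationMonoid.normalize_normalized_factor P hP
    have h2 := (UniqueFactorizationMonoid.irreducible_of_normalized_factor P hP).ne_zero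
    rw [← h1]; exact monic_normalize h2
  have hirr : ∀ P ∈ nf, P ∈ Irr F n := by
    intro P hP
    rw [mem_Irr]
    refine ⟨hmon P hP, UniqueFactorizationMonoid.irreducible_of_normalized_factor P hP, ?_⟩
    rw [← hn]
    exact natDegree_le_of_dvd (UniqueFactorizationMonoid.dvd_of_mem_normalizedFactors hP) hg0
  have hcount : ∀ P ∈ Irr F n, ((Icc 1 n).filter fun j => P ^ j ∣ g).card = nf.count P := by
    intro P hP
    obtain ⟨hPm, hPi, hPn⟩ := mem_Irr.1 hP
    have key : ∀ j : ℕ, P ^ j ∣ g ↔ j ≤ nf.count P := by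
      intro j
      rw [pow_dvd_iff_le_emultiplicity,
        UniqueFactorizationMonoid.le_emultiplicity_iff_replicate_le_normalizedFactors hPi hg0,
        hPm.normalize_eq_self, Multiset.le_count_iff_replicate_le]
    have hle : nf.count P ≤ n := by
      have h1 := natDegree_le_of_dvd ((key _).2 le_rfl) hg0
      rw [hPm.natDegree_pow, hn] at h1
      exact (Nat.le_mul_of_pos_right _ hPi.natDegree_pos).trans h1
    have : (Icc 1 n).filter (fun j => P ^ j ∣ g) = Icc 1 (nf.count P) := by
      ext j
      simp only [Finset.mem_filter, Finset.mem_Icc, key]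
      omega
    rw [this, Nat.card_Icc]; omega
  rw [Finset.sum_congr rfl fun P hP => by rw [hcount P hP]]
  have h1 : g.natDegree = (nf.map natDegree).sum := by
    conv_lhs => rw [← hprod]
    exact natDegree_multiset_prod_of_monic _ hmon
  rw [Finset.sum_multiset_map_count, hn] at h1
  conv_rhs => rw [h1]
  symm
  simp only [smul_eq_mul, mul_comm]
  apply Finset.sum_subset
  · intro P hP; exact hirr P (by simpa using hP)
  · intro P _ hP
    rw [Multiset.mem_toFinset] at hP
    rw [Multiset.count_eq_zero.2 hP]; simp

open Polynomial Classical in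
lemma cc_dvd {F : Type} [Field F] [Fintype F]  (Y : F[X] →* ℂ) (n j : ℕ) (P : F[X]) (hP : P.Monic) :
    ∑ g ∈ (Mon F n).filter (fun g => P ^ j ∣ g), Y g = 
      if j * P.natDegree ≤ n then Y P ^ j * cc Y (n - j * P.natDegree) else 0 := by
  have hPj : (P ^ j).Monic := hP.pow j
  have hdeg : (P ^ j).natDegree = j * P.natDegree := hP.natDegree_pow j
  split_ifs with h
  · rw [cc, Finset.mul_sum]
    symm
    apply Finset.sum_bij (fun h _ => P ^ j * h)
    · intro a ha
      obtain ⟨ha1, ha2⟩ := mem_Mon.1 ha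
      rw [Finset.mem_filter, mem_Mon]
      refine ⟨⟨hPj.mul ha1, ?_⟩, Dvd.intro _ rfl⟩
      rw [hPj.natDegree_mul ha1, hdeg, ha2]; omega
    · intro a _ b _ hab
      exact mul_left_cancel₀ hPj.ne_zero hab
    · intro b hb
      rw [Finset.mem_filter, mem_Mon] at hb
      obtain ⟨⟨hb1, hb2⟩, a, rfl⟩ := hb
      have ha : a.Monic := hPj.of_mul_monic_left hb1
      refine ⟨a, ?_, rfl⟩
      rw [mem_Mon]
      rw [hPj.natDegree_mul ha, hdeg] at hb2
      exact ⟨ha, by omega⟩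
    · intro a _
      rw [map_mul, map_pow]
  · apply Finset.sum_eq_zero
    intro g hg
    exfalso
    rw [Finset.mem_filter, mem_Mon] at hg
    have := natDegree_le_of_dvd hg.2 hg.1.1.ne_zero
    rw [hdeg, hg.1.2] at this
    exact h this

open Polynomial Classical in
lemma recur {F : Type} [Field F] [Fintype F]  (Y : F[X] →* ℂ) (n : ℕ) :
    (n : ℂ) * cc Y n = ∑ ij ∈ antidiagonal n, Lam Y ij.1 * cc Y ij.2 := by
  have hL : (n : ℂ) * cc Y n = ∑ P ∈ Irr F n, ∑ j ∈ Icc 1 n, 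
      if j * P.natDegree ≤ n then (P.natDegree : ℂ) * (Y P ^ j * cc Y (n - j * P.natDegree)) else 0 := by
    have h1 : (n : ℂ) * cc Y n = ∑ g ∈ Mon F n, ∑ P ∈ Irr F n, ∑ j ∈ Icc 1 n, if P ^ j ∣ g then (P.natDegree : ℂ) * Y g else 0 := by
      rw [cc, Finset.mul_sum]
      refine Finset.sum_congr rfl fun g hg => ?_
      conv_lhs => rw [← degree_count n g hg]
      push_cast
      rw [Finset.sum_mul]
      refine Finset.sum_congr rfl fun P _ => ?_
      rw [← Finset.sum_filter, Finset.sum_const, nsmul_eq_mul]; ring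
    rw [h1, Finset.sum_comm]
    refine Finset.sum_congr rfl fun P hP => ?_
    rw [Finset.sum_comm]
    refine Finset.sum_congr rfl fun j _ => ?_
    rw [← Finset.sum_filter, ← Finset.mul_sum, cc_dvd Y n j P (mem_Irr.1 hP).1]
    split_ifs <;> simp
  have hR : ∑ ij ∈ antidiagonal n, Lam Y ij.1 * cc Y ij.2 = ∑ P ∈ Irr F n, ∑ a ∈ Icc 1 n, 
      if P.natDegree ∣ a then (P.natDegree : ℂ) * (Y P ^ (a / P.natDegree) * cc Y (n - a)) else 0 := by
    rw [Finset.Nat.sum_antidiagonal_eq_sum_range_succ (fun a b => Lam Y a * cc Y b), Finset.sum_comm,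
      Finset.sum_range_succ']
    simp only [Lam, if_true, zero_mul, add_zero]
    rw [Finset.range_eq_Ico, Finset.sum_Ico_add' (fun a => (if a = 0 then 0 else ∑ P ∈ (Irr F a).filter (fun P => P.natDegree ∣ a), (P.natDegree : ℂ) * Y P ^ (a / P.natDegree)) * cc Y (n - a)) 0 n 1]
    have : Ico (0+1) (n+1) = Icc 1 n := by ext; simp
    rw [this]
    refine Finset.sum_congr rfl fun a ha => ?_
    have ha := Finset.mem_Icc.1 ha
    rw [if_neg (by omega), ← Finset.sum_filter]
    have : (Irr F n).filter (fun P => P.natDegree ∣ a) = (Irr F a).filter (fun P => P.natDegree ∣ a) := by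
      ext P
      simp only [Finset.mem_filter, mem_Irr]
      constructor
      · rintro ⟨⟨h1, h2, h3⟩, h4⟩
        exact ⟨⟨h1, h2, Nat.le_of_dvd (by omega) h4⟩, h4⟩
      · rintro ⟨⟨h1, h2, h3⟩, h4⟩
        exact ⟨⟨h1, h2, by omega⟩, h4⟩
    rw [this, Finset.sum_mul]
    refine Finset.sum_congr rfl fun P _ => by ring
  rw [hL, hR]
  refine Finset.sum_congr rfl fun P hP => ?_
  have hpos : 0 < P.natDegree := (mem_Irr.1 hP).2.1.natDegree_pos
  rw [← Finset.sum_filter, ← Finset.sum_filter]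
  apply Finset.sum_bij (fun j _ => j * P.natDegree)
  · intro j hj
    simp only [Finset.mem_filter, Finset.mem_Icc] at hj ⊢
    refine ⟨⟨Nat.mul_pos hj.1.1 hpos, hj.2⟩, Dvd.intro_left _ rfl⟩
  · intro a _ b _ hab
    exact Nat.eq_of_mul_eq_mul_right hpos hab
  · intro a ha
    simp only [Finset.mem_filter, Finset.mem_Icc] at ha
    obtain ⟨⟨h1, h2⟩, l, rfl⟩ := ha
    refine ⟨l, ?_, mul_comm _ _⟩
    simp only [Finset.mem_filter, Finset.mem_Icc]
    have : 0 < l := Nat.pos_of_mul_pos_left (by omega : 0 < P.natDegree * l)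
    refine ⟨⟨this, (Nat.le_mul_of_pos_left _ hpos).trans h2⟩, by rwa [mul_comm]⟩
  · intro j _
    rw [Nat.mul_div_cancel _ hpos]

open Polynomial IntermediateField in
lemma norm_minpoly {F E : Type} [Field F] [Field E] [Algebra F E] [FiniteDimensional F E] (x : E) (s : F) :
    Algebra.norm F (algebraMap F E s - x) = 
      ((minpoly F x).eval s) ^ (Module.finrank F E / (minpoly F x).natDegree) := by
  set y := algebraMap F E s - x with hy
  have hxi : IsIntegral F x := Algebra.IsIntegral.isIntegral x
  have hyi : IsIntegral F y := Algebra.IsIntegral.isIntegral y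
  have hmin : minpoly F y = (-1) ^ (minpoly F x).natDegree * ((minpoly F x).comp (X + C s)).comp (-X) := by
    have : y = -(x - algebraMap F E s) := by rw [hy]; ring
    rw [this, minpoly.neg, minpoly.sub_algebraMap]
    congr 2
    rw [natDegree_comp, natDegree_X_add_C, mul_one]
  have hdeg : (minpoly F y).natDegree = (minpoly F x).natDegree := by
    rw [hmin, ← C_1, ← C_neg, ← C_pow, natDegree_C_mul (by simp), natDegree_comp, natDegree_comp, natDegree_X_add_C, natDegree_neg, natDegree_X]
    simp
  have hgen : Algebra.norm F (AdjoinSimple.gen F y) = (minpoly F x).eval s := by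
    have h1 := Algebra.PowerBasis.norm_gen_eq_coeff_zero_minpoly (adjoin.powerBasis hyi)
    rw [adjoin.powerBasis_gen, adjoin.powerBasis_dim, minpoly_gen, hdeg, coeff_zero_eq_eval_zero, hmin] at h1
    rw [h1]
    simp only [eval_mul, eval_pow, eval_neg, eval_one, eval_comp, eval_add, eval_X, eval_C]
    rw [← mul_assoc, ← mul_pow]; simp
  rw [Algebra.norm_eq_norm_adjoin, hgen]
  congr 1
  have h2 := Module.finrank_mul_finrank F F⟮y⟯ E
  rw [adjoin.finrank hyi, hdeg] at h2
  rw [← h2, Nat.mul_div_cancel_left _ (minpoly.natDegree_pos hxi)]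

open Polynomial Classical in
lemma card_minpoly {F E : Type} [Field F] [Fintype F] [Field E] [Fintype E] [Algebra F E] (P : F[X])
    (hPm : P.Monic) (hPi : Irreducible P) (hdvd : P.natDegree ∣ Module.finrank F E) :
    (univ.filter fun x : E => minpoly F x = P).card = P.natDegree := by
  have h1 := (Irreducible.natDegree_dvd_iff_dvd_X_pow_card_pow_sub_X hPi).1 hdvd
  have hcard : Nat.card F ^ Module.finrank F E = Fintype.card E := by
    rw [Nat.card_eq_fintype_card]; exact (Module.card_eq_pow_finrank (K := F) (V := E)).symm
  rw [hcard] at h1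
  have h2 : P.map (algebraMap F E) ∣ X ^ Fintype.card E - X := by
    have := Polynomial.map_dvd (algebraMap F E) h1
    simpa using this
  have hne : (X ^ Fintype.card E - X : E[X]) ≠ 0 := FiniteField.X_pow_card_sub_X_ne_zero E Fintype.one_lt_card
  have hsp : (P.map (algebraMap F E)).Splits := by
    refine Splits.of_dvd ?_ hne h2
    rw [splits_iff_card_roots, FiniteField.roots_X_pow_card_sub_X, FiniteField.X_pow_card_sub_X_natDegree_eq _ Fintype.one_lt_card]
    rfl
  have hnd : (P.map (algebraMap F E)).roots.Nodup := by
    refine Multiset.nodup_of_le (roots.le_of_dvd hne h2) ?_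
    rw [FiniteField.roots_X_pow_card_sub_X]; exact univ.nodup
  have : (univ.filter fun x : E => minpoly F x = P) = (P.map (algebraMap F E)).roots.toFinset := by
    ext x
    simp only [Finset.mem_filter, Finset.mem_univ, true_and, Multiset.mem_toFinset]
    rw [mem_roots (hPm.map _).ne_zero, IsRoot.def, eval_map_algebraMap]
    constructor
    · rintro rfl; exact minpoly.aeval F x
    · intro h; exact (minpoly.eq_of_irreducible_of_monic hPi h hPm).symm
  rw [this, Multiset.toFinset_card_of_nodup hnd, ← hsp.natDegree_eq_card_roots, natDegree_map]

open Polynomial in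
noncomputable def Yc {p : ℕ} [Fact p.Prime] (χ : MulChar (ZMod p) ℂ) (S : Finset (ZMod p)) (e : ZMod p → ℕ) :
    (ZMod p)[X] →* ℂ where
  toFun g := χ (∏ s ∈ S, g.eval s ^ e s)
  map_one' := by simp
  map_mul' a b := by
    rw [← map_mul, ← Finset.prod_mul_distrib]
    simp only [eval_mul, mul_pow]

open Polynomial in
lemma Lam_eq {p : ℕ} [Fact p.Prime] (χ : MulChar (ZMod p) ℂ) (S : Finset (ZMod p)) (e : ZMod p → ℕ)
    (E : Type) [Field E] [Fintype E] [Algebra (ZMod p) E] (k : ℕ) (hk : Module.finrank (ZMod p) E = k) :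
    Lam (Yc χ S e) k = ∑ x : E, χ (Algebra.norm (ZMod p) (∏ s ∈ S, (algebraMap (ZMod p) E s - x) ^ e s)) := by
  classical
  have hk0 : k ≠ 0 := by rw [← hk]; exact Module.finrank_pos.ne'
  have hmaps : ∀ x ∈ (univ : Finset E), minpoly (ZMod p) x ∈ (Irr (ZMod p) k).filter (fun P => P.natDegree ∣ k) := by
    intro x _
    have hxi : IsIntegral (ZMod p) x := Algebra.IsIntegral.isIntegral x
    have hd : (minpoly (ZMod p) x).natDegree ∣ k := by
      rw [← hk]; exact minpoly.degree_dvd hxi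
    rw [Finset.mem_filter, mem_Irr]
    exact ⟨⟨minpoly.monic hxi, minpoly.irreducible hxi, Nat.le_of_dvd (by omega) hd⟩, hd⟩
  rw [Lam, if_neg hk0, ← Finset.sum_fiberwise_of_maps_to hmaps]
  refine Finset.sum_congr rfl fun P hP => ?_
  rw [Finset.mem_filter, mem_Irr] at hP
  rw [Finset.sum_congr rfl (g := fun _ => Yc χ S e P ^ (k / P.natDegree))]
  · have hc := card_minpoly (E := E) P hP.1.1 hP.1.2.1 (by rw [hk]; exact hP.2)
    rw [Finset.sum_const, nsmul_eq_mul]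
    congr 2
    rw [← hc]
    congr!
  · intro x hx
    have hx : minpoly (ZMod p) x = P := by simpa using hx
    simp only [map_prod, map_pow, norm_minpoly, hx, hk]
    change _ = (χ (∏ s ∈ S, P.eval s ^ e s)) ^ (k / P.natDegree)
    rw [map_prod, ← Finset.prod_pow]
    refine Finset.prod_congr rfl fun s _ => ?_
    rw [map_pow, ← pow_mul, ← pow_mul, mul_comm]

open Polynomial in
lemma cc_zero {p : ℕ} [Fact p.Prime] (Y : (ZMod p)[X] →* ℂ) : cc Y 0 = 1 := by
  have : Mon (ZMod p) 0 = {1} := by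
    ext g
    rw [mem_Mon, Finset.mem_singleton]
    constructor
    · rintro ⟨h1, h2⟩; exact h1.natDegree_eq_zero.1 h2
    · rintro rfl; simp
  rw [cc, this]; simp

open Polynomial in
lemma cc_one {p : ℕ} [Fact p.Prime] (χ : MulChar (ZMod p) ℂ) (S : Finset (ZMod p)) (e : ZMod p → ℕ) :
    cc (Yc χ S e) 1 = ∑ x : ZMod p, χ (∏ s ∈ S, (x + s) ^ e s) := by
  rw [cc]
  symm
  apply Finset.sum_bij (fun x _ => X + C x)
  · intro x _
    rw [mem_Mon]; exact ⟨monic_X_add_C x, natDegree_X_add_C x⟩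
  · intro a _ b _ h
    simpa using h
  · intro g hg
    obtain ⟨h1, h2⟩ := mem_Mon.1 hg
    refine ⟨g.coeff 0, Finset.mem_univ _, ?_⟩
    rw [← h1.eq_X_add_C h2]
  · intro x _
    change _ = χ _
    congr 1
    refine Finset.prod_congr rfl fun s _ => by simp [add_comm]

open Polynomial in
lemma cc_big {p : ℕ} [Fact p.Prime] (χ : MulChar (ZMod p) ℂ) (S : Finset (ZMod p)) (e : ZMod p → ℕ)
    (hex : ∃ s ∈ S, ¬ orderOf χ ∣ e s) (n : ℕ) (hn : S.card ≤ n) : cc (Yc χ S e) n = 0 := by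
  classical
  obtain ⟨s₀, hs₀, hord⟩ := hex
  obtain ⟨u, hu⟩ : ∃ u : (ZMod p)ˣ, χ u ^ e s₀ ≠ 1 := by
    by_contra h
    push Not at h
    apply hord
    apply orderOf_dvd_of_pow_eq_one
    ext u
    rw [MulChar.pow_apply_coe, h]; simp
  let ℓ : (ZMod p)[X] := Lagrange.basis S id s₀
  have hinj : Set.InjOn (id : ZMod p → ZMod p) S := Function.injective_id.injOn
  have hℓ1 : ℓ.eval s₀ = 1 := Lagrange.eval_basis_self hinj hs₀
  have hℓ0 : ∀ s ∈ S, s ≠ s₀ → ℓ.eval s = 0 := fun s hs hne => 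
    Lagrange.eval_basis_of_ne (v := id) hne.symm hs
  have hℓdeg : ℓ.degree < n := by
    rw [Lagrange.degree_basis hinj hs₀]
    have : 0 < S.card := Finset.card_pos.2 ⟨s₀, hs₀⟩
    exact_mod_cast (by omega : S.card - 1 < n)
  let sh : ZMod p → (ZMod p)[X] → (ZMod p)[X] := fun w g => g + C ((w - 1) * g.eval s₀) * ℓ
  have hsh : ∀ w g, g ∈ Mon (ZMod p) n → sh w g ∈ Mon (ZMod p) n := by
    intro w g hg
    rw [mem_Mon] at hg ⊢
    have hlt : (C ((w - 1) * g.eval s₀) * ℓ).degree < g.degree := by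
      rw [degree_eq_natDegree hg.1.ne_zero, hg.2]
      refine lt_of_le_of_lt ?_ hℓdeg
      rw [← smul_eq_C_mul]; exact degree_smul_le _ _
    refine ⟨hg.1.add_of_left hlt, ?_⟩
    rw [← hg.2]; exact natDegree_add_eq_left_of_degree_lt hlt
  have hev0 : ∀ w g, (sh w g).eval s₀ = w * g.eval s₀ := by
    intro w g; simp [sh, hℓ1]; ring
  have hev : ∀ w g s, s ∈ S → s ≠ s₀ → (sh w g).eval s = g.eval s := by
    intro w g s hs hne; simp [sh, hℓ0 s hs hne]
  have hinv : ∀ w v g, w * v = 1 → sh v (sh w g) = g := by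
    intro w v g hwv
    change sh w g + C ((v - 1) * (sh w g).eval s₀) * ℓ = g
    rw [hev0]
    change g + C ((w - 1) * g.eval s₀) * ℓ + _ = g
    have : (v - 1) * (w * g.eval s₀) = - ((w - 1) * g.eval s₀) := by
      linear_combination (g.eval s₀) * hwv
    rw [this, C_neg]; ring
  have hY : ∀ g, Yc χ S e (sh u g) = χ u ^ e s₀ * Yc χ S e g := by
    intro g
    change χ (∏ s ∈ S, (sh u g).eval s ^ e s) = _ * χ (∏ s ∈ S, g.eval s ^ e s)
    rw [← Finset.mul_prod_erase _ _ hs₀, ← Finset.mul_prod_erase S (fun s => g.eval s ^ e s) hs₀, hev0,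
      Finset.prod_congr rfl (g := fun s => g.eval s ^ e s), mul_pow]
    · simp only [map_mul, map_pow]; ring
    · intro s hs
      rw [hev _ _ _ (Finset.mem_of_mem_erase hs) (Finset.ne_of_mem_erase hs)]
  have hsum : cc (Yc χ S e) n = χ u ^ e s₀ * cc (Yc χ S e) n := by
    conv_rhs => rw [cc, Finset.mul_sum]
    rw [cc]
    symm
    refine Finset.sum_bij' (fun g _ => sh u g) (fun g _ => sh (u⁻¹ : (ZMod p)ˣ) g) (fun g hg => hsh _ _ hg) (fun g hg => hsh _ _ hg) ?_ ?_ ?_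
    · intro g _; exact hinv _ _ _ (Units.mul_inv u)
    · intro g _; exact hinv _ _ _ (Units.inv_mul u)
    · intro g _; exact (hY g).symm
  have : (χ u ^ e s₀ - 1) * cc (Yc χ S e) n = 0 := by rw [sub_mul, ← hsum]; ring
  exact (mul_eq_zero.1 this).resolve_left (sub_ne_zero.2 hu)


open Polynomial in
lemma weil_prim (p : ℕ) [Fact p.Prime] (χ : MulChar (ZMod p) ℂ) (S : Finset (ZMod p)) (e : ZMod p → ℕ)
    (hex : ∃ s ∈ S, ¬ orderOf χ ∣ e s)
    (hd : 1 < orderOf χ) (hgcd : ∀ k, (∀ s ∈ S, orderOf χ ∣ k * e s) → orderOf χ ∣ k) :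
    ‖∑ x : ZMod p, χ (∏ s ∈ S, (x + s) ^ e s)‖ ≤ S.card * Real.sqrt p := by
  classical
  obtain ⟨C₁, hC₁⟩ := charsum_bound p χ S e hd hgcd
  set Y := Yc χ S e with hY
  let L : ℂ[X] := ∑ n ∈ range S.card, monomial n (cc Y n)
  have hL : ∀ n, L.coeff n = cc Y n := by
    intro n
    simp only [L, finsetSum_coeff, coeff_monomial]
    rw [Finset.sum_ite_eq']
    split_ifs with h
    · rfl
    · exact (cc_big χ S e hex n (by simpa using h)).symm
  have hp0 : (0:ℝ) < p := by exact_mod_cast (Fact.out : p.Prime).pos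
  have hLam : ∀ n, ‖Lam Y n‖ ≤ max C₁ 0 * Real.sqrt p ^ n := by
    intro n
    rcases Nat.eq_zero_or_pos n with rfl | hn
    · simp [Lam]
    · have hfr : Module.finrank (ZMod p) (GaloisField p n) = n := GaloisField.finrank p hn.ne'
      letI : Fintype (GaloisField p n) := Fintype.ofFinite _
      have h1 := hC₁ (GaloisField p n)
      rw [← Lam_eq χ S e (GaloisField p n) n hfr] at h1
      have hc : Fintype.card (GaloisField p n) = p ^ n := by
        rw [← Nat.card_eq_fintype_card]; exact GaloisField.card p n hn.ne'
      rw [hc] at h1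
      have hs : Real.sqrt ((p ^ n : ℕ) : ℝ) = Real.sqrt p ^ n := by
        rw [Nat.cast_pow, Real.sqrt_eq_iff_mul_self_eq (by positivity) (by positivity), ← mul_pow,
          Real.mul_self_sqrt hp0.le]
      rw [hs] at h1
      refine h1.trans ?_
      exact mul_le_mul_of_nonneg_right (le_max_left _ _) (by positivity)
  have hfin := analytic_end L (Lam Y) (Real.sqrt p) (max C₁ 0) (Real.sqrt_pos.2 hp0)
    (by rw [hL]; exact cc_zero Y) (by intro n; simp only [hL]; exact recur Y n) hLam
  rw [hL, hY, cc_one] at hfin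
  refine hfin.trans ?_
  have hdeg : L.natDegree ≤ S.card := by
    apply natDegree_sum_le_of_forall_le
    intro n hn
    exact (natDegree_monomial_le _).trans (by simpa using (Finset.mem_range.1 hn).le)
  have : (L.natDegree : ℝ) ≤ S.card := by exact_mod_cast hdeg
  exact mul_le_mul_of_nonneg_right this (Real.sqrt_nonneg _)

theorem weil (p : ℕ) [Fact p.Prime] (χ : MulChar (ZMod p) ℂ) (S : Finset (ZMod p)) (e : ZMod p → ℕ)
    (he : ∀ s ∈ S, 0 < e s) (hex : ∃ s ∈ S, ¬ orderOf χ ∣ e s) :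
    ‖∑ x : ZMod p, χ (∏ s ∈ S, (x + s) ^ e s)‖ ≤ S.card * Real.sqrt p := by
  classical
  have hd0 : 0 < orderOf χ := χ.orderOf_pos
  set d := orderOf χ with hd
  set G := Nat.gcd d (S.gcd e) with hG
  have hGd : G ∣ d := Nat.gcd_dvd_left _ _
  have hGe : ∀ s ∈ S, G ∣ e s := fun s hs => (Nat.gcd_dvd_right _ _).trans (Finset.gcd_dvd hs)
  have hG0 : 0 < G := Nat.pos_of_dvd_of_pos hGd hd0
  have hord : orderOf (χ ^ G) = d / G := orderOf_pow_of_dvd hG0.ne' hGd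
  have hex' : ∃ s ∈ S, ¬ orderOf (χ ^ G) ∣ e s / G := by
    obtain ⟨s, hs, h⟩ := hex
    refine ⟨s, hs, fun h' => h ?_⟩
    rw [hord] at h'
    have := Nat.mul_dvd_mul_left G h'
    rwa [Nat.mul_div_cancel' hGd, Nat.mul_div_cancel' (hGe s hs)] at this
  have hd1 : 1 < orderOf (χ ^ G) := by
    obtain ⟨s, hs, h⟩ := hex'
    have h1 : 0 < orderOf (χ ^ G) := (χ ^ G).orderOf_pos
    have h2 : orderOf (χ ^ G) ≠ 1 := fun h2 => h (by rw [h2]; exact one_dvd _)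
    omega
  have hgcd : ∀ k, (∀ s ∈ S, orderOf (χ ^ G) ∣ k * (e s / G)) → orderOf (χ ^ G) ∣ k := by
    intro k hk
    rw [hord] at hk ⊢
    have h1 : ∀ s ∈ S, d ∣ k * e s := by
      intro s hs
      have := Nat.mul_dvd_mul_left G (hk s hs)
      rw [Nat.mul_div_cancel' hGd, mul_left_comm, Nat.mul_div_cancel' (hGe s hs)] at this
      exact this
    have h2 : d ∣ k * S.gcd e := by
      have h3 : d ∣ S.gcd (fun s => k * e s) := Finset.dvd_gcd h1
      rw [Finset.gcd_mul_left] at h3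
      simpa using h3
    have h4 : d ∣ k * G := by
      rw [hG, ← Nat.gcd_mul_left]
      exact Nat.dvd_gcd (Dvd.intro_left _ rfl) h2
    rw [← Nat.mul_dvd_mul_iff_right hG0, Nat.div_mul_cancel hGd]
    exact h4
  have := weil_prim p (χ ^ G) S (fun s => e s / G) hex' hd1 hgcd
  refine le_trans (le_of_eq ?_) this
  congr 1
  refine Finset.sum_congr rfl fun x _ => ?_
  rw [MulChar.pow_apply' _ hG0.ne', ← map_pow, ← Finset.prod_pow]
  congr 1
  refine Finset.prod_congr rfl fun s hs => ?_
  rw [← pow_mul, Nat.div_mul_cancel (hGe s hs)]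

lemma chi_norm_le (p : ℕ) [Fact p.Prime] (χ : MulChar (ZMod p) ℂ) (y : ZMod p) : ‖χ y‖ ≤ 1 :=
  DirichletCharacter.norm_le_one χ y

lemma order_ge_two (p : ℕ) [Fact p.Prime] (χ : MulChar (ZMod p) ℂ) (hχ : χ ≠ 1) :
    2 ≤ orderOf χ := by
  have h1 : 0 < orderOf χ := orderOf_pos χ
  have h2 : orderOf χ ≠ 1 := fun h => hχ (orderOf_eq_one_iff.1 h)
  omega

lemma conj_chi (p : ℕ) [Fact p.Prime] (χ : MulChar (ZMod p) ℂ) (hχ : χ ≠ 1) (y : ZMod p) :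
    starRingEnd ℂ (χ y) = χ y ^ (orderOf χ - 1) := by
  have hd := order_ge_two p χ hχ
  have h1 : starRingEnd ℂ (χ y) = χ⁻¹ y := MulChar.star_apply' χ y
  have h2 : χ⁻¹ = χ ^ (orderOf χ - 1) := by
    rw [inv_eq_iff_mul_eq_one, ← pow_succ', Nat.sub_add_cancel (by omega), pow_orderOf_eq_one]
  rw [h1, h2, MulChar.pow_apply' χ (by omega)]

theorem de_main (p : ℕ) [hp : Fact p.Prime]
    (χ : MulChar (ZMod p) ℂ) (hχ : χ ≠ 1)
    (𝒜 : Finset (ZMod p)) (r : ℕ) (hr : 0 < r)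
    (γ : ZMod p → ℂ) (hγ : ∀ a ∈ 𝒜, ‖γ a‖ ≤ 1) :
    ∑ x : ZMod p, ‖∑ a ∈ 𝒜, γ a * χ (x + a)‖ ^ (2 * r) ≤
      (2 * (r : ℝ)) ^ r *
        ((𝒜.card : ℝ) ^ r * (p : ℝ) + (𝒜.card : ℝ) ^ (2 * r) * Real.sqrt p) := by
  classical
  set d := orderOf χ with hd
  have hd2 : 2 ≤ d := order_ge_two p χ hχ
  let κ : Fin (r + r) → ℕ := Fin.append (fun _ => 1) (fun _ => d - 1)
  let c : Fin (r + r) → 𝒜 → ℂ := Fin.append (fun _ a => γ a) (fun _ a => starRingEnd ℂ (γ a))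
  have hκ : ∀ i, κ i = 1 ∨ κ i = d - 1 := by
    intro i
    refine Fin.addCases (fun j => ?_) (fun j => ?_) i
    · left; simp [κ]
    · right; simp only [κ, Fin.append_right]
  have hc : ∀ i a, ‖c i a‖ ≤ 1 := by
    intro i a
    refine Fin.addCases (fun j => ?_) (fun j => ?_) i
    · simpa [c] using hγ a a.2
    · simp only [c, Fin.append_right]
      rw [RCLike.norm_conj]
      exact hγ a a.2
  have hexp : ∀ x : ZMod p, ((‖∑ a ∈ 𝒜, γ a * χ (x + a)‖ ^ (2 * r) : ℝ) : ℂ) =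
      ∑ t : Fin (r+r) → 𝒜, (∏ i, c i (t i)) * ∏ i, χ (x + t i) ^ κ i := by
    intro x
    have h1 : ((‖∑ a ∈ 𝒜, γ a * χ (x + a)‖ ^ (2 * r) : ℝ) : ℂ) =
        (∑ a : 𝒜, γ a * χ (x + a)) ^ r * (∑ a : 𝒜, starRingEnd ℂ (γ a) * χ (x + a) ^ (d-1)) ^ r := by
      have h2 : (∑ a : 𝒜, starRingEnd ℂ (γ a) * χ (x + a) ^ (d-1)) = 
          starRingEnd ℂ (∑ a : 𝒜, γ a * χ (x + a)) := by
        rw [map_sum]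
        refine Finset.sum_congr rfl fun a _ => ?_
        rw [map_mul, conj_chi p χ hχ]
      rw [h2, ← mul_pow, Complex.mul_conj, pow_mul, ← Finset.sum_coe_sort 𝒜,
        Complex.normSq_eq_norm_sq]
      push_cast; rfl
    have h2 : ∏ i : Fin (r+r), ∑ a : 𝒜, c i a * χ (x + a) ^ κ i = 
      (∑ a : 𝒜, γ a * χ (x + a)) ^ r * (∑ a : 𝒜, starRingEnd ℂ (γ a) * χ (x + a) ^ (d-1)) ^ r := by
      rw [Fin.prod_univ_add]
      simp only [c, κ, Fin.append_right, Fin.append_left, Finset.prod_const, Finset.card_univ,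
        Fintype.card_fin, pow_one]
    rw [h1, ← h2, Finset.prod_univ_sum, Fintype.piFinset_univ]
    refine Finset.sum_congr rfl fun t _ => ?_
    rw [Finset.prod_mul_distrib]
  have hswap : ((∑ x : ZMod p, ‖∑ a ∈ 𝒜, γ a * χ (x + a)‖ ^ (2 * r) : ℝ) : ℂ) = 
      ∑ t : Fin (r+r) → 𝒜, (∏ i, c i (t i)) * ∑ x : ZMod p, ∏ i, χ (x + t i) ^ κ i := by
    rw [Complex.ofReal_sum]
    simp_rw [hexp, Finset.mul_sum]
    rw [Finset.sum_comm]
  have hterm : ∀ t : Fin (r+r) → 𝒜,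
      ‖(∏ i, c i (t i)) * ∑ x : ZMod p, ∏ i, χ (x + t i) ^ κ i‖ ≤
        (if Good (r+r) t then (p:ℝ) else 0) + 2 * r * Real.sqrt p := by
    intro t
    rw [norm_mul]
    have hc1 : ‖∏ i, c i (t i)‖ ≤ 1 := by
      rw [norm_prod]
      exact Finset.prod_le_one (fun _ _ => norm_nonneg _) (fun i _ => hc i _)
    have hin : ‖∑ x : ZMod p, ∏ i, χ (x + t i) ^ κ i‖ ≤ 
        (if Good (r+r) t then (p:ℝ) else 0) + 2 * r * Real.sqrt p := by
      split_ifs with hg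
      · have : ‖∑ x : ZMod p, ∏ i, χ (x + t i) ^ κ i‖ ≤ p := by
          refine (norm_sum_le _ _).trans ?_
          calc _ ≤ ∑ x : ZMod p, (1:ℝ) := by
                apply Finset.sum_le_sum
                intro x _
                rw [norm_prod]
                refine Finset.prod_le_one (fun _ _ => norm_nonneg _) (fun i _ => ?_)
                rw [norm_pow]
                exact pow_le_one₀ (norm_nonneg _) (chi_norm_le p χ _)
            _ = p := by simp [ZMod.card]
        have : 0 ≤ 2 * (r:ℝ) * √p := by positivity
        linarith
      · let S : Finset (ZMod p) := univ.image (fun i => (t i : ZMod p))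
        let e : ZMod p → ℕ := fun s => ∑ i with (t i : ZMod p) = s, κ i
        have hS : S.card ≤ r + r := by
          refine Finset.card_image_le.trans ?_
          simp
        have heq : ∀ x : ZMod p, ∏ i, χ (x + t i) ^ κ i = χ (∏ s ∈ S, (x + s) ^ e s) := by
          intro x
          rw [map_prod, ← Finset.prod_fiberwise_of_maps_to 
            (g := fun i => (t i : ZMod p)) (t := S) (fun i _ => Finset.mem_image_of_mem _ (Finset.mem_univ i))]
          refine Finset.prod_congr rfl fun s _ => ?_
          rw [map_pow, ← Finset.prod_pow_eq_pow_sum]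
          refine Finset.prod_congr rfl fun i hi => ?_
          rw [(Finset.mem_filter.1 hi).2]
        have hκpos : ∀ i, 0 < κ i := by
          intro i; rcases hκ i with h | h <;> omega
        simp_rw [heq]
        have hw := weil p χ S e ?_ ?_
        · refine hw.trans ?_
          rw [zero_add]
          gcongr
          have : (S.card : ℝ) ≤ r + r := by exact_mod_cast hS
          linarith
        · intro s hs
          obtain ⟨i, _, rfl⟩ := Finset.mem_image.1 hs
          exact Finset.sum_pos (fun i _ => hκpos i) ⟨i, by simp⟩
        · unfold Good at hg
          push Not at hg
          obtain ⟨i, hi⟩ := hg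
          refine ⟨t i, Finset.mem_image_of_mem _ (Finset.mem_univ i), ?_⟩
          have : e (t i) = κ i := by
            have : (univ.filter (fun j => (t j : ZMod p) = t i)) = {i} := by
              ext j
              simp only [Finset.mem_filter, Finset.mem_univ, true_and, Finset.mem_singleton]
              constructor
              · intro h
                by_contra hne
                exact hi j hne (Subtype.ext h)
              · rintro rfl; rfl
            simp only [e, this, Finset.sum_singleton]
          rw [this]
          intro hdvd
          have := Nat.le_of_dvd (hκpos i) hdvd
          rcases hκ i with h | h <;> omega
    calc _ ≤ 1 * _ := mul_le_mul hc1 hin (norm_nonneg _) zero_le_one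
      _ = _ := one_mul _
  have hL : ∑ x : ZMod p, ‖∑ a ∈ 𝒜, γ a * χ (x + a)‖ ^ (2 * r) ≤
      ∑ t : Fin (r+r) → 𝒜, ((if Good (r+r) t then (p:ℝ) else 0) + 2 * r * Real.sqrt p) := by
    have h1 : ∑ x : ZMod p, ‖∑ a ∈ 𝒜, γ a * χ (x + a)‖ ^ (2 * r) = 
       ‖((∑ x : ZMod p, ‖∑ a ∈ 𝒜, γ a * χ (x + a)‖ ^ (2 * r) : ℝ) : ℂ)‖ := by
      rw [Complex.norm_real, Real.norm_of_nonneg]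
      positivity
    rw [h1, hswap]
    exact (norm_sum_le _ _).trans (Finset.sum_le_sum fun t _ => hterm t)
  refine hL.trans ?_
  rw [Finset.sum_add_distrib, ← Finset.sum_filter, Finset.sum_const, Finset.sum_const]
  have hW : ((univ.filter (fun t : Fin (r+r) → 𝒜 => Good (r+r) t)).card : ℝ) ≤ (2*r)^r * (𝒜.card:ℝ)^r := by
    have := W_even 𝒜 r
    rw [two_mul r, Fintype.card_coe] at this
    refine le_trans (le_of_eq ?_) this
    unfold W; congr!
  simp only [nsmul_eq_mul, Finset.card_univ, Fintype.card_fun, Fintype.card_coe, Fintype.card_fin]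
  push_cast
  have h2r : 2 * (r:ℝ) ≤ (2 * r)^r := by
    have : (1:ℝ) ≤ r := by exact_mod_cast hr
    exact le_self_pow₀ (by linarith) (by omega)
  have e1 : (𝒜.card : ℝ)^(r+r) = (𝒜.card : ℝ)^(2*r) := by rw [two_mul]
  rw [e1, mul_add]
  have hp0 : (0:ℝ) ≤ p := by positivity
  have A1 := mul_le_mul_of_nonneg_right hW hp0
  have A2 := mul_le_mul_of_nonneg_right h2r (show 0 ≤ (𝒜.card : ℝ)^(2*r) * √p by positivity)
  nlinarith

end DE

/-- Lemma 3.1 (Davenport–Erdős type moment bound). -/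
theorem davenport_erdos_moment (p : ℕ) [hp : Fact p.Prime]
    (χ : MulChar (ZMod p) ℂ) (hχ : χ ≠ 1)
    (𝒜 : Finset (ZMod p)) (r : ℕ) (hr : 0 < r)
    (γ : ZMod p → ℂ) (hγ : ∀ a ∈ 𝒜, ‖γ a‖ ≤ 1) :
    ∑ x : ZMod p, ‖∑ a ∈ 𝒜, γ a * χ (x + a)‖ ^ (2 * r) ≤
      (2 * (r : ℝ)) ^ r *
        ((𝒜.card : ℝ) ^ r * (p : ℝ) + (𝒜.card : ℝ) ^ (2 * r) * Real.sqrt p) := by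
  exact DE.de_main p χ hχ 𝒜 r hr γ hγ
end

section
/- Let p be a prime, let χ₁ and χ₂ be non-trivial multiplicative characters modulo p, let 𝒜 ⊆ 𝔽_p be a set of cardinality A, let r be a positive integer, and let (γ_a)_{a ∈ 𝒜} be complex numbers with |γ_a| ≤ 1 for all a ∈ 𝒜. Then ∑_{x ∈ 𝔽_p} ∑_{y ∈ 𝔽_p} |∑_{a ∈ 𝒜} γ_a · χ₁(x + a) · χ₂(y + a)|^{2r} ≤ (2r)^r · (A^r·p² + 2r·A^{2r}·p). -/
open Finset

/-- Tuples with no value taken exactly once. -/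
def DEGood {α : Type*} {n : ℕ} (f : Fin n → α) : Prop := ∀ i, ∃ j, j ≠ i ∧ f j = f i

open Classical in
/-- The finset of good tuples. -/
noncomputable def DEGoods {α : Type*} (s : Finset α) (n : ℕ) : Finset (Fin n → α) :=
  (Fintype.piFinset fun _ : Fin n => s).filter DEGood

lemma DE_mem {α : Type*} (s : Finset α) (n : ℕ) (f : Fin n → α) :
    f ∈ DEGoods s n ↔ (∀ i, f i ∈ s) ∧ DEGood f := by
  simp [DEGoods]

open Classical in
lemma DE_image {α : Type*} {n : ℕ} (f : Fin n → α) (h : DEGood f) :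
    2 * (univ.image f).card ≤ n := by
  have := Finset.mul_card_image_le_card (f := f) univ 2 (fun b hb => by
    obtain ⟨i, _, rfl⟩ := mem_image.1 hb
    obtain ⟨j, hj, hj'⟩ := h i
    rw [← Finset.card_pair hj]
    apply card_le_card
    intro k hk
    rw [mem_insert, mem_singleton] at hk
    rcases hk with rfl | rfl <;> simp [hj'])
  simpa using this

open Classical in
lemma DE_rec {α : Type*} (s : Finset α) (n : ℕ) :
    2 * (DEGoods s (n + 2)).card ≤ 2 * ((n + 1) * s.card * (DEGoods s n).card) +
      (n + 1) * (DEGoods s (n + 1)).card := by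
  set U : Finset (Fin (n + 2) → α) := (univ ×ˢ s ×ˢ DEGoods s n).image
    (fun t : Fin (n + 1) × α × (Fin n → α) => Fin.cons t.2.1 (t.1.insertNth t.2.1 t.2.2)) with hU
  set V : Finset (Fin (n + 2) → α) := (DEGoods s (n + 1)).biUnion
    (fun g => (univ.image g).image (fun a => Fin.cons a g)) with hV
  have hsub : DEGoods s (n + 2) ⊆ U ∪ V := by
    intro f hf
    rw [DE_mem] at hf
    obtain ⟨hs, hg⟩ := hf
    rw [mem_union]
    by_cases ht : DEGood (Fin.tail f)
    · right
      rw [hV, mem_biUnion]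
      refine ⟨Fin.tail f, (DE_mem _ _ _).2 ⟨fun i => hs _, ht⟩, ?_⟩
      rw [mem_image]
      refine ⟨f 0, ?_, Fin.cons_self_tail f⟩
      obtain ⟨j, hj, hj'⟩ := hg 0
      rw [mem_image]
      refine ⟨j.pred hj, mem_univ _, ?_⟩
      simp [Fin.tail, hj']
    · left
      unfold DEGood at ht
      push Not at ht
      obtain ⟨i, hi⟩ := ht
      have h0 : f 0 = Fin.tail f i := by
        obtain ⟨j, hj, hj'⟩ := hg i.succ
        rcases Fin.eq_zero_or_eq_succ j with rfl | ⟨k, rfl⟩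
        · exact hj'
        · exact absurd hj' (hi k (fun h => hj (by rw [h])))
      rw [hU, mem_image]
      refine ⟨(i, f 0, i.removeNth (Fin.tail f)), ?_, ?_⟩
      · simp only [mem_product, mem_univ, true_and]
        refine ⟨hs 0, (DE_mem _ _ _).2 ⟨fun i => hs _, ?_⟩⟩
        intro k
        obtain ⟨j, hj, hj'⟩ := hg (i.succAbove k).succ
        have hne : Fin.tail f (i.succAbove k) ≠ Fin.tail f i := hi _ (Fin.succAbove_ne i k)
        rcases Fin.eq_zero_or_eq_succ j with rfl | ⟨l, rfl⟩
        · exact absurd (hj'.symm.trans h0) hne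
        · have hl : l ≠ i := by
            rintro rfl
            exact hne hj'.symm
          obtain ⟨m, rfl⟩ := Fin.exists_succAbove_eq hl
          exact ⟨m, fun h => hj (by rw [h]), hj'⟩
      · simp only
        rw [h0, Fin.insertNth_self_removeNth, ← h0, Fin.cons_self_tail]
  have hUc : U.card ≤ (n + 1) * s.card * (DEGoods s n).card := by
    refine card_image_le.trans ?_
    simp [card_product, mul_assoc]
  have hVc : 2 * V.card ≤ (n + 1) * (DEGoods s (n + 1)).card := by
    calc 2 * V.card ≤ 2 * ∑ g ∈ DEGoods s (n + 1), (univ.image g).card := by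
          gcongr
          exact card_biUnion_le.trans (sum_le_sum fun g _ => card_image_le)
      _ = ∑ g ∈ DEGoods s (n + 1), 2 * (univ.image g).card := mul_sum _ _ _
      _ ≤ ∑ g ∈ DEGoods s (n + 1), (n + 1) :=
          sum_le_sum fun g hg => DE_image g ((DE_mem _ _ _).1 hg).2
      _ = _ := by simp [mul_comm]
  have := (card_le_card hsub).trans (card_union_le U V)
  omega

lemma DE_bern (n : ℕ) : 2 * (n + 1) ^ (n + 1) ≤ (n + 2) ^ (n + 1) := by
  have := pow_add_mul_le_add_pow (a := n + 1) (b := 1) (by omega) (by omega) (n + 1)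
  simp only [Nat.add_sub_cancel, Nat.cast_id] at this
  calc _ = _ := ?_
    _ ≤ _ := this
  ring

lemma DE_bern2 (n : ℕ) : 3 * (n + 1) ^ (n + 1) ≤ (n + 3) ^ (n + 1) := by
  have := pow_add_mul_le_add_pow (a := n + 1) (b := 2) (by omega) (by omega) (n + 1)
  simp only [Nat.add_sub_cancel, Nat.cast_id] at this
  calc _ = _ := ?_
    _ ≤ _ := this
  ring

open Classical in
lemma DE_count {α : Type*} (s : Finset α) (n : ℕ) :
    (DEGoods s n).card ^ 2 ≤ (n * s.card) ^ n := by
  induction n using Nat.strong_induction_on with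
  | _ n ih =>
    by_cases hA : s.card < n
    · have h1 : (DEGoods s n).card ≤ s.card ^ n := by
        refine (card_filter_le _ _).trans ?_
        simp
      calc (DEGoods s n).card ^ 2 ≤ (s.card ^ n) ^ 2 := by gcongr
        _ = (s.card * s.card) ^ n := by ring
        _ ≤ _ := by gcongr
    push Not at hA
    match n, ih, hA with
    | 0, _, _ =>
      have : (DEGoods s 0).card ≤ 1 := Finset.card_le_one_of_subsingleton _
      simpa using this
    | 1, _, _ =>
      have : DEGoods s 1 = ∅ := by
        rw [eq_empty_iff_forall_notMem]
        intro f hf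
        obtain ⟨j, hj, _⟩ := ((DE_mem _ _ _).1 hf).2 0
        exact hj (Subsingleton.elim _ _)
      simp [this]
    | 2, ih, hA =>
      have h0 : (DEGoods s 0).card ≤ 1 := Finset.card_le_one_of_subsingleton _
      have h1 := ih 1 (by norm_num)
      have h2 := DE_rec s 0
      have h3 : (DEGoods s 1) = ∅ := by
        rw [eq_empty_iff_forall_notMem]
        intro f hf
        obtain ⟨j, hj, _⟩ := ((DE_mem _ _ _).1 hf).2 0
        exact hj (Subsingleton.elim _ _)
      simp [h3] at h2
      have : (DEGoods s 2).card ≤ s.card := h2.trans (by nlinarith)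
      gcongr
      linarith
    | n + 3, ih, hA =>
      have h1 := ih (n + 1) (by omega)
      have h2 := ih (n + 2) (by omega)
      have hr := DE_rec s (n + 1)
      have b1 := DE_bern2 n
      have b2 := DE_bern (n + 1)
      set A := s.card
      set x := (DEGoods s (n + 1)).card
      set y := (DEGoods s (n + 2)).card
      set z := (DEGoods s (n + 3)).card
      set X := ((n + 3) * A) ^ (n + 3) with hX
      have hu : 3 * ((n + 2) * A * x) ^ 2 ≤ X := by
        calc 3 * ((n + 2) * A * x) ^ 2 = (n + 2) ^ 2 * A ^ 2 * (3 * x ^ 2) := by ring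
          _ ≤ (n + 3) ^ 2 * A ^ 2 * (3 * ((n + 1) * A) ^ (n + 1)) := by
            gcongr; omega
          _ = (n + 3) ^ 2 * A ^ (n + 3) * (3 * (n + 1) ^ (n + 1)) := by rw [mul_pow]; ring
          _ ≤ (n + 3) ^ 2 * A ^ (n + 3) * (n + 3) ^ (n + 1) := by gcongr
          _ = X := by rw [hX, mul_pow]; ring
      have hv : 2 * ((n + 2) * y) ^ 2 ≤ X := by
        calc 2 * ((n + 2) * y) ^ 2 = (n + 2) ^ 2 * (2 * y ^ 2) := by ring
          _ ≤ (n + 2) ^ 2 * (2 * ((n + 2) * A) ^ (n + 2)) := by gcongr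
          _ = (n + 2) ^ 2 * A ^ (n + 2) * (2 * (n + 2) ^ (n + 2)) := by rw [mul_pow]; ring
          _ ≤ ((n + 3) * A) * A ^ (n + 2) * (n + 3) ^ (n + 2) := by
            gcongr
            · nlinarith
          _ = X := by rw [hX, mul_pow]; ring
      change z ^ 2 ≤ X
      have hr' : 2 * z ≤ 2 * ((n + 2) * A * x) + (n + 2) * y := hr
      generalize (n + 2) * A * x = u at *
      generalize (n + 2) * y = v at *
      have h5 : (2 * z) ^ 2 ≤ (2 * u + v) ^ 2 := by gcongr
      zify at *
      nlinarith [sq_nonneg (2 * (u : ℤ) - v)]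


section Stepanov
open Polynomial

lemma DE_hasse_dvd {K : Type*} [Field K] (F : K[X]) (e : ℕ) :
    ∀ l ≤ e, F ^ (e - l) ∣ hasseDeriv l (F ^ e) := by
  induction e with
  | zero => intro l hl; simp
  | succ e ih =>
    intro l hl
    rw [pow_succ', hasseDeriv_mul]
    refine Finset.dvd_sum fun ij hij => ?_
    rw [HasAntidiagonal.mem_antidiagonal] at hij
    obtain ⟨i, j⟩ := ij
    simp only at hij ⊢
    rcases Nat.eq_zero_or_pos i with rfl | hi
    · simp only [zero_add] at hij
      subst hij
      rw [hasseDeriv_zero']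
      by_cases h : j ≤ e
      · rw [Nat.succ_sub h, pow_succ']
        exact mul_dvd_mul_left _ (ih j h)
      · have : e + 1 - j = 0 := by omega
        rw [this]; simp
    · exact Dvd.dvd.mul_left ((pow_dvd_pow F (by omega)).trans (ih j (by omega))) _

lemma DE_hasse_T {K : Type*} [Field K] (F : K[X]) (hF : F ≠ 0) (e l : ℕ) (hl : l ≤ e) :
    ∃ T : K[X] →ₗ[K] K[X], (∀ r, hasseDeriv l (r * F ^ e) = F ^ (e - l) * T r) ∧
      ∀ r, (T r).natDegree ≤ r.natDegree + l * F.natDegree := by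
  have h1 : ∀ j : ℕ, ∃ H : K[X], j ≤ l → hasseDeriv j (F ^ e) = F ^ (e - j) * H := by
    intro j
    by_cases hj : j ≤ l
    · obtain ⟨H, hH⟩ := DE_hasse_dvd F e j (hj.trans hl)
      exact ⟨H, fun _ => hH⟩
    · exact ⟨0, fun h => absurd h hj⟩
  choose H hH using h1
  have hdeg : ∀ j ≤ l, (H j).natDegree ≤ j * F.natDegree := by
    intro j hj
    by_cases h0 : H j = 0
    · simp [h0]
    have h2 := natDegree_hasseDeriv_le (F ^ e) j
    rw [hH j hj, natDegree_mul (pow_ne_zero _ hF) h0, natDegree_pow, natDegree_pow] at h2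
    obtain ⟨k, rfl⟩ := Nat.exists_eq_add_of_le (hj.trans hl)
    simp only [Nat.add_sub_cancel_left, add_mul] at h2
    omega
  refine ⟨∑ ij ∈ antidiagonal l,
    (LinearMap.mulRight K (F ^ ij.1 * H ij.2)).comp (hasseDeriv ij.1), ?_, ?_⟩
  · intro r
    rw [hasseDeriv_mul, LinearMap.sum_apply, mul_sum]
    refine sum_congr rfl fun ij hij => ?_
    rw [HasAntidiagonal.mem_antidiagonal] at hij
    rw [hH ij.2 (by omega)]
    have : e - ij.2 = (e - l) + ij.1 := by omega
    rw [this, pow_add]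
    simp only [LinearMap.comp_apply, LinearMap.mulRight_apply]
    ring
  · intro r
    rw [LinearMap.sum_apply]
    refine natDegree_sum_le_of_forall_le _ _ fun ij hij => ?_
    rw [HasAntidiagonal.mem_antidiagonal] at hij
    simp only [LinearMap.comp_apply, LinearMap.mulRight_apply]
    refine natDegree_mul_le.trans ?_
    have a1 := natDegree_hasseDeriv_le r ij.1
    have a2 : (F ^ ij.1 * H ij.2).natDegree ≤ ij.1 * F.natDegree + ij.2 * F.natDegree :=
      natDegree_mul_le.trans (add_le_add natDegree_pow_le (hdeg _ (by omega)))
    rw [← add_mul, hij] at a2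
    omega

lemma DE_nonvanish {K : Type*} [Field K] (G : K[X]) (hG : G.eval 0 ≠ 0) (q c d B : ℕ)
    (hcd : c * d < q) (r : Fin d × Fin B → K[X])
    (hr : ∀ i, r i ≠ 0 → (r i).natDegree < c) (hne : ∃ i, r i ≠ 0) :
    ∑ i, r i * (X * G) ^ (c * i.1) * X ^ (i.2 * q : ℕ) ≠ 0 := by
  classical
  have hG0 : G ≠ 0 := by rintro rfl; simp at hG
  have hG1 : G.natTrailingDegree = 0 := by
    rw [natTrailingDegree_eq_zero]
    right
    rwa [coeff_zero_eq_eval_zero]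
  set t : Fin d × Fin B → K[X] := fun i => r i * (X * G) ^ (c * i.1 : ℕ) * X ^ (i.2 * q : ℕ)
  have hv : ∀ i, r i ≠ 0 → (t i).natTrailingDegree =
      (r i).natTrailingDegree + c * i.1 + i.2 * q := by
    intro i hi
    have e1 : t i = (r i * G ^ (c * i.1 : ℕ)) * X ^ (c * i.1 + i.2 * q : ℕ) := by
      simp only [t]; rw [mul_pow, pow_add]; ring
    have e2 : (G ^ (c * i.1 : ℕ)).natTrailingDegree = 0 := by
      rw [natTrailingDegree_eq_zero]
      right
      rw [coeff_zero_eq_eval_zero, eval_pow]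
      exact pow_ne_zero _ hG
    rw [e1, natTrailingDegree_mul_X_pow (mul_ne_zero hi (pow_ne_zero _ hG0)),
      natTrailingDegree_mul hi (pow_ne_zero _ hG0), e2]
    ring
  have ht0 : ∀ i, r i ≠ 0 → t i ≠ 0 := fun i hi =>
    mul_ne_zero (mul_ne_zero hi (pow_ne_zero _ (mul_ne_zero X_ne_zero hG0)))
      (pow_ne_zero _ X_ne_zero)
  obtain ⟨i, hi, hmin⟩ := Finset.exists_min_image (univ.filter fun i => r i ≠ 0)
    (fun i => (t i).natTrailingDegree) (by obtain ⟨i, hi⟩ := hne; exact ⟨i, by simpa using hi⟩)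
  simp only [mem_filter, mem_univ, true_and] at hi hmin
  intro h0
  have hc : (∑ i, t i).coeff (t i).natTrailingDegree = 0 := by
    change (∑ i, r i * (X * G) ^ (c * i.1 : ℕ) * X ^ (i.2 * q : ℕ)).coeff _ = 0
    rw [h0]; simp
  rw [finsetSum_coeff, sum_eq_single i] at hc
  · exact ht0 i hi (trailingCoeff_eq_zero.1 hc)
  · intro j _ hji
    by_cases hj : r j = 0
    · simp [t, hj]
    apply coeff_eq_zero_of_lt_natTrailingDegree
    refine lt_of_le_of_ne (hmin j hj) fun heq => hji ?_
    rw [hv i hi, hv j hj] at heq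
    have hlt : ∀ k, r k ≠ 0 → (r k).natTrailingDegree < c := fun k hk =>
      (natTrailingDegree_le_natDegree _).trans_lt (hr k hk)
    have hlt2 : ∀ k, r k ≠ 0 → (r k).natTrailingDegree + c * k.1 < q := fun k hk => by
      have h1 := hlt k hk
      have h2 : (k.1 : ℕ) + 1 ≤ d := k.1.2
      have h3 : c * (k.1 + 1) ≤ c * d := Nat.mul_le_mul_left c h2
      rw [mul_add] at h3
      omega
    have e2 : (i.2 : ℕ) = j.2 := by
      have hq : 0 < q := by omega
      have := congrArg (· / q) heq
      simpa [Nat.add_mul_div_right _ _ hq, Nat.div_eq_of_lt (hlt2 i hi),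
        Nat.div_eq_of_lt (hlt2 j hj)] using this
    have e1 : (i.1 : ℕ) = j.1 := by
      rw [e2] at heq
      have hc0 : 0 < c := by have := hlt i hi; omega
      have := congrArg (· / c) (Nat.add_right_cancel heq)
      simpa [Nat.add_mul_div_left _ _ hc0, Nat.div_eq_of_lt (hlt i hi),
        Nat.div_eq_of_lt (hlt j hj)] using this
    exact Prod.ext (Fin.ext e1.symm) (Fin.ext e2.symm)
  · simp

lemma DE_stepanov {K : Type*} [Field K] [Fintype K] [DecidableEq K] (G : K[X])
    (hG : G.eval 0 ≠ 0) (c d M B : ℕ) (hcd : c * d < Fintype.card K) (hM : M ≤ Fintype.card K)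
    (u : K)
    (hdim : M * (c + M * (X * G).natDegree + B) < d * B * c) :
    M * (univ.filter fun x : K => ((X * G).eval x) ^ c = u).card ≤
      Fintype.card K * (2 * (X * G).natDegree + B) := by
  set q := Fintype.card K with hq
  set F := X * G with hFdef
  have hG0 : G ≠ 0 := by rintro rfl; simp at hG
  have hF : F ≠ 0 := mul_ne_zero X_ne_zero hG0
  set m := F.natDegree with hm
  have hm1 : 1 ≤ m := by
    rw [hm, hFdef, natDegree_X_mul hG0]; omega
  have hc : 0 < c := by
    rcases Nat.eq_zero_or_pos c with h | h
    · simp [h] at hdim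
    · exact h
  have hT : ∀ (j : Fin d) (l : Fin M), ∃ T : K[X] →ₗ[K] K[X],
      (∀ r, hasseDeriv l (r * F ^ (M + c * j : ℕ)) = F ^ (M + c * j - l : ℕ) * T r) ∧
      ∀ r, (T r).natDegree ≤ r.natDegree + l * m := fun j l =>
    DE_hasse_T F hF _ _ (by have := l.2; omega)
  choose T hT1 hT2 using hT
  set E := c + M * m + B with hE
  let Ψ : Fin M → ((Fin d × Fin B → degreeLT K c) →ₗ[K] K[X]) := fun l =>
    ∑ i : Fin d × Fin B, (LinearMap.mulLeft K (C (u ^ (i.1 : ℕ)) * X ^ (i.2 : ℕ))).comp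
      ((T i.1 l).comp ((degreeLT K c).subtype.comp (LinearMap.proj i)))
  have hΨ : ∀ l r, Ψ l r = ∑ i, C (u ^ (i.1 : ℕ)) * X ^ (i.2 : ℕ) * T i.1 l (r i) := by
    intro l r
    simp only [Ψ, LinearMap.sum_apply]
    rfl
  have hdegr : ∀ r : degreeLT K c, (r : K[X]).natDegree < c := by
    intro r
    by_cases h0 : (r : K[X]) = 0
    · simpa [h0] using hc
    · exact (natDegree_lt_iff_degree_lt h0).2 (mem_degreeLT.1 r.2)
  have hΨdeg : ∀ l r, Ψ l r ∈ degreeLT K E := by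
    intro l r
    rw [hΨ]
    refine Submodule.sum_mem _ fun i _ => ?_
    rw [mem_degreeLT]
    refine lt_of_le_of_lt degree_le_natDegree ?_
    rw [Nat.cast_lt]
    refine lt_of_le_of_lt natDegree_mul_le ?_
    have h1 : (C (u ^ (i.1 : ℕ)) * X ^ (i.2 : ℕ)).natDegree ≤ (i.2 : ℕ) :=
      natDegree_C_mul_X_pow_le _ _
    have h2 := hT2 i.1 l (r i)
    have h3 := hdegr (r i)
    have h4 : (l : ℕ) * m ≤ M * m := Nat.mul_le_mul_right _ l.2.le
    have h5 := i.2.2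
    omega
  let Φ : (Fin d × Fin B → degreeLT K c) →ₗ[K] (Fin M → degreeLT K E) :=
    LinearMap.pi fun l => (Ψ l).codRestrict (degreeLT K E) (hΨdeg l)
  have hker : LinearMap.ker Φ ≠ ⊥ := by
    apply LinearMap.ker_ne_bot_of_finrank_lt
    have fr : ∀ n, Module.finrank K (degreeLT K n) = n := fun n => by
      rw [(degreeLTEquiv K n).finrank_eq]; simp
    have : ∀ n, Module.Finite K (degreeLT K n) := fun n =>
      Module.Finite.equiv (degreeLTEquiv K n).symm
    rw [Module.finrank_pi_fintype, Module.finrank_pi_fintype]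
    simp only [fr, sum_const, card_univ, Fintype.card_fin, Fintype.card_prod, smul_eq_mul]
    exact hdim
  obtain ⟨r, hr, hr0⟩ := (Submodule.ne_bot_iff _).1 hker
  have hQ : ∀ l : Fin M, ∑ i, C (u ^ (i.1 : ℕ)) * X ^ (i.2 : ℕ) * T i.1 l (r i) = 0 := by
    intro l
    rw [← hΨ]
    have h1 : Φ r l = 0 := by
      rw [LinearMap.mem_ker.1 hr]; rfl
    exact congrArg Subtype.val h1
  set R0 : K[X] := ∑ i, (r i : K[X]) * F ^ (c * i.1 : ℕ) * X ^ (i.2 * q : ℕ) with hR0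
  have hR0ne : R0 ≠ 0 := by
    apply DE_nonvanish G hG q c d B hcd (fun i => (r i : K[X]))
    · intro i _; exact hdegr _
    · by_contra! h
      apply hr0
      funext i
      exact Subtype.ext (h i)
  set R : K[X] := F ^ M * R0 with hR
  have hRne : R ≠ 0 := mul_ne_zero (pow_ne_zero _ hF) hR0ne
  have hRdeg : R.natDegree ≤ q * (2 * m + B) := by
    have h1 : R0.natDegree ≤ c * d * m + B * q := by
      refine natDegree_sum_le_of_forall_le _ _ fun i _ => ?_
      refine natDegree_mul_le.trans ?_
      refine add_le_add (natDegree_mul_le.trans ?_) ?_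
      · have h2 := hdegr (r i)
        have h3 : (F ^ (c * i.1 : ℕ)).natDegree ≤ c * i.1 * m := natDegree_pow_le
        have h4 : c * ((i.1 : ℕ) + 1) ≤ c * d := Nat.mul_le_mul_left c i.1.2
        have h5 := Nat.mul_le_mul_right m h4
        have h6 : c ≤ c * m := Nat.le_mul_of_pos_right _ hm1
        nlinarith
      · rw [natDegree_X_pow]
        exact Nat.mul_le_mul_right _ i.2.2.le
    have h2 : R.natDegree ≤ M * m + (c * d * m + B * q) :=
      natDegree_mul_le.trans (add_le_add natDegree_pow_le h1)
    have h3 : M * m ≤ q * m := Nat.mul_le_mul_right _ hM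
    have h4 : c * d * m ≤ q * m := Nat.mul_le_mul_right _ hcd.le
    nlinarith
  have hvan : ∀ x : K, F.eval x ^ c = u → (X - C x) ^ M ∣ R := by
    intro x hx
    set R' : K[X] := ∑ i, (r i : K[X]) * F ^ (M + c * i.1 : ℕ) * C (x ^ (i.2 : ℕ)) with hR'
    have hd1 : (X - C x) ^ M ∣ R - R' := by
      rw [hR, hR0, hR', mul_sum, ← sum_sub_distrib]
      refine Finset.dvd_sum fun i _ => ?_
      have h1 : F ^ M * ((r i : K[X]) * F ^ (c * i.1 : ℕ) * X ^ (i.2 * q : ℕ)) -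
          (r i : K[X]) * F ^ (M + c * i.1 : ℕ) * C (x ^ (i.2 : ℕ)) =
          ((r i : K[X]) * F ^ (M + c * i.1 : ℕ)) * ((X ^ q) ^ (i.2 : ℕ) - (C x) ^ (i.2 : ℕ)) := by
        rw [pow_add, mul_comm (i.2 : ℕ) q, pow_mul, C_pow]; ring
      rw [h1]
      refine Dvd.dvd.mul_left (Dvd.dvd.trans ?_ (sub_dvd_pow_sub_pow _ _ _)) _
      have h2 : (X : K[X]) ^ q - C x = (X - C x) ^ q := by
        obtain ⟨p, hp⟩ := CharP.exists K
        obtain ⟨n, hpp, hn⟩ := FiniteField.card K p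
        have : Fact p.Prime := ⟨hpp⟩
        rw [hq, hn, sub_pow_char_pow, ← C_pow, ← hn, FiniteField.pow_card]
      rw [h2]
      exact pow_dvd_pow _ hM
    have hd2 : (X - C x) ^ M ∣ R' := by
      rw [X_sub_C_pow_dvd_iff, X_pow_dvd_iff]
      intro l hl
      change (taylor x R').coeff l = 0
      rw [taylor_coeff, hR', map_sum, eval_finsetSum]
      have h1 : ∀ i ∈ (univ : Finset (Fin d × Fin B)),
          eval x (hasseDeriv l ((r i : K[X]) * F ^ (M + c * i.1 : ℕ) * C (x ^ (i.2 : ℕ)))) =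
          eval x (F ^ (M - l)) * eval x (C (u ^ (i.1 : ℕ)) * X ^ (i.2 : ℕ) *
            T i.1 ⟨l, hl⟩ (r i)) := by
        intro i _
        rw [mul_comm _ (C _), ← smul_eq_C_mul, map_smul, hT1 i.1 ⟨l, hl⟩]
        have h2 : M + c * i.1 - l = (M - l) + c * i.1 := by omega
        simp only [h2, pow_add, eval_smul, eval_mul, eval_pow, eval_C, eval_X, ← hx, pow_mul,
          smul_eq_mul]
        ring
      rw [sum_congr rfl h1, ← mul_sum, ← eval_finsetSum, hQ ⟨l, hl⟩]
      simp
    have := dvd_add hd1 hd2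
    rwa [sub_add_cancel] at this
  have hprod : (∏ x ∈ univ.filter (fun x : K => F.eval x ^ c = u), (X - C x) ^ M) ∣ R := by
    refine Finset.prod_dvd_of_coprime ?_ ?_
    · intro x _ y _ hxy
      exact (isCoprime_X_sub_C_of_isUnit_sub (sub_ne_zero.2 hxy).isUnit).pow
    · intro x hx
      exact hvan x (mem_filter.1 hx).2
  have hfin := natDegree_le_of_dvd hprod hRne
  rw [natDegree_prod _ _ (fun x _ => pow_ne_zero _ (X_sub_C_ne_zero x))] at hfin
  simp only [natDegree_pow, natDegree_X_sub_C, sum_const, smul_eq_mul, mul_one] at hfin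
  rw [mul_comm]
  exact hfin.trans hRdeg

end Stepanov

lemma DE_norm_le {p : ℕ} [hp : Fact p.Prime] (χ : MulChar (ZMod p) ℂ) (u : ZMod p) :
    ‖χ u‖ ≤ 1 := by
  by_cases h : IsUnit u
  · have h1 : χ u ^ Fintype.card (ZMod p)ˣ = 1 := by
      obtain ⟨v, rfl⟩ := h
      rw [← map_pow, ← Units.val_pow_eq_pow_val, pow_card_eq_one]
      simp
    exact (Complex.norm_eq_one_of_pow_eq_one h1 Fintype.card_ne_zero).le
  · rw [χ.map_nonunit h]; simp


section Stepanov2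
open Polynomial

lemma DE_fiber {K : Type*} [Field K] [Fintype K] [DecidableEq K] (G : K[X])
    (hG : G.eval 0 ≠ 0) (c d : ℕ) (hcd : c * d + 1 = Fintype.card K) (hc : 4 ≤ c) (hd : 0 < d)
    (u : K) :
    ((univ.filter fun x : K => ((X * G).eval x) ^ c = u).card : ℝ) ≤
      Fintype.card K / d + 3 * (2 * d * (X * G).natDegree + 4 + 2 * (X * G).natDegree) *
        √(Fintype.card K) := by
  set m := (X * G).natDegree with hm
  set q := Fintype.card K
  set L := Nat.sqrt c with hL
  have hL1 : L * L ≤ c := Nat.sqrt_le c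
  have hL2 : c < (L + 1) * (L + 1) := Nat.lt_succ_sqrt c
  have hL3 : 2 ≤ L := Nat.le_sqrt.2 (by omega)
  have hLc : 2 * L ≤ c := by nlinarith
  have h := DE_stepanov G hG c d (d * L) (L + (2 * d * m + 4)) (by omega)
    (by nlinarith) u (by
      rw [← hm]
      have h1 : L * (d * L * m + L + (2 * d * m + 4)) < (2 * d * m + 4) * c := by
        have a1 : L * L * (d * m + 1) ≤ c * (d * m + 1) := Nat.mul_le_mul_right _ hL1
        have a2 : 2 * L * (2 * d * m + 4) ≤ c * (2 * d * m + 4) := Nat.mul_le_mul_right _ hLc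
        nlinarith
      have h2 := Nat.mul_lt_mul_of_pos_left h1 hd
      nlinarith)
  rw [← hm] at h
  set Z := (univ.filter fun x : K => ((X * G).eval x) ^ c = u).card
  have hR : (d : ℝ) * L * Z ≤ q * (2 * m + (L + (2 * d * m + 4))) := by exact_mod_cast h
  have hq1 : (q : ℝ) ≤ (3 * d * L) ^ 2 := by
    have : q ≤ (3 * d * L) ^ 2 := by
      have a1 : c ≤ 4 * (L * L) := by nlinarith
      have a2 : q ≤ 2 * (c * d) := by
        have : 1 ≤ c * d := Nat.mul_pos (by omega) hd
        omega
      have a3 : c * d ≤ 4 * (L * L) * d := Nat.mul_le_mul_right _ a1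
      have a4 : (L * L) * d ≤ (L * L) * (d * d) := Nat.mul_le_mul_left _ (by nlinarith)
      nlinarith
    exact_mod_cast this
  have hs : √(q : ℝ) ≤ 3 * d * L := Real.sqrt_le_iff.2 ⟨by positivity, hq1⟩
  have hss : √(q : ℝ) * √(q : ℝ) = q := Real.mul_self_sqrt (by positivity)
  have hdL : (0 : ℝ) < d * L := by
    have : 0 < d * L := by positivity
    exact_mod_cast this
  have hd' : (0 : ℝ) < d := by exact_mod_cast hd
  have key : (q : ℝ) ≤ 3 * d * L * √(q : ℝ) := by
    nlinarith [Real.sqrt_nonneg (q : ℝ)]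
  refine le_of_mul_le_mul_left ?_ hdL
  refine hR.trans ?_
  have e : (d : ℝ) * L * (q / d + 3 * (2 * d * m + 4 + 2 * m) * √(q : ℝ)) =
      L * q + (2 * d * m + 4 + 2 * m) * (3 * d * L * √(q : ℝ)) := by
    field_simp
  rw [e]
  have : (2 * (d : ℝ) * m + 4 + 2 * m) * q ≤
      (2 * d * m + 4 + 2 * m) * (3 * d * L * √(q : ℝ)) := by gcongr
  nlinarith

lemma DE_charsum (p : ℕ) [hp : Fact p.Prime] (χ : MulChar (ZMod p) ℂ) (hχ : χ ≠ 1)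
    {K : Type*} [Field K] [Fintype K] [Algebra (ZMod p) K] (G : K[X])
    (hG : G.eval 0 ≠ 0) (c : ℕ) (hcd : c * (p - 1) + 1 = Fintype.card K)
    (ν : K → ZMod p) (hν : ∀ x, algebraMap (ZMod p) K (ν x) = ((X * G).eval x) ^ c) :
    ‖∑ x, χ (ν x)‖ ≤ ((p - 1 : ℕ) * (3 * (2 * (p - 1 : ℕ) * (X * G).natDegree + 4 +
      2 * (X * G).natDegree)) + (X * G).natDegree + 4 * p) * √(Fintype.card K : ℝ) := by
  classical
  have hG0 : G ≠ 0 := by rintro rfl; simp at hG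
  have hF : X * G ≠ 0 := mul_ne_zero X_ne_zero hG0
  set m := (X * G).natDegree with hm
  set q := Fintype.card K with hq
  set d := p - 1 with hd
  have hd0 : 0 < d := by have := hp.out.two_le; omega
  have hq1 : (1 : ℝ) ≤ √(q : ℝ) := by
    rw [Real.one_le_sqrt]
    have : 1 ≤ q := by omega
    exact_mod_cast this
  have hss : √(q : ℝ) * √(q : ℝ) = q := Real.mul_self_sqrt (by positivity)
  have hnorm : ∀ u : ZMod p, ‖χ u‖ ≤ 1 := fun u => DE_norm_le χ u
  by_cases hc : c < 4
  · have h1 : ‖∑ x, χ (ν x)‖ ≤ q := by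
      refine (norm_sum_le_of_le _ fun x _ => hnorm (ν x)).trans ?_
      simp [hq]
    have h2 : (q : ℝ) ≤ 4 * p := by
      have : q ≤ 4 * p := by
        have : c * d ≤ 3 * d := Nat.mul_le_mul_right _ (by omega)
        omega
      exact_mod_cast this
    have h3 : √(q : ℝ) ≤ 4 * p := by nlinarith
    calc _ ≤ (q : ℝ) := h1
      _ = √(q : ℝ) * √(q : ℝ) := hss.symm
      _ ≤ (4 * p) * √(q : ℝ) := by gcongr
      _ ≤ _ := by
        gcongr
        have : (0 : ℝ) ≤ d * (3 * (2 * d * m + 4 + 2 * m)) + m := by positivity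
        linarith
  push Not at hc
  set C1 : ℝ := 3 * (2 * d * m + 4 + 2 * m) with hC1
  set N : ZMod p → ℝ := fun u => ((univ.filter fun x : K => ν x = u).card : ℝ) with hN
  have hNle : ∀ u, N u ≤ q / d + C1 * √(q : ℝ) := by
    intro u
    have := DE_fiber G hG c d hcd hc hd0 (algebraMap (ZMod p) K u)
    refine le_trans (le_of_eq ?_) this
    simp only [hN]
    congr 2
    ext x
    simp only [mem_filter, mem_univ, true_and]
    rw [← hν, (algebraMap (ZMod p) K).injective.eq_iff]
  have hNsum : ∑ u, N u = q := by
    simp only [hN]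
    rw [← Nat.cast_sum, hq, ← Finset.card_univ]
    congr 1
    exact (Finset.card_eq_sum_card_fiberwise (fun x _ => mem_coe.2 (mem_univ (ν x)))).symm
  have hN0 : N 0 ≤ m := by
    simp only [hN]
    rw [Nat.cast_le]
    refine le_trans ?_ (Polynomial.card_roots' (X * G))
    refine le_trans ?_ (Multiset.toFinset_card_le _)
    apply card_le_card
    intro x hx
    simp only [mem_filter, mem_univ, true_and] at hx
    have := hν x
    rw [hx, map_zero] at this
    rw [Multiset.mem_toFinset, mem_roots hF]
    exact pow_eq_zero_iff (by omega) |>.1 this.symm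
  have hS : ∑ x, χ (ν x) = ∑ u, χ u * (N u : ℂ) := by
    rw [← Finset.sum_fiberwise_of_maps_to (g := ν) (t := univ) (fun x _ => mem_univ _)]
    refine sum_congr rfl fun u _ => ?_
    rw [sum_congr rfl (g := fun _ => χ u) (fun x hx => by rw [(mem_filter.1 hx).2])]
    simp [hN, mul_comm]
  set Y : ℝ := q / d + C1 * √(q : ℝ) with hY
  have hS2 : ∑ x, χ (ν x) = - ∑ u, χ u * ((Y - N u : ℝ) : ℂ) := by
    have h0 : ∑ u, χ u = 0 := MulChar.sum_eq_zero_of_ne_one hχ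
    rw [hS]
    simp only [Complex.ofReal_sub, mul_sub, sum_sub_distrib]
    rw [← sum_mul, h0]
    simp
  have hb : ‖∑ x, χ (ν x)‖ ≤ ∑ u ∈ univ.erase 0, (Y - N u) := by
    rw [hS2, norm_neg, ← Finset.add_sum_erase univ _ (mem_univ (0 : ZMod p))]
    have : χ (0 : ZMod p) = 0 := MulChar.map_zero χ
    rw [this, zero_mul, zero_add]
    refine norm_sum_le_of_le _ fun u _ => ?_
    rw [norm_mul, Complex.norm_real, Real.norm_of_nonneg (by linarith [hNle u])]
    exact mul_le_of_le_one_left (by linarith [hNle u]) (hnorm u)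
  have hd' : (d : ℝ) ≠ 0 := by exact_mod_cast hd0.ne'
  have hcard : ((univ.erase (0 : ZMod p)).card : ℝ) = d := by
    rw [card_erase_of_mem (mem_univ _), card_univ, ZMod.card]
  have hb2 : ∑ u ∈ univ.erase (0 : ZMod p), (Y - N u) = d * C1 * √(q : ℝ) + N 0 := by
    rw [sum_sub_distrib, sum_const, nsmul_eq_mul, hcard]
    have := Finset.add_sum_erase univ N (mem_univ (0 : ZMod p))
    rw [hNsum] at this
    have e : (d : ℝ) * Y = q + d * C1 * √(q : ℝ) := by
      rw [hY]; field_simp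
    rw [e]; linarith
  rw [hb2] at hb
  refine hb.trans ?_
  have : (0 : ℝ) ≤ 4 * p * √(q : ℝ) := by positivity
  have : (m : ℝ) ≤ m * √(q : ℝ) := le_mul_of_one_le_right (by positivity) hq1
  nlinarith

end Stepanov2


section Euler
open Polynomial

/-- The characteristic polynomial of `x`, as a power of the minimal polynomial. -/
noncomputable def DEcp (F : Type*) {K : Type*} [Field F] [Field K] [Algebra F K] (x : K) : F[X] :=
  minpoly F x ^ (Module.finrank F K / (minpoly F x).natDegree)

lemma DE_cp_deg_dvd (F : Type*) {K : Type*} [Field F] [Field K] [Algebra F K]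
    [FiniteDimensional F K] (x : K) : (minpoly F x).natDegree ∣ Module.finrank F K := by
  have hx : IsIntegral F x := IsIntegral.of_finite F x
  rw [← IntermediateField.adjoin.finrank hx]
  exact Dvd.intro _ (Module.finrank_mul_finrank F (IntermediateField.adjoin F {x}) K)

lemma DE_cp_monic (F : Type*) {K : Type*} [Field F] [Field K] [Algebra F K]
    [FiniteDimensional F K] (x : K) : (DEcp F x).Monic :=
  (minpoly.monic (IsIntegral.of_finite F x)).pow _

lemma DE_cp_deg (F : Type*) {K : Type*} [Field F] [Field K] [Algebra F K]
    [FiniteDimensional F K] (x : K) : (DEcp F x).natDegree = Module.finrank F K := by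
  rw [DEcp, natDegree_pow, Nat.div_mul_cancel (DE_cp_deg_dvd F x)]

lemma DE_cp_eval (F : Type*) {K : Type*} [Field F] [Field K] [Algebra F K]
    [FiniteDimensional F K] (x : K) (a : F) :
    (DEcp F x).eval a = Algebra.norm F (algebraMap F K a - x) := by
  have hx : IsIntegral F x := IsIntegral.of_finite F x
  let E := IntermediateField.adjoin F {x}
  let y : E := IntermediateField.AdjoinSimple.gen F x
  have hy : algebraMap E K y = x := IntermediateField.AdjoinSimple.algebraMap_gen F x
  have h1 : algebraMap F K a - x = algebraMap E K (algebraMap F E a - y) := by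
    rw [map_sub, hy, ← IsScalarTower.algebraMap_apply]
  rw [h1, ← Algebra.norm_norm (S := E), Algebra.norm_algebraMap, map_pow, DEcp, eval_pow]
  have h2 : Module.finrank F K / (minpoly F x).natDegree = Module.finrank E K := by
    rw [← IntermediateField.adjoin.finrank hx]
    exact Nat.div_eq_of_eq_mul_right Module.finrank_pos
      (Module.finrank_mul_finrank F (IntermediateField.adjoin F {x}) K).symm
  rw [h2]
  congr 1
  let pb := IntermediateField.adjoin.powerBasis hx
  have h3 : pb.gen = y := IntermediateField.adjoin.powerBasis_gen hx
  rw [← IntermediateField.minpoly_gen F x]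
  change eval a (minpoly F y) = _
  rw [← h3, ← charpoly_leftMulMatrix, Matrix.eval_charpoly, Algebra.norm_eq_matrix_det pb.basis,
    map_sub, AlgHom.commutes]
  congr 1

variable (p : ℕ) [hp : Fact p.Prime]

lemma DE_minpoly_count (n : ℕ) (hn : n ≠ 0) [Fintype (GaloisField p n)]
    [DecidableEq (ZMod p)[X]] (P : (ZMod p)[X]) (hP : Irreducible P) (hm : P.Monic) :
    (univ.filter fun x : GaloisField p n => minpoly (ZMod p) x = P).card =
      if P.natDegree ∣ n then P.natDegree else 0 := by
  classical
  have hiff : ∀ x : GaloisField p n, minpoly (ZMod p) x = P ↔ aeval x P = 0 := by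
    intro x
    constructor
    · rintro rfl; exact minpoly.aeval _ _
    · intro h; exact (minpoly.eq_of_irreducible_of_monic hP h hm).symm
  split_ifs with h
  · have hdvd := (hP.natDegree_dvd_iff_dvd_X_pow_card_pow_sub_X (n := n)).1 h
    rw [Nat.card_zmod] at hdvd
    have hne : (X ^ p ^ n - X : (GaloisField p n)[X]) ≠ 0 :=
      FiniteField.X_pow_card_pow_sub_X_ne_zero _ hn hp.out.one_lt
    have hdvd' : P.map (algebraMap (ZMod p) (GaloisField p n)) ∣ X ^ p ^ n - X := by
      have := map_dvd (mapRingHom (algebraMap (ZMod p) (GaloisField p n))) hdvd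
      simpa using this
    have hcard : Fintype.card (GaloisField p n) = p ^ n := by
      rw [← Nat.card_eq_fintype_card, GaloisField.card p n hn]
    have hspl : (X ^ p ^ n - X : (GaloisField p n)[X]).Splits := by
      have := FiniteField.splits_X_pow_card_sub_X (K := GaloisField p n) p
      rw [hcard] at this
      simpa using this
    have hs := hspl.of_dvd hne hdvd'
    have hsep : (X ^ p ^ n - X : (GaloisField p n)[X]).Separable :=
      galois_poly_separable p _ (dvd_pow_self p hn)
    have hnd := nodup_roots (hsep.of_dvd hdvd')
    have h1 := hs.natDegree_eq_card_roots
    rw [natDegree_map] at h1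
    rw [h1, ← Multiset.toFinset_card_of_nodup hnd]
    congr 1
    ext x
    simp only [mem_filter, mem_univ, true_and, Multiset.mem_toFinset]
    rw [hiff, mem_roots (map_ne_zero hm.ne_zero), IsRoot.def, eval_map_algebraMap]
  · rw [card_eq_zero, filter_eq_empty_iff]
    rintro x - rfl
    have := DE_cp_deg_dvd (ZMod p) x
    rw [GaloisField.finrank p hn] at this
    exact h this

open UniqueFactorizationMonoid in
lemma DE_degree_sum [∀ n, Fintype (GaloisField p n)]
    (g : (ZMod p)[X]) (hg : g.Monic) :
    ∑ n ∈ Icc 1 g.natDegree, Nat.card {x : GaloisField p n // DEcp (ZMod p) x ∣ g} =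
      g.natDegree := by
  classical
  have hg0 := hg.ne_zero
  set PP := (normalizedFactors g).toFinset with hPP
  have hP : ∀ P ∈ PP, Irreducible P ∧ P.Monic ∧ P ∣ g := by
    intro P hP
    rw [hPP, Multiset.mem_toFinset] at hP
    refine ⟨irreducible_of_normalized_factor P hP, ?_, dvd_of_mem_normalizedFactors hP⟩
    have := normalize_normalized_factor P hP
    rw [← this]
    exact monic_normalize (irreducible_of_normalized_factor P hP).ne_zero
  have step1 : ∀ n ∈ Icc 1 g.natDegree,
      Nat.card {x : GaloisField p n // DEcp (ZMod p) x ∣ g} =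
      ∑ P ∈ PP, if P.natDegree ∣ n ∧ P ^ (n / P.natDegree) ∣ g then P.natDegree else 0 := by
    intro n hn
    have hn0 : n ≠ 0 := by rw [mem_Icc] at hn; omega
    rw [Nat.card_eq_fintype_card, Fintype.card_subtype]
    rw [card_eq_sum_card_fiberwise (f := fun x : GaloisField p n => minpoly (ZMod p) x) (t := PP)]
    · refine sum_congr rfl fun P hPm => ?_
      obtain ⟨hi, hm, hd⟩ := hP P hPm
      rw [filter_filter]
      have hc := DE_minpoly_count p n hn0 P hi hm
      by_cases h2 : P ^ (n / P.natDegree) ∣ g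
      · simp only [h2, and_true]
        rw [← hc]
        congr 1
        ext x
        simp only [mem_filter, mem_univ, true_and, and_iff_right_iff_imp]
        rintro rfl
        rw [DEcp, GaloisField.finrank p hn0]
        exact h2
      · simp only [h2, and_false, if_false]
        rw [card_eq_zero, filter_eq_empty_iff]
        rintro x - ⟨hx, rfl⟩
        rw [DEcp, GaloisField.finrank p hn0] at hx
        exact h2 hx
    · intro x hx
      simp only [coe_filter, mem_univ, true_and, Set.mem_ofPred_eq] at hx
      have hint : IsIntegral (ZMod p) x := IsIntegral.of_finite _ x
      rw [mem_coe, hPP, Multiset.mem_toFinset]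
      rw [mem_normalizedFactors_iff' hg0]
      refine ⟨minpoly.irreducible hint, (minpoly.monic hint).normalize_eq_self, ?_⟩
      refine Dvd.dvd.trans (dvd_pow_self _ ?_) hx
      exact (Nat.div_pos (Nat.le_of_dvd Module.finrank_pos (DE_cp_deg_dvd _ x))
        (minpoly.natDegree_pos hint)).ne'
  rw [sum_congr rfl step1, sum_comm]
  have step2 : ∀ P ∈ PP, (∑ n ∈ Icc 1 g.natDegree,
      if P.natDegree ∣ n ∧ P ^ (n / P.natDegree) ∣ g then P.natDegree else 0) =
      (normalizedFactors g).count P * P.natDegree := by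
    intro P hPm
    obtain ⟨hi, hm, hd⟩ := hP P hPm
    have hdpos : 0 < P.natDegree := hi.natDegree_pos
    rw [← sum_filter, sum_const, smul_eq_mul]
    congr 1
    have hk : ∀ k, P ^ k ∣ g ↔ k ≤ (normalizedFactors g).count P := by
      intro k
      have := emultiplicity_eq_count_normalizedFactors hi hg0
      rw [hm.normalize_eq_self] at this
      rw [pow_dvd_iff_le_emultiplicity, this, Nat.cast_le]
    have : (Icc 1 g.natDegree).filter (fun n => P.natDegree ∣ n ∧ P ^ (n / P.natDegree) ∣ g) =
        (Icc 1 ((normalizedFactors g).count P)).image (fun k => P.natDegree * k) := by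
      ext n
      simp only [mem_filter, mem_Icc, mem_image]
      constructor
      · rintro ⟨⟨h1, h2⟩, ⟨k, rfl⟩, h4⟩
        rw [Nat.mul_div_cancel_left _ hdpos] at h4
        exact ⟨k, ⟨Nat.pos_of_ne_zero (by rintro rfl; simp at h1), (hk k).1 h4⟩, rfl⟩
      · rintro ⟨k, ⟨h1, h2⟩, rfl⟩
        rw [Nat.mul_div_cancel_left _ hdpos]
        have h3 := (hk k).2 h2
        have h4 := natDegree_le_of_dvd h3 hg0
        rw [natDegree_pow] at h4
        exact ⟨⟨Nat.mul_pos hdpos h1, by rwa [mul_comm]⟩, dvd_mul_right _ _, h3⟩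
    rw [this, card_image_of_injective _ (fun a b h => Nat.eq_of_mul_eq_mul_left hdpos h)]
    simp
  rw [sum_congr rfl step2]
  have hprod : (normalizedFactors g).prod = g := by
    have h1 := prod_normalizedFactors_eq hg0
    rwa [hg.normalize_eq_self] at h1
  have h5 := natDegree_multiset_prod_of_monic (normalizedFactors g) (fun P hPm =>
    (hP P (Multiset.mem_toFinset.2 hPm)).2.1)
  rw [hprod] at h5
  rw [h5, Finset.sum_multiset_map_count]
  simp [hPP]

end Euler

section LFun
open Polynomial

variable (p : ℕ) [hp : Fact p.Prime]

lemma DE_mon_finite (N : ℕ) : {g : (ZMod p)[X] | g.Monic ∧ g.natDegree = N}.Finite := by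
  have : Finite (degreeLT (ZMod p) (N + 1)) :=
    Finite.of_equiv _ (degreeLTEquiv (ZMod p) (N + 1)).toEquiv.symm
  refine Set.Finite.subset (Set.toFinite ((degreeLT (ZMod p) (N + 1)) : Set (ZMod p)[X])) ?_
  rintro g ⟨_, hg⟩
  rw [SetLike.mem_coe, mem_degreeLT]
  refine lt_of_le_of_lt degree_le_natDegree ?_
  rw [hg, Nat.cast_lt]
  omega

/-- Monic polynomials of degree `N`. -/
noncomputable def DEmon (N : ℕ) : Finset (ZMod p)[X] := (DE_mon_finite p N).toFinset

lemma DE_mem_mon (N : ℕ) (g : (ZMod p)[X]) : g ∈ DEmon p N ↔ g.Monic ∧ g.natDegree = N := by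
  simp [DEmon]

variable {p} {ι : Type*} [Fintype ι]

/-- The multiplicative function on polynomials. -/
noncomputable def DELam (χ : ι → MulChar (ZMod p) ℂ) (a : ι → ZMod p) (g : (ZMod p)[X]) : ℂ :=
  ∏ i, χ i (g.eval (a i))

lemma DE_Lam_mul (χ : ι → MulChar (ZMod p) ℂ) (a : ι → ZMod p) (g h : (ZMod p)[X]) :
    DELam χ a (g * h) = DELam χ a g * DELam χ a h := by
  simp [DELam, prod_mul_distrib]

/-- Coefficients of the L-function. -/
noncomputable def DEco (χ : ι → MulChar (ZMod p) ℂ) (a : ι → ZMod p) (N : ℕ) : ℂ :=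
  ∑ g ∈ DEmon p N, DELam χ a g

noncomputable instance DE_fintype (n : ℕ) : Fintype (GaloisField p n) := Fintype.ofFinite _

/-- Character sums over extensions. -/
noncomputable def DES (χ : ι → MulChar (ZMod p) ℂ) (a : ι → ZMod p) (n : ℕ) : ℂ :=
  if n = 0 then 0 else ∑ x : GaloisField p n, DELam χ a (DEcp (ZMod p) x)

lemma DE_euler (χ : ι → MulChar (ZMod p) ℂ) (a : ι → ZMod p) (N : ℕ) :
    (N : ℂ) * DEco χ a N = ∑ kl ∈ antidiagonal N, DES χ a kl.1 * DEco χ a kl.2 := by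
  classical
  rw [Finset.Nat.sum_antidiagonal_eq_sum_range_succ (fun k l => DES χ a k * DEco χ a l)]
  have hsub : Icc 1 N ⊆ range (N + 1) := by
    intro k hk; rw [mem_Icc] at hk; rw [mem_range]; omega
  rw [← sum_subset hsub (fun k hk hk' => by
    have : k = 0 := by rw [mem_Icc] at hk'; rw [mem_range] at hk; omega
    simp [DES, this])]
  have h1 : (N : ℂ) * DEco χ a N = ∑ g ∈ DEmon p N, ∑ k ∈ Icc 1 N, ∑ x : GaloisField p k,
      if DEcp (ZMod p) x ∣ g then DELam χ a g else 0 := by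
    rw [DEco, mul_sum]
    refine sum_congr rfl fun g hg => ?_
    obtain ⟨hm, hN⟩ := (DE_mem_mon p N g).1 hg
    have := DE_degree_sum p g hm
    rw [hN] at this
    rw [← congrArg (Nat.cast : ℕ → ℂ) this, Nat.cast_sum, sum_mul]
    refine sum_congr rfl fun k _ => ?_
    rw [← sum_filter, sum_const, nsmul_eq_mul, Nat.card_eq_fintype_card, Fintype.card_subtype]
  rw [h1, sum_comm]
  refine sum_congr rfl fun k hk => ?_
  rw [mem_Icc] at hk
  have hk0 : k ≠ 0 := by omega
  rw [sum_comm, DES, if_neg hk0, sum_mul]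
  refine sum_congr rfl fun x _ => ?_
  rw [← sum_filter, DEco, mul_sum]
  have hcm := DE_cp_monic (ZMod p) x
  have hcd : (DEcp (ZMod p) x).natDegree = k := by
    rw [DE_cp_deg, GaloisField.finrank p hk0]
  symm
  refine sum_bij (fun h _ => DEcp (ZMod p) x * h) ?_ ?_ ?_ ?_
  · intro h hh
    rw [DE_mem_mon] at hh
    rw [mem_filter, DE_mem_mon]
    refine ⟨⟨hcm.mul hh.1, ?_⟩, dvd_mul_right _ _⟩
    rw [hcm.natDegree_mul hh.1, hcd, hh.2]; omega
  · intro h _ h' _ he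
    exact mul_left_cancel₀ hcm.ne_zero he
  · intro g hg
    rw [mem_filter, DE_mem_mon] at hg
    obtain ⟨⟨hm, hN⟩, h, rfl⟩ := hg
    have hhm : h.Monic := hcm.of_mul_monic_left hm
    refine ⟨h, ?_, rfl⟩
    rw [DE_mem_mon]
    refine ⟨hhm, ?_⟩
    rw [hcm.natDegree_mul hhm, hcd] at hN; omega
  · intro h _
    rw [DE_Lam_mul]

lemma DE_co_zero (χ : ι → MulChar (ZMod p) ℂ) (a : ι → ZMod p) : DEco χ a 0 = 1 := by
  have : DEmon p 0 = {1} := by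
    ext g
    rw [DE_mem_mon, mem_singleton]
    constructor
    · rintro ⟨h1, h2⟩; exact h1.natDegree_eq_zero.1 h2
    · rintro rfl; simp
  simp [DEco, this, DELam]

lemma DE_co_one (χ : ι → MulChar (ZMod p) ℂ) (a : ι → ZMod p) :
    DEco χ a 1 = ∑ t : ZMod p, ∏ i, χ i (a i - t) := by
  symm
  rw [DEco]
  refine sum_bij (fun t _ => X - C t) ?_ ?_ ?_ ?_
  · intro t _
    rw [DE_mem_mon]
    exact ⟨monic_X_sub_C t, natDegree_X_sub_C t⟩
  · intro t _ t' _ h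
    simpa using h
  · intro g hg
    rw [DE_mem_mon] at hg
    refine ⟨- g.coeff 0, mem_univ _, ?_⟩
    rw [hg.1.eq_X_add_C hg.2]
    simp
  · intro t _
    simp [DELam]

lemma DE_co_vanish [DecidableEq ι] (χ : ι → MulChar (ZMod p) ℂ) (a : ι → ZMod p) (i₀ : ι)
    (hχ : χ i₀ ≠ 1) (ha : ∀ j, j ≠ i₀ → a j ≠ a i₀) (N : ℕ) (hN : Fintype.card ι ≤ N) :
    DEco χ a N = 0 := by
  set h : (ZMod p)[X] := ∏ j ∈ univ.erase i₀, (X - C (a j)) with hh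
  have hdeg : h.degree < N := by
    have hm : h.Monic := monic_prod_of_monic _ _ fun j _ => monic_X_sub_C _
    rw [degree_eq_natDegree hm.ne_zero, Nat.cast_lt, hh,
      natDegree_prod_of_monic _ _ fun j _ => monic_X_sub_C _]
    simp only [natDegree_X_sub_C, sum_const, smul_eq_mul, mul_one]
    rw [card_erase_of_mem (mem_univ _), card_univ]
    have : 0 < Fintype.card ι := Fintype.card_pos_iff.2 ⟨i₀⟩
    omega
  have hne : h.eval (a i₀) ≠ 0 := by
    rw [hh, eval_prod, prod_ne_zero_iff]
    intro j hj
    rw [eval_sub, eval_X, eval_C, sub_ne_zero]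
    exact (ha j (ne_of_mem_erase hj)).symm
  have hz : ∀ j, j ≠ i₀ → h.eval (a j) = 0 := by
    intro j hj
    rw [hh, eval_prod]
    exact prod_eq_zero (mem_erase.2 ⟨hj, mem_univ _⟩) (by simp)
  have hshift : ∀ t : ZMod p, DEco χ a N = ∑ g ∈ DEmon p N, DELam χ a (g + C t * h) := by
    intro t
    have hd : ∀ s : ZMod p, (C s * h).degree < N := fun s =>
      by rw [← smul_eq_C_mul]; exact (degree_smul_le s h).trans_lt hdeg
    have key : ∀ (s : ZMod p) (g : (ZMod p)[X]), g ∈ DEmon p N → g + C s * h ∈ DEmon p N := by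
      intro s g hg
      rw [DE_mem_mon] at hg ⊢
      have hdg : (C s * h).degree < g.degree := by
        rw [degree_eq_natDegree hg.1.ne_zero, hg.2]; exact hd s
      exact ⟨hg.1.add_of_left hdg, by rw [natDegree_add_eq_left_of_degree_lt hdg, hg.2]⟩
    rw [DEco]
    symm
    refine sum_bij' (fun g _ => g + C t * h) (fun g _ => g + C (-t) * h) (fun g hg => key t g hg)
      (fun g hg => key (-t) g hg) ?_ ?_ ?_
    · intro g _; simp
    · intro g _; simp
    · intro g _; rfl
  have hsum : (p : ℂ) * DEco χ a N = 0 := by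
    calc (p : ℂ) * DEco χ a N = ∑ t : ZMod p, DEco χ a N := by
          rw [sum_const, card_univ, ZMod.card, nsmul_eq_mul]
      _ = ∑ t : ZMod p, ∑ g ∈ DEmon p N, DELam χ a (g + C t * h) :=
          sum_congr rfl fun t _ => hshift t
      _ = ∑ g ∈ DEmon p N, ∑ t : ZMod p, DELam χ a (g + C t * h) := sum_comm
      _ = 0 := by
          refine sum_eq_zero fun g _ => ?_
          have e : ∀ t : ZMod p, DELam χ a (g + C t * h) =
              χ i₀ (g.eval (a i₀) + t * h.eval (a i₀)) *
                ∏ j ∈ univ.erase i₀, χ j (g.eval (a j)) := by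
            intro t
            rw [DELam, ← mul_prod_erase univ _ (mem_univ i₀)]
            congr 1
            · simp
            · refine prod_congr rfl fun j hj => ?_
              simp [hz j (ne_of_mem_erase hj)]
          rw [sum_congr rfl fun t _ => e t, ← sum_mul]
          have h0 : ∑ t : ZMod p, χ i₀ (g.eval (a i₀) + t * h.eval (a i₀)) = 0 := by
            rw [← MulChar.sum_eq_zero_of_ne_one hχ]
            exact Fintype.sum_equiv ((Equiv.mulRight₀ (h.eval (a i₀)) hne).trans
              (Equiv.addLeft (g.eval (a i₀)))) _ _ (fun t => by simp)
          rw [h0, zero_mul]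
  have hp0 : (p : ℂ) ≠ 0 := by exact_mod_cast hp.out.ne_zero
  exact (mul_eq_zero.1 hsum).resolve_left hp0

end LFun


section Analytic
open Polynomial Filter Topology

lemma DE_noroot (c S : ℕ → ℂ) (n : ℕ) (h0 : c 0 = 1) (hv : ∀ N, n ≤ N → c N = 0)
    (hE : ∀ N : ℕ, (N : ℂ) * c N = ∑ kl ∈ HasAntidiagonal.antidiagonal N, S kl.1 * c kl.2)
    (C ρ : ℝ) (hρ : 0 < ρ) (hS : ∀ k, ‖S k‖ ≤ C * ρ ^ k)
    (L : ℂ[X]) (hL : ∀ N, L.coeff N = c N) (T : ℂ) (hT : ‖T‖ * ρ < 1) : L.eval T ≠ 0 := by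
  have hC : 0 ≤ C := by simpa using (norm_nonneg _).trans (hS 0)
  have hL0 : L ≠ 0 := by
    intro h
    have := hL 0
    simp [h, h0] at this
  -- functional equation
  have hnd : L.natDegree < n ∨ L.natDegree = 0 := by
    by_contra hcon
    push Not at hcon
    have h1 := hL L.natDegree
    rw [hv _ hcon.1] at h1
    exact hL0 (leadingCoeff_eq_zero.1 h1)
  have hbound : ∀ z : ℂ, ∀ θ : ℝ, ‖z‖ * ρ ≤ θ → θ < 1 →
      ‖z * (derivative L).eval z‖ ≤ (C * (1 - θ)⁻¹) * ‖L.eval z‖ := by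
    intro z θ hz hθ
    have hθ0 : 0 ≤ θ := le_trans (by positivity) hz
    have hb : ∀ k, ‖S k * z ^ k‖ ≤ C * θ ^ k := by
      intro k
      rw [norm_mul, norm_pow]
      calc ‖S k‖ * ‖z‖ ^ k ≤ (C * ρ ^ k) * ‖z‖ ^ k := by gcongr; exact hS k
        _ = C * (‖z‖ * ρ) ^ k := by rw [mul_pow]; ring
        _ ≤ C * θ ^ k := by gcongr
    have hg : HasSum (fun k => C * θ ^ k) (C * (1 - θ)⁻¹) :=
      (hasSum_geometric_of_lt_one hθ0 hθ).mul_left C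
    have hs1 : Summable fun k => ‖S k * z ^ k‖ :=
      Summable.of_nonneg_of_le (fun _ => norm_nonneg _) hb hg.summable
    have hfin : ∀ N, N ∉ Finset.range (n + 1) → c N * z ^ N = 0 := by
      intro N hN
      rw [Finset.mem_range, not_lt] at hN
      rw [hv N (by omega), zero_mul]
    have hs2 : Summable fun k => ‖c k * z ^ k‖ := by
      refine summable_of_ne_finset_zero (s := Finset.range (n + 1)) fun N hN => ?_
      rw [hfin N hN, norm_zero]
    have hprod := tsum_mul_tsum_eq_tsum_sum_antidiagonal_of_summable_norm hs1 hs2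
    have hLe : L.eval z = ∑' k, c k * z ^ k := by
      rw [tsum_eq_sum hfin, eval_eq_sum_range' (n := n + 1) (by rcases hnd with h | h <;> omega)]
      exact Finset.sum_congr rfl fun N _ => by rw [hL]
    have hD : z * (derivative L).eval z = ∑' N : ℕ, (N : ℂ) * c N * z ^ N := by
      rw [tsum_eq_sum (s := Finset.range (n + 1)) (fun N hN => by
        rw [mul_assoc, hfin N hN, mul_zero])]
      have h1 : (X * derivative L).eval z = z * (derivative L).eval z := by simp
      rw [← h1, eval_eq_sum_range' (n := n + 1)]
      · refine Finset.sum_congr rfl fun N _ => ?_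
        rcases N with _ | N
        · simp
        · rw [coeff_X_mul, coeff_derivative, hL]; push_cast; ring
      · have h2 := natDegree_derivative_le L
        have h3 := natDegree_mul_le (p := (X : ℂ[X])) (q := derivative L)
        rw [natDegree_X] at h3
        by_cases hz0 : L.natDegree = 0
        · have : derivative L = 0 := by
            rw [eq_C_of_natDegree_eq_zero hz0, derivative_C]
          rw [this]; simp
        · omega
    have hfe : z * (derivative L).eval z = (∑' k, S k * z ^ k) * L.eval z := by
      rw [hD, hLe, hprod]
      refine tsum_congr fun N => ?_
      rw [hE, Finset.sum_mul]
      refine Finset.sum_congr rfl fun kl hkl => ?_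
      rw [← HasAntidiagonal.mem_antidiagonal.1 hkl, pow_add]; ring
    rw [hfe, norm_mul]
    gcongr
    exact (tsum_of_norm_bounded hg hb)
  intro hroot
  set μ := L.rootMultiplicity T with hμ
  have hμ1 : 0 < μ := (rootMultiplicity_pos hL0).2 hroot
  obtain ⟨h, hh, hnd2⟩ := exists_eq_pow_rootMultiplicity_mul_and_not_dvd L hL0 T
  have hhT : h.eval T ≠ 0 := fun hx => hnd2 (dvd_iff_isRoot.2 hx)
  have hT0 : T ≠ 0 := by
    intro h'
    rw [h', ← coeff_zero_eq_eval_zero, hL, h0] at hroot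
    exact one_ne_zero hroot
  obtain ⟨m, hm⟩ : ∃ m, μ = m + 1 := ⟨μ - 1, by omega⟩
  rw [← hμ, hm] at hh
  have hder : derivative L = (X - Polynomial.C T) ^ m *
      ((m + 1 : ℂ[X]) * h + (X - Polynomial.C T) * derivative h) := by
    rw [hh, derivative_mul, derivative_pow]
    simp only [derivative_sub, derivative_X, derivative_C, sub_zero, mul_one, Nat.add_sub_cancel]
    push_cast
    simp
    ring
  set θ : ℝ := (1 + ‖T‖ * ρ) / 2 with hθ
  have hθ1 : θ < 1 := by rw [hθ]; linarith
  have hθT : ‖T‖ * ρ < θ := by rw [hθ]; linarith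
  set B := C * (1 - θ)⁻¹ with hB
  have hev : ∀ᶠ z in 𝓝[≠] T,
      ‖z * (((m + 1 : ℂ[X]) * h + (X - Polynomial.C T) * derivative h).eval z)‖ ≤
        B * ‖(z - T) * h.eval z‖ := by
    have hc : ∀ᶠ z in 𝓝 T, ‖z‖ * ρ < θ :=
      (continuous_norm.mul continuous_const).continuousAt.eventually (gt_mem_nhds hθT)
    filter_upwards [hc.filter_mono nhdsWithin_le_nhds, self_mem_nhdsWithin] with z hz hzT
    have hzT' : 0 < ‖(z - T) ^ m‖ := norm_pos_iff.2 (pow_ne_zero _ (sub_ne_zero.2 hzT))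
    have hb := hbound z θ hz.le hθ1
    rw [hder] at hb
    have e1 : z * ((X - Polynomial.C T) ^ m *
      ((m + 1 : ℂ[X]) * h + (X - Polynomial.C T) * derivative h)).eval z =
        (z - T) ^ m * (z * (((m + 1 : ℂ[X]) * h +
          (X - Polynomial.C T) * derivative h).eval z)) := by
      rw [eval_mul]; simp only [eval_pow, eval_sub, eval_X, eval_C]; ring
    have e2 : L.eval z = (z - T) ^ m * ((z - T) * h.eval z) := by
      rw [hh, eval_mul]; simp only [eval_pow, eval_sub, eval_X, eval_C]; ring
    rw [e1, e2, norm_mul, norm_mul ((z - T) ^ m)] at hb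
    rw [← hB] at hb
    refine le_of_mul_le_mul_left ?_ hzT'
    linarith
  have ht1 : Tendsto (fun z : ℂ =>
      ‖z * (((m + 1 : ℂ[X]) * h + (X - Polynomial.C T) * derivative h).eval z)‖) (𝓝[≠] T)
      (𝓝 ‖T * (((m + 1 : ℂ[X]) * h + (X - Polynomial.C T) * derivative h).eval T)‖) := by
    refine Tendsto.mono_left ?_ nhdsWithin_le_nhds
    exact (continuous_id.mul (Polynomial.continuous _)).norm.tendsto T
  have ht2 : Tendsto (fun z : ℂ => B * ‖(z - T) * h.eval z‖) (𝓝[≠] T)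
      (𝓝 (B * ‖(T - T) * h.eval T‖)) := by
    refine Tendsto.mono_left ?_ nhdsWithin_le_nhds
    exact (continuous_const.mul
      ((continuous_id.sub continuous_const).mul (Polynomial.continuous h)).norm).tendsto T
  have hle := le_of_tendsto_of_tendsto ht1 ht2 hev
  rw [sub_self, zero_mul, norm_zero, mul_zero] at hle
  have hz := norm_le_zero_iff.1 hle
  have e3 : ((m + 1 : ℂ[X]) * h + (X - Polynomial.C T) * derivative h).eval T =
      ((m : ℂ) + 1) * h.eval T := by simp
  rw [e3] at hz
  have hm0 : (m : ℂ) + 1 ≠ 0 := by exact_mod_cast Nat.succ_ne_zero m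
  exact (mul_ne_zero hT0 (mul_ne_zero hm0 hhT)) hz

lemma DE_analytic (c S : ℕ → ℂ) (n : ℕ) (hn : 0 < n) (h0 : c 0 = 1) (hv : ∀ N, n ≤ N → c N = 0)
    (hE : ∀ N : ℕ, (N : ℂ) * c N = ∑ kl ∈ HasAntidiagonal.antidiagonal N, S kl.1 * c kl.2)
    (C ρ : ℝ) (hρ : 0 < ρ) (hS : ∀ k, ‖S k‖ ≤ C * ρ ^ k) : ‖c 1‖ ≤ ((n - 1 : ℕ) : ℝ) * ρ := by
  rcases Nat.lt_or_ge 1 n with h1n | h1n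
  swap
  · rw [hv 1 h1n, norm_zero]; positivity
  obtain ⟨m, rfl⟩ : ∃ m, n = m + 2 := ⟨n - 2, by omega⟩
  set L : ℂ[X] := ∑ i ∈ Finset.range (m + 2), Polynomial.monomial i (c i) with hLd
  have hL : ∀ N, L.coeff N = c N := by
    intro N
    rw [hLd, finsetSum_coeff]
    simp only [coeff_monomial]
    rw [Finset.sum_ite_eq' ]
    split_ifs with h
    · rfl
    · rw [Finset.mem_range, not_lt] at h
      exact (hv N h).symm
  set P : ℂ[X] := ∑ i ∈ Finset.range (m + 2), Polynomial.monomial (m + 1 - i) (c i) with hPd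
  have hPe : P = X ^ (m + 1) + ∑ i ∈ Finset.range (m + 1), Polynomial.monomial (m - i) (c (i + 1)) := by
    rw [hPd, Finset.sum_range_succ', h0, add_comm]
    congr 1
    · rw [Nat.sub_zero, monomial_one_right_eq_X_pow]
    · refine Finset.sum_congr rfl fun i _ => ?_
      congr 2; omega
  have hdeg : (∑ i ∈ Finset.range (m + 1), Polynomial.monomial (m - i) (c (i + 1))).degree
      < ((m + 1 : ℕ) : WithBot ℕ) := by
    refine lt_of_le_of_lt (degree_sum_le _ _) ?_
    rw [Finset.sup_lt_iff (by exact WithBot.bot_lt_coe _)]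
    intro i _
    refine lt_of_le_of_lt (degree_monomial_le _ _) ?_
    exact_mod_cast (by omega : m - i < m + 1)
  have hPm : P.Monic := by rw [hPe]; exact monic_X_pow_add hdeg
  have hPn : P.natDegree = m + 1 := by
    rw [hPe, natDegree_add_eq_left_of_degree_lt (by rw [degree_X_pow]; exact hdeg), natDegree_X_pow]
  have hPc : P.coeff m = c 1 := by
    rw [hPd, finsetSum_coeff, Finset.sum_eq_single 1]
    · simp
    · intro i hi hi1
      rw [Finset.mem_range] at hi
      rw [coeff_monomial, if_neg (by omega)]
    · intro h; exact absurd (Finset.mem_range.2 (by omega)) h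
  have hroots : ∀ z ∈ (P.map (RingHom.id ℂ)).roots, ‖z‖ ≤ ρ := by
    intro z hz
    rw [Polynomial.map_id] at hz
    have hz1 : P.eval z = 0 := (mem_roots'.1 hz).2
    by_contra hcon
    push Not at hcon
    have hz0 : z ≠ 0 := by
      intro h; rw [h, norm_zero] at hcon; linarith
    refine DE_noroot c S (m + 2) h0 hv hE C ρ hρ hS L hL z⁻¹ ?_ ?_
    · rw [norm_inv, inv_mul_lt_iff₀ (by positivity)]; linarith
    · have : z ^ (m + 1) * L.eval z⁻¹ = P.eval z := by
        rw [hLd, hPd, eval_finsetSum, eval_finsetSum, Finset.mul_sum]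
        refine Finset.sum_congr rfl fun i hi => ?_
        rw [Finset.mem_range] at hi
        rw [eval_monomial, eval_monomial, inv_pow]
        obtain ⟨j, hj⟩ : ∃ j, m + 1 = i + j := ⟨m + 1 - i, by omega⟩
        rw [hj, Nat.add_sub_cancel_left, pow_add]
        field_simp
      rw [hz1] at this
      exact (mul_eq_zero.1 this).resolve_left (pow_ne_zero _ hz0)
  have := coeff_le_of_roots_le m hPm (IsAlgClosed.splits _) hroots
  rw [Polynomial.map_id, hPc, hPn] at this
  have e : m + 1 - m = 1 := by omega
  rw [e, pow_one, Nat.choose_succ_self_right] at this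
  have e2 : m + 2 - 1 = m + 1 := by omega
  rw [e2]; linarith

end Analytic


section Weil
open Polynomial

variable {p : ℕ} [hp : Fact p.Prime] {ι : Type*} [Fintype ι] [DecidableEq ι]

lemma DE_S_bound (χ : MulChar (ZMod p) ℂ) (hχ : χ ≠ 1) (ψ : ι → MulChar (ZMod p) ℂ) (e : ι → ℕ)
    (hψ : ∀ i u, ψ i u = χ u ^ e i) (a : ι → ZMod p) (i₀ : ι) (he : e i₀ = 1) (h0 : a i₀ = 0)
    (ha : ∀ j, j ≠ i₀ → a j ≠ a i₀) :
    ∃ C : ℝ, ∀ k, ‖DES ψ a k‖ ≤ C * (√(p : ℝ)) ^ k := by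
  set D : ℕ := 1 + ∑ j ∈ univ.erase i₀, e j with hD
  refine ⟨((p-1 : ℕ) * (3 * (2 * (p-1 : ℕ) * D + 4 + 2 * D)) + D + 4 * p), fun k => ?_⟩
  by_cases hk : k = 0
  · rw [DES, if_pos hk, norm_zero]; positivity
  rw [DES, if_neg hk]
  set K := GaloisField p k
  have hcardN : Nat.card K = p ^ k := GaloisField.card p k hk
  have hcard : Fintype.card K = p ^ k := by rw [← Nat.card_eq_fintype_card, hcardN]
  set c := (p ^ k - 1) / (p - 1) with hc
  have hcd : c * (p - 1) + 1 = Fintype.card K := by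
    rw [hcard, hc, Nat.div_mul_cancel (by simpa using Nat.sub_dvd_pow_sub_pow p 1 k)]
    have : 0 < p ^ k := pow_pos hp.out.pos k
    omega
  set G : K[X] := - ∏ j ∈ univ.erase i₀, (Polynomial.C (algebraMap (ZMod p) K (a j)) - X) ^ e j
    with hGd
  have hG : G.eval 0 ≠ 0 := by
    rw [hGd, eval_neg, neg_ne_zero, eval_prod, prod_ne_zero_iff]
    intro j hj
    rw [eval_pow, eval_sub, eval_C, eval_X, sub_zero]
    refine pow_ne_zero _ ?_
    rw [Ne, map_eq_zero, ← h0]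
    exact ha j (ne_of_mem_erase hj)
  have hXG : ∀ x : K, (X * G).eval x = ∏ i, (algebraMap (ZMod p) K (a i) - x) ^ e i := by
    intro x
    rw [← mul_prod_erase univ _ (mem_univ i₀), he, h0, hGd]
    simp [eval_prod]
    exact (neg_mul _ _).symm
  have hdeg : (X * G).natDegree ≤ D := by
    refine natDegree_mul_le.trans ?_
    rw [natDegree_X, hD, hGd, natDegree_neg]
    refine Nat.add_le_add_left ((natDegree_prod_le _ _).trans (sum_le_sum fun j _ => ?_)) 1
    refine natDegree_pow_le.trans ?_
    have : (Polynomial.C (algebraMap (ZMod p) K (a j)) - X).natDegree ≤ 1 :=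
      (natDegree_sub_le _ _).trans (by simp)
    calc _ ≤ e j * 1 := Nat.mul_le_mul_left _ this
      _ = e j := mul_one _
  set ν : K → ZMod p := fun x => ∏ i, (Algebra.norm (ZMod p) (algebraMap (ZMod p) K (a i) - x)) ^ e i
    with hνd
  have hν : ∀ x, algebraMap (ZMod p) K (ν x) = ((X * G).eval x) ^ c := by
    intro x
    rw [hXG, hνd, map_prod, ← prod_pow]
    refine prod_congr rfl fun i _ => ?_
    rw [map_pow, FiniteField.algebraMap_norm_eq_pow, hcardN, Nat.card_zmod, ← pow_mul, ← pow_mul,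
      mul_comm]
  have hmain := DE_charsum p χ hχ G hG c hcd ν hν
  have heq : ∑ x : K, DELam ψ a (DEcp (ZMod p) x) = ∑ x, χ (ν x) := by
    refine sum_congr rfl fun x _ => ?_
    rw [DELam, hνd, map_prod]
    refine prod_congr rfl fun i _ => ?_
    rw [DE_cp_eval, hψ, map_pow]
  rw [heq]
  have hsq : √(Fintype.card K : ℝ) = √(p : ℝ) ^ k := by
    rw [hcard, Nat.cast_pow]
    rw [Real.sqrt_eq_iff_mul_self_eq (by positivity) (by positivity), ← mul_pow,
      Real.mul_self_sqrt (by positivity)]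
  rw [hsq] at hmain
  refine hmain.trans ?_
  have hdr : ((X * G).natDegree : ℝ) ≤ D := by exact_mod_cast hdeg
  gcongr

lemma DE_weil0 (χ : MulChar (ZMod p) ℂ) (hχ : χ ≠ 1) (ψ : ι → MulChar (ZMod p) ℂ) (e : ι → ℕ)
    (hψ : ∀ i u, ψ i u = χ u ^ e i) (a : ι → ZMod p) (i₀ : ι) (he : e i₀ = 1) (h0 : a i₀ = 0)
    (ha : ∀ j, j ≠ i₀ → a j ≠ a i₀) :
    ‖∑ t, ∏ i, ψ i (a i - t)‖ ≤ ((Fintype.card ι - 1 : ℕ) : ℝ) * √(p : ℝ) := by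
  obtain ⟨C, hC⟩ := DE_S_bound χ hχ ψ e hψ a i₀ he h0 ha
  have hψ0 : ψ i₀ = χ := by
    ext u; rw [hψ, he, pow_one]
  rw [← DE_co_one]
  exact DE_analytic (DEco ψ a) (DES ψ a) (Fintype.card ι) (Fintype.card_pos_iff.2 ⟨i₀⟩)
    (DE_co_zero ψ a) (fun N hN => DE_co_vanish ψ a i₀ (hψ0 ▸ hχ) ha N hN) (DE_euler ψ a)
    C (√(p : ℝ)) (Real.sqrt_pos.2 (by exact_mod_cast hp.out.pos)) hC

lemma DE_inv_pow (χ : MulChar (ZMod p) ℂ) (hχ : χ ≠ 1) (u : ZMod p) :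
    χ⁻¹ u = χ u ^ (p - 2) := by
  have hp2 : p ≠ 2 := by
    rintro rfl
    apply hχ
    ext u
    have : u = 1 := by
      have := Subsingleton.elim u 1
      exact this
    simp [this]
  have hp3 : 3 ≤ p := by have := hp.out.two_le; omega
  rw [MulChar.inv_apply']
  by_cases hu : u = 0
  · subst hu
    rw [inv_zero, χ.map_nonunit not_isUnit_zero, zero_pow (by omega)]
  · rw [← map_pow]
    congr 1
    refine inv_eq_of_mul_eq_one_right ?_
    rw [← pow_succ']
    have : p - 2 + 1 = p - 1 := by omega
    rw [this, ZMod.pow_card_sub_one_eq_one hu]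

lemma DE_weil1 (χ : MulChar (ZMod p) ℂ) (hχ : χ ≠ 1) (ψ : ι → MulChar (ZMod p) ℂ)
    (hψ : ∀ i, ψ i = χ ∨ ψ i = χ⁻¹) (a : ι → ZMod p) (i₀ : ι) (h0 : ψ i₀ = χ)
    (ha : ∀ j, j ≠ i₀ → a j ≠ a i₀) :
    ‖∑ x, ∏ i, ψ i (x + a i)‖ ≤ ((Fintype.card ι - 1 : ℕ) : ℝ) * √(p : ℝ) := by
  classical
  have := DE_weil0 χ hχ ψ (fun i => if ψ i = χ then 1 else p - 2) (fun i u => by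
    split_ifs with h
    · rw [h, pow_one]
    · rw [(hψ i).resolve_left h, DE_inv_pow χ hχ]) (fun i => a i - a i₀) i₀ (by simp [h0])
    (by simp) (fun j hj => by simpa [sub_eq_zero] using ha j hj)
  refine le_trans (le_of_eq ?_) this
  congr 1
  refine Fintype.sum_equiv (Equiv.subLeft (- a i₀)) _ _ fun t => prod_congr rfl fun i _ => ?_
  congr 1
  simp
  ring

lemma DE_weil (χ : MulChar (ZMod p) ℂ) (hχ : χ ≠ 1) (ψ : ι → MulChar (ZMod p) ℂ)
    (hψ : ∀ i, ψ i = χ ∨ ψ i = χ⁻¹) (a : ι → ZMod p) (i₀ : ι)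
    (ha : ∀ j, j ≠ i₀ → a j ≠ a i₀) :
    ‖∑ x, ∏ i, ψ i (x + a i)‖ ≤ ((Fintype.card ι - 1 : ℕ) : ℝ) * √(p : ℝ) := by
  rcases hψ i₀ with h | h
  · exact DE_weil1 χ hχ ψ hψ a i₀ h ha
  · exact DE_weil1 χ⁻¹ (inv_ne_one.2 hχ) ψ (fun i => by rw [inv_inv]; exact (hψ i).symm) a i₀ h ha

end Weil


section Final

variable {p : ℕ} [hp : Fact p.Prime]

/-- The characters in the expanded moment. -/
noncomputable def DEpsi (r : ℕ) (χ : MulChar (ZMod p) ℂ) (i : Fin (2 * r)) : MulChar (ZMod p) ℂ :=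
  if i.1 < r then χ else χ⁻¹

lemma DE_conj (χ : MulChar (ZMod p) ℂ) (u : ZMod p) :
    (starRingEnd ℂ) (χ u) = χ⁻¹ u := by
  rw [starRingEnd_apply, MulChar.star_apply']

lemma DE_split (r : ℕ) (z w : ℂ) :
    ∏ i : Fin (2 * r), (if i.1 < r then z else w) = z ^ r * w ^ r := by
  rw [Fin.prod_univ_eq_prod_range (fun i => if i < r then z else w) (2 * r), two_mul,
    prod_range_add]
  congr 1
  · rw [prod_congr rfl (fun i hi => if_pos (mem_range.1 hi)), prod_const, card_range]
  · rw [prod_congr rfl (fun i _ => if_neg (by omega)), prod_const, card_range]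

lemma DE_expand (r : ℕ) (χ₁ χ₂ : MulChar (ZMod p) ℂ) (s : Finset (ZMod p)) (γ : ZMod p → ℂ)
    (x y : ZMod p) :
    ((‖∑ a ∈ s, γ a * χ₁ (x + a) * χ₂ (y + a)‖ ^ (2 * r) : ℝ) : ℂ) =
      ∑ f ∈ Fintype.piFinset (fun _ : Fin (2 * r) => s),
        (∏ i : Fin (2 * r), if i.1 < r then γ (f i) else (starRingEnd ℂ) (γ (f i))) *
          (∏ i, DEpsi r χ₁ i (x + f i)) * (∏ i, DEpsi r χ₂ i (y + f i)) := by
  set z := ∑ a ∈ s, γ a * χ₁ (x + a) * χ₂ (y + a) with hz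
  have h1 : ((‖z‖ ^ (2 * r) : ℝ) : ℂ) = z ^ r * ((starRingEnd ℂ) z) ^ r := by
    rw [← mul_pow, Complex.mul_conj, pow_mul, Complex.ofReal_pow, Complex.normSq_eq_norm_sq]
  rw [h1, ← DE_split]
  have h2 : ∀ i : Fin (2 * r), (if i.1 < r then z else (starRingEnd ℂ) z) =
      ∑ a ∈ s, (if i.1 < r then γ a else (starRingEnd ℂ) (γ a)) * DEpsi r χ₁ i (x + a) *
        DEpsi r χ₂ i (y + a) := by
    intro i
    by_cases h : i.1 < r
    · simp only [if_pos h, DEpsi]; exact hz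
    · simp only [if_neg h, DEpsi]
      rw [hz, map_sum]
      refine sum_congr rfl fun a _ => ?_
      rw [map_mul, map_mul, DE_conj, DE_conj]
  rw [prod_congr rfl fun i _ => h2 i, Finset.prod_univ_sum]
  refine sum_congr rfl fun f _ => ?_
  rw [prod_mul_distrib, prod_mul_distrib]

lemma DE_triv (r : ℕ) (χ : MulChar (ZMod p) ℂ) (f : Fin (2 * r) → ZMod p) :
    ‖∑ x, ∏ i, DEpsi r χ i (x + f i)‖ ≤ p := by
  refine (norm_sum_le _ _).trans ?_
  calc ∑ x : ZMod p, ‖∏ i, DEpsi r χ i (x + f i)‖ ≤ ∑ x : ZMod p, (1 : ℝ) := by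
        refine sum_le_sum fun x _ => ?_
        rw [norm_prod]
        exact prod_le_one (fun _ _ => norm_nonneg _) fun i _ => DE_norm_le _ _
    _ = p := by simp [ZMod.card]

lemma DE_nontriv (r : ℕ) (χ : MulChar (ZMod p) ℂ) (hχ : χ ≠ 1) (f : Fin (2 * r) → ZMod p)
    (hf : ¬ DEGood f) :
    ‖∑ x, ∏ i, DEpsi r χ i (x + f i)‖ ≤ 2 * (r : ℝ) * √(p : ℝ) := by
  rw [DEGood] at hf
  push Not at hf
  obtain ⟨i₀, hi⟩ := hf
  have := DE_weil χ hχ (DEpsi r χ) (fun i => by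
    rw [DEpsi]; split_ifs
    · exact Or.inl rfl
    · exact Or.inr rfl) f i₀ hi
  refine this.trans ?_
  rw [Fintype.card_fin]
  gcongr
  have : ((2 * r - 1 : ℕ) : ℝ) ≤ ((2 * r : ℕ) : ℝ) := by exact_mod_cast Nat.sub_le _ _
  simpa using this

end Final

/-- Lemma 3.2 (two-character Davenport–Erdős type moment bound). -/
theorem davenport_erdos_moment_two (p : ℕ) [hp : Fact p.Prime]
    (χ₁ χ₂ : MulChar (ZMod p) ℂ) (hχ₁ : χ₁ ≠ 1) (hχ₂ : χ₂ ≠ 1)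
    (𝒜 : Finset (ZMod p)) (r : ℕ) (hr : 0 < r)
    (γ : ZMod p → ℂ) (hγ : ∀ a ∈ 𝒜, ‖γ a‖ ≤ 1) :
    ∑ x : ZMod p, ∑ y : ZMod p, ‖∑ a ∈ 𝒜, γ a * χ₁ (x + a) * χ₂ (y + a)‖ ^ (2 * r) ≤
      (2 * (r : ℝ)) ^ r *
        ((𝒜.card : ℝ) ^ r * (p : ℝ) ^ 2 +
          2 * (r : ℝ) * (𝒜.card : ℝ) ^ (2 * r) * (p : ℝ)) := by
  classical
  set T := Fintype.piFinset (fun _ : Fin (2 * r) => 𝒜) with hT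
  set S₁ : (Fin (2 * r) → ZMod p) → ℂ := fun f => ∑ x, ∏ i, DEpsi r χ₁ i (x + f i) with hS₁
  set S₂ : (Fin (2 * r) → ZMod p) → ℂ := fun f => ∑ y, ∏ i, DEpsi r χ₂ i (y + f i) with hS₂
  set Γ : (Fin (2 * r) → ZMod p) → ℂ := fun f =>
    ∏ i : Fin (2 * r), if i.1 < r then γ (f i) else (starRingEnd ℂ) (γ (f i)) with hΓ
  have hΓ1 : ∀ f ∈ T, ‖Γ f‖ ≤ 1 := by
    intro f hf
    rw [hT, Fintype.mem_piFinset] at hf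
    rw [hΓ]
    dsimp only
    rw [norm_prod]
    refine prod_le_one (fun _ _ => norm_nonneg _) fun i _ => ?_
    split_ifs
    · exact hγ _ (hf i)
    · rw [RCLike.norm_conj]; exact hγ _ (hf i)
  set M := ∑ x : ZMod p, ∑ y : ZMod p, ‖∑ a ∈ 𝒜, γ a * χ₁ (x + a) * χ₂ (y + a)‖ ^ (2 * r) with hM
  have hexp : (M : ℂ) = ∑ f ∈ T, Γ f * S₁ f * S₂ f := by
    rw [hM]
    push_cast
    calc _ = ∑ x : ZMod p, ∑ y : ZMod p, ∑ f ∈ T, Γ f *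
          (∏ i, DEpsi r χ₁ i (x + f i)) * (∏ i, DEpsi r χ₂ i (y + f i)) := by
          refine sum_congr rfl fun x _ => sum_congr rfl fun y _ => ?_
          rw [← DE_expand, Complex.ofReal_pow]
      _ = ∑ x : ZMod p, ∑ f ∈ T, Γ f * (∏ i, DEpsi r χ₁ i (x + f i)) * S₂ f := by
          refine sum_congr rfl fun x _ => ?_
          rw [sum_comm]
          refine sum_congr rfl fun f _ => ?_
          rw [hS₂, mul_sum]
      _ = _ := by
          rw [sum_comm]
          refine sum_congr rfl fun f _ => ?_
          rw [← sum_mul, ← mul_sum]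
  have hMn : M ≤ ∑ f ∈ T, ‖S₁ f‖ * ‖S₂ f‖ := by
    calc M ≤ ‖(M : ℂ)‖ := by rw [Complex.norm_real]; exact le_abs_self M
      _ ≤ ∑ f ∈ T, ‖Γ f * S₁ f * S₂ f‖ := by rw [hexp]; exact norm_sum_le _ _
      _ ≤ _ := by
          refine sum_le_sum fun f hf => ?_
          rw [norm_mul, norm_mul, mul_assoc]
          exact mul_le_of_le_one_left (by positivity) (hΓ1 f hf)
  refine hMn.trans ?_
  rw [← sum_filter_add_sum_filter_not T DEGood]
  have hA : ∑ f ∈ T with DEGood f, ‖S₁ f‖ * ‖S₂ f‖ ≤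
      (2 * (r : ℝ)) ^ r * ((𝒜.card : ℝ) ^ r * (p : ℝ) ^ 2) := by
    have hcnt : ((T.filter DEGood).card : ℝ) ≤ (2 * (r : ℝ) * 𝒜.card) ^ r := by
      have h1 := DE_count 𝒜 (2 * r)
      have h2 : DEGoods 𝒜 (2 * r) = T.filter DEGood := by
        ext f; simp only [DE_mem, mem_filter, hT, Fintype.mem_piFinset]
      have e : (2 * r * 𝒜.card) ^ (2 * r) = ((2 * r * 𝒜.card) ^ r) ^ 2 := by
        rw [← pow_mul, mul_comm r 2]
      rw [h2, e] at h1
      have h3 := (Nat.pow_le_pow_iff_left two_ne_zero).1 h1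
      exact_mod_cast h3
    calc _ ≤ ∑ f ∈ T with DEGood f, (p : ℝ) * p := by
          refine sum_le_sum fun f _ => ?_
          exact mul_le_mul (DE_triv r χ₁ f) (DE_triv r χ₂ f) (norm_nonneg _) (by positivity)
      _ = ((T.filter DEGood).card : ℝ) * ((p : ℝ) * p) := by rw [sum_const, nsmul_eq_mul]
      _ ≤ (2 * (r : ℝ) * 𝒜.card) ^ r * ((p : ℝ) * p) := by gcongr
      _ = _ := by rw [mul_pow]; ring
  have hB : ∑ f ∈ T with ¬ DEGood f, ‖S₁ f‖ * ‖S₂ f‖ ≤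
      (2 * (r : ℝ)) ^ r * (2 * (r : ℝ) * (𝒜.card : ℝ) ^ (2 * r) * (p : ℝ)) := by
    have hr1 : (1 : ℝ) ≤ 2 * r := by
      have : (1 : ℝ) ≤ r := by exact_mod_cast hr
      linarith
    calc _ ≤ ∑ f ∈ T with ¬ DEGood f, (2 * (r : ℝ) * √(p : ℝ)) * (2 * (r : ℝ) * √(p : ℝ)) := by
          refine sum_le_sum fun f hf => ?_
          have hf2 := (mem_filter.1 hf).2
          exact mul_le_mul (DE_nontriv r χ₁ hχ₁ f hf2) (DE_nontriv r χ₂ hχ₂ f hf2)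
            (norm_nonneg _) (by positivity)
      _ = ((T.filter fun f => ¬ DEGood f).card : ℝ) * ((2 * (r : ℝ)) * (2 * r) * p) := by
          rw [sum_const, nsmul_eq_mul]
          have := Real.mul_self_sqrt (Nat.cast_nonneg (α := ℝ) p)
          linear_combination (((T.filter fun f => ¬ DEGood f).card : ℝ) * (2 * r) * (2 * r)) * this
      _ ≤ ((𝒜.card : ℝ) ^ (2 * r)) * ((2 * (r : ℝ)) * (2 * r) * p) := by
          gcongr
          have h1 : (T.filter fun f => ¬ DEGood f).card ≤ T.card := card_filter_le _ _
          have h2 : T.card = 𝒜.card ^ (2 * r) := by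
            rw [hT, Fintype.card_piFinset_const]
          rw [h2] at h1
          exact_mod_cast h1
      _ ≤ ((𝒜.card : ℝ) ^ (2 * r)) * ((2 * (r : ℝ)) ^ r * (2 * r) * p) := by
          gcongr
          exact le_self_pow₀ hr1 hr.ne'
      _ = _ := by ring
  linarith
end
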